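/- Let P be an isometry invariant probability measure on M(X). (a) If P is insertion-tolerant, then N_O ∈ {0, 1, ∞} P-almost surely. (b) If P is deletion-tolerant, then N_V ∈ {0, 1, ∞} P-almost surely. -/

import Mathlib

open MeasureTheory Metric Set Bornology Function
open scoped ENNReal NNReal unitInterval

noncomputable section

namespace BooleanModel

/-- The space of simple, locally finite point configurations on a metric space `X`
(realizations of simple counting measures on `X`). -/
def Config (X : Type*) [MetricSpace X] : Type _ :=
  {s : Set X // ∀ K : Set X, IsBounded K → (s ∩ K).Finite}

namespace Config

variable {X : Type*} [MetricSpace X]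

/-- The σ-algebra on `Config X` generated by the evaluation (counting) maps `ω ↦ ω(B)`. -/
instance instMeasurableSpace [MeasurableSpace X] : MeasurableSpace (Config X) :=
  MeasurableSpace.generateFrom
    {A | ∃ (B : Set X) (n : ℕ∞), MeasurableSet B ∧ A = {s : Config X | (s.1 ∩ B).encard = n}}

/-- The number of points of the configuration `s` lying in `B`. -/
def count (B : Set X) (s : Config X) : ℕ∞ := (s.1 ∩ B).encard

/-- Adding a point to a configuration (`ω + δ_y`). -/
def insertPt (y : X) (s : Config X) : Config X :=
  ⟨insert y s.1, by
    intro K hK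
    refine ((s.2 K hK).insert y).subset ?_
    rintro z ⟨hz1, hz2⟩
    rcases Set.mem_insert_iff.1 hz1 with rfl | h
    · exact Set.mem_insert _ _
    · exact Set.mem_insert_of_mem _ ⟨h, hz2⟩⟩

/-- The restriction `ω|_{B^c}` of a configuration to the complement of `B`. -/
def restrict (B : Set X) (s : Config X) : Config X :=
  ⟨s.1 ∩ Bᶜ, fun K hK => (s.2 K hK).subset fun z hz => ⟨hz.1.1, hz.2⟩⟩

/-- Push-forward of a configuration under an isometry of `X`. -/
def mapIso (γ : X ≃ᵢ X) (s : Config X) : Config X :=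
  ⟨⇑γ '' s.1, by
    intro K hK
    have h1 : ⇑γ ⁻¹' K = ⇑γ.symm '' K := by
      ext z
      constructor
      · intro hz; exact ⟨γ z, hz, γ.symm_apply_apply z⟩
      · rintro ⟨w, hw, rfl⟩; simpa using hw
    have h2 : ⇑γ '' s.1 ∩ K = ⇑γ '' (s.1 ∩ ⇑γ ⁻¹' K) := (Set.image_inter_preimage _ _ _).symm
    rw [h2]
    refine (s.2 _ ?_).image _
    rw [h1]
    exact γ.symm.isometry.lipschitz.isBounded_image hK⟩

end Config

section BasicDefs

variable {X : Type*} [MetricSpace X]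

/-- The occupied set of the Boolean model with unit radii driven by `s`. -/
def occupied (s : Config X) : Set X := ⋃ x ∈ s.1, closedBall x 1

/-- The vacant set of the Boolean model with unit radii driven by `s`. -/
def vacant (s : Config X) : Set X := (occupied s)ᶜ

/-- The collection of connected components of a set `S ⊆ X`. -/
def comps (S : Set X) : Set (Set X) := {C | ∃ x ∈ S, C = connectedComponentIn S x}

/-- The collection of unbounded connected components of `S`. -/
def ucomps (S : Set X) : Set (Set X) := {C | C ∈ comps S ∧ ¬IsBounded C}

/-- The number of connected components of `S`. -/
def numComps (S : Set X) : ℕ∞ := (comps S).encard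

/-- `N_S`: the number of unbounded connected components of `S`. -/
def numUcomps (S : Set X) : ℕ∞ := (ucomps S).encard

/-- A metric space is point-symmetric (the metric counterpart of being a Riemannian
symmetric space) if every point `x` admits a geodesic-reversing isometry fixing `x`,
i.e. an isometric point reflection around `x`. -/
def PointSymmetric (X : Type*) [MetricSpace X] : Prop :=
  ∀ x : X, ∃ invol : X ≃ᵢ X, invol x = x ∧ ∀ y : X, dist y (invol y) = 2 * dist x y

/-- The local connected component `C_S(y,r)`. -/
def localComp (S : Set X) (y : X) (r : ℝ) : Set X :=
  connectedComponentIn (S ∩ closedBall y r) y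

end BasicDefs

section MeasureDefs

variable {X : Type*} [MetricSpace X] [MeasurableSpace X]

/-- A measure on `Config X` is isometry invariant if it is preserved by the push-forward
action of every isometry of `X`. -/
def IsoInvariant (P : Measure (Config X)) : Prop :=
  ∀ γ : X ≃ᵢ X, Measure.map (Config.mapIso γ) P = P

/-- Every isometry-invariant event has probability `0` or `1`. -/
def ErgodicIso (P : Measure (Config X)) : Prop :=
  ∀ E : Set (Config X), MeasurableSet E →
    (∀ γ : X ≃ᵢ X, Config.mapIso γ ⁻¹' E = E) → P E = 0 ∨ P E = 1

/-- `P` is insertion-tolerant: for every Borel `B` with `0 < μ B < ∞`, the law of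
`ω + δ_Y` with `Y` uniform in `B` independent of `ω` is absolutely continuous w.r.t. `P`. -/
def InsertionTolerant (μ : Measure X) (P : Measure (Config X)) : Prop :=
  ∀ B : Set X, MeasurableSet B → 0 < μ B → μ B < ⊤ →
    Measure.map (fun p : Config X × X => Config.insertPt p.2 p.1)
      (P.prod ((μ B)⁻¹ • μ.restrict B)) ≪ P

/-- `P` is deletion-tolerant: for every Borel `B` with `0 < μ B < ∞`, the law of
`ω|_{B^c}` is absolutely continuous w.r.t. `P`. -/
def DeletionTolerant (μ : Measure X) (P : Measure (Config X)) : Prop :=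
  ∀ B : Set X, MeasurableSet B → 0 < μ B → μ B < ⊤ →
    Measure.map (Config.restrict B) P ≪ P

/-- `P` is the law of the Poisson point measure on `X` with intensity `ν`:
counts in disjoint Borel sets are independent with the correct Poisson distributions. -/
def IsPoisson (ν : Measure X) (P : Measure (Config X)) : Prop :=
  IsProbabilityMeasure P ∧
  (∀ B : Set X, MeasurableSet B → ν B < ⊤ → ∀ k : ℕ,
      P {s : Config X | Config.count B s = k} =
        ENNReal.ofReal (Real.exp (-(ν B).toReal) * (ν B).toReal ^ k / (Nat.factorial k))) ∧
  (∀ B : Set X, MeasurableSet B → ν B = ⊤ → P {s : Config X | (s.1 ∩ B).Infinite} = 1) ∧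
  (∀ (n : ℕ) (B : Fin n → Set X) (k : Fin n → ℕ),
      (∀ i, MeasurableSet (B i)) → (Pairwise fun i j => Disjoint (B i) (B j)) →
      P {s : Config X | ∀ i, Config.count (B i) s = k i} =
        ∏ i, P {s : Config X | Config.count (B i) s = k i})

end MeasureDefs

section PathDefs

variable {X : Type*} [MetricSpace X]

/-- The intrinsic distance between `x` and `y` within the set `S`: the infimum of the lengths
of continuous paths from `x` to `y` whose range is contained in `S`. -/
def pathDistIn (S : Set X) (x y : X) : ℝ≥0∞ :=
  ⨅ (γ : Path x y) (_ : Set.range ⇑γ ⊆ S), eVariationOn ⇑γ Set.univ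

/-- Intrinsic distance within `S` between two subsets `A` and `B`. -/
def setDistIn (S A B : Set X) : ℝ≥0∞ :=
  ⨅ (a : X) (_ : a ∈ A) (b : X) (_ : b ∈ B), pathDistIn S a b

/-- `y` is an `r`-trifurcation (marked by a point of `Y`) for the set `S`. -/
def IsTrifurcation (S : Set X) (Y : Set X) (r : ℝ) (y : X) : Prop :=
  y ∈ Y ∧ closedBall y 1 ⊆ S ∧ (∀ y' ∈ Y, y' ≠ y → 2 * r < dist y y') ∧
    3 ≤ numUcomps (connectedComponentIn S y \ localComp S y r)

end PathDefs

end BooleanModel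
set_option autoImplicit false
set_option linter.unusedSectionVars false
namespace BooleanModel
section Geo
variable {X : Type*} [MetricSpace X]

/-- `γ` is a point reflection at `a`. -/
def IsSym (a : X) (γ : X ≃ᵢ X) : Prop := γ a = a ∧ ∀ y, dist y (γ y) = 2 * dist a y

lemma iso_dist (g : X ≃ᵢ X) (x y : X) : dist (g x) (g y) = dist x y := g.isometry.dist_eq x y

lemma iso_inv_dist (g : X ≃ᵢ X) (x y : X) : dist (g⁻¹ x) y = dist x (g y) := by
  rw [← iso_dist g, IsometryEquiv.apply_inv_self]

lemma iso_dist_inv (g : X ≃ᵢ X) (x y : X) : dist x (g⁻¹ y) = dist (g x) y := by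
  rw [← iso_dist g, IsometryEquiv.apply_inv_self]

lemma IsSym.fix_inv {a : X} {γ : X ≃ᵢ X} (h : IsSym a γ) : γ⁻¹ a = a := by
  apply γ.injective; rw [IsometryEquiv.apply_inv_self, h.1]

lemma IsSym.inv {a : X} {γ : X ≃ᵢ X} (h : IsSym a γ) : IsSym a γ⁻¹ := by
  refine ⟨h.fix_inv, fun y => ?_⟩
  rw [iso_dist_inv, dist_comm, h.2]

lemma IsSym.conj {a : X} {γ : X ≃ᵢ X} (h : IsSym a γ) (g : X ≃ᵢ X) :
    IsSym (g a) (g * γ * g⁻¹) := by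
  refine ⟨by simp [IsometryEquiv.mul_apply, h.1], fun y => ?_⟩
  have := h.2 (g⁻¹ y)
  rw [iso_inv_dist, iso_dist_inv] at this
  simpa [IsometryEquiv.mul_apply] using this

lemma IsSym.dist_center {a : X} {γ : X ≃ᵢ X} (h : IsSym a γ) (y : X) :
    dist a (γ y) = dist a y := by
  conv_lhs => rw [← h.1]
  exact iso_dist γ a y

/-- midpoint convexity -/
lemma IsSym.conv {a : X} {γ : X ≃ᵢ X} (h : IsSym a γ) (x z : X) :
    2 * dist a z ≤ dist x z + dist (γ x) z := by
  have h1 := h.2 z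
  have h2 : dist z (γ z) ≤ dist z (γ x) + dist (γ x) (γ z) := dist_triangle _ _ _
  rw [iso_dist] at h2
  rw [dist_comm z (γ x)] at h2
  linarith

lemma IsSym.far {a : X} {γ : X ≃ᵢ X} (h : IsSym a γ) (x z : X) :
    2 * dist a x - dist x z ≤ dist (γ x) z := by
  have h1 := h.2 x
  have h2 : dist x (γ x) ≤ dist x z + dist z (γ x) := dist_triangle _ _ _
  rw [dist_comm z (γ x)] at h2
  linarith

lemma pow_disp (T : X ≃ᵢ X) (y : X) (n : ℕ) : dist y ((T ^ n) y) ≤ n * dist y (T y) := by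
  induction n with
  | zero => simp
  | succ n ih =>
    rw [pow_succ, IsometryEquiv.mul_apply]
    have h2 : dist y ((T ^ n) (T y)) ≤ dist y ((T ^ n) y) + dist ((T ^ n) y) ((T ^ n) (T y)) :=
      dist_triangle _ _ _
    rw [iso_dist] at h2
    push_cast
    linarith

lemma trans_growth {a b : X} {α β : X ≃ᵢ X} (ha : IsSym a α) (hb : IsSym b β) (n : ℕ) :
    dist (((β * α⁻¹) ^ (n+1)) a) a = 2 * (n+1) * dist a b ∧
    dist (((β * α⁻¹) ^ (n+1)) a) b = (2 * n + 1) * dist a b := by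
  induction n with
  | zero =>
    simp only [zero_add, pow_one, IsometryEquiv.mul_apply, ha.fix_inv]
    constructor
    · rw [dist_comm, hb.2, dist_comm b a]; push_cast; ring
    · rw [dist_comm, hb.dist_center, dist_comm b a]; push_cast; ring
  | succ n ih =>
    obtain ⟨h1, h2⟩ := ih
    set y := ((β * α⁻¹) ^ (n+1)) a with hy
    have hy' : ((β * α⁻¹) ^ (n+1+1)) a = β (α⁻¹ y) := by
      rw [pow_succ', IsometryEquiv.mul_apply, IsometryEquiv.mul_apply]
    rw [hy']
    have e1 : dist (α⁻¹ y) a = dist y a := by rw [iso_inv_dist, ha.1]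
    have e2 := ha.inv.far y b
    have e3 : dist (α⁻¹ y) b ≤ dist (α⁻¹ y) a + dist a b := dist_triangle _ _ _
    have e4 : dist (β (α⁻¹ y)) b = dist (α⁻¹ y) b := by
      rw [dist_comm, hb.dist_center, dist_comm]
    have e5 := hb.far (α⁻¹ y) a
    have e6 : dist (β (α⁻¹ y)) a ≤ dist (β (α⁻¹ y)) b + dist b a := dist_triangle _ _ _
    have e7 : dist b (α⁻¹ y) = dist (α⁻¹ y) b := dist_comm _ _
    have e8 : dist a y = dist y a := dist_comm _ _
    have e9 : dist b a = dist a b := dist_comm _ _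
    push_cast
    constructor <;> nlinarith

/-- The key Lemma: two symmetries differ everywhere at least by twice the distance of
their centers. -/
lemma KL {a b : X} {α β : X ≃ᵢ X} (ha : IsSym a α) (hb : IsSym b β) (y : X) :
    2 * dist a b ≤ dist (α y) (β y) := by
  set z := α y with hz
  have hzy : β y = (β * α⁻¹) z := by simp [IsometryEquiv.mul_apply, hz]
  rw [hzy]
  have key : ∀ n : ℕ, (n:ℝ) * (2 * dist a b - dist z ((β * α⁻¹) z)) ≤ 2 * dist a z := by
    intro n
    cases n with
    | zero => simp
    | succ n =>
      have h1 := (trans_growth ha hb n).1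
      have h2 := pow_disp (β * α⁻¹) z (n+1)
      set T := (β * α⁻¹) ^ (n+1)
      have h3 : dist (T a) a ≤ dist (T a) (T z) + dist (T z) z + dist z a :=
        dist_triangle4 _ _ _ _
      rw [iso_dist, dist_comm (T z) z, dist_comm z a] at h3
      push_cast at *
      linarith
  by_contra hlt
  push Not at hlt
  obtain ⟨n, hn⟩ := exists_nat_gt (2 * dist a z / (2 * dist a b - dist z ((β * α⁻¹) z)))
  rw [div_lt_iff₀ (by linarith)] at hn
  linarith [key n]

lemma KL' {a b : X} {α β : X ≃ᵢ X} (ha : IsSym a α) (hb : IsSym b β) :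
    dist a ((β * α⁻¹) ((β * α⁻¹) a)) = 4 * dist a b := by
  have := (trans_growth ha hb 1).1
  rw [dist_comm] 
  simp only [pow_succ, pow_zero, one_mul, IsometryEquiv.mul_apply] at *
  rw [this]; push_cast; ring

/-- convexity of displacement -/
lemma IsSym.cv {n : X} {γ : X ≃ᵢ X} (h : IsSym n γ) (ρ : X ≃ᵢ X) (p : X) :
    2 * dist n (ρ n) ≤ dist p (ρ p) + dist (γ p) (ρ (γ p)) := by
  have h1 := KL h (h.conj ρ) (ρ p)
  have h2 : (ρ * γ * ρ⁻¹) (ρ p) = ρ (γ p) := by simp [IsometryEquiv.mul_apply]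
  rw [h2] at h1
  have h3 : dist (γ (ρ p)) (ρ (γ p)) ≤ dist (γ (ρ p)) (γ p) + dist (γ p) (ρ (γ p)) :=
    dist_triangle _ _ _
  rw [iso_dist, dist_comm (ρ p) p] at h3
  linarith

lemma ext_pow (hs : PointSymmetric X) (ρ : X ≃ᵢ X) (v : X) {S r : ℝ}
    (hS : ∀ q, dist v q ≤ r → dist q (ρ q) ≤ S) (j : ℕ) : ∀ y, 2 ^ j * dist v y ≤ r →
    dist y (ρ y) ≤ dist v (ρ v) + S / 2 ^ j := by
  induction j with
  | zero =>
    intro y hy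
    have := hS y (by simpa using hy)
    have := dist_nonneg (x := v) (y := ρ v)
    simp; linarith
  | succ j ih =>
    intro y hy
    obtain ⟨γ, h⟩ := hs y
    have h : IsSym y γ := h
    have h1 := h.cv ρ v
    have h2 := ih (γ v) (by rw [h.2, dist_comm y v]; rw [pow_succ] at hy; linarith)
    have : S / 2 ^ (j+1) = S / 2 ^ j / 2 := by rw [pow_succ]; field_simp
    rw [this]; linarith

lemma ext_disp (hs : PointSymmetric X) (ρ : X ≃ᵢ X) (v : X) {S r : ℝ} (hr : 0 < r)
    (hS : ∀ q, dist v q ≤ r → dist q (ρ q) ≤ S) (y : X) (hy : dist v y ≤ r) :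
    dist y (ρ y) ≤ dist v (ρ v) + 2 * (dist v y / r) * S := by
  have hS0 : 0 ≤ S := dist_nonneg.trans (hS v (by simpa using hr.le))
  rcases eq_or_lt_of_le (dist_nonneg (x := v) (y := y)) with h0 | h0
  · rw [← h0]; rw [dist_eq_zero.1 h0.symm]; simp
  · have h1 : 1 ≤ r / dist v y := by rwa [one_le_div h0]
    obtain ⟨j, hj1, hj2⟩ := exists_nat_pow_near h1 (one_lt_two (α := ℝ))
    rw [le_div_iff₀ h0] at hj1
    rw [div_lt_iff₀ h0] at hj2
    have h2 := ext_pow hs ρ v hS j y hj1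
    have h3 : S / 2 ^ j ≤ 2 * (dist v y / r) * S := by
      rw [div_eq_mul_inv, mul_comm]
      apply mul_le_mul_of_nonneg_right _ hS0
      rw [inv_le_iff_one_le_mul₀ (by positivity), ← mul_div_assoc, div_mul_eq_mul_div, le_div_iff₀ hr]
      rw [pow_succ] at hj2
      linarith
    linarith

end Geo
end BooleanModel
set_option autoImplicit false
namespace BooleanModel
section Flat
variable {X : Type*} [MetricSpace X]

/-- separated families near `x` at scale `2^{-n}` -/
def SepFam (x : X) (s : ℝ) (n N : ℕ) (p : Fin N → X) : Prop :=
  (∀ i, dist x (p i) ≤ (1/2)^n) ∧ ∀ i j, i ≠ j → s * (1/2)^n ≤ dist (p i) (p j)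

lemma SepFam.image {x : X} {s : ℝ} {n N : ℕ} {p : Fin N → X} (h : SepFam x s (n+1) N p)
    {sy : X → X ≃ᵢ X} (hsy : ∀ z, IsSym z (sy z)) : SepFam x s n N (fun i => sy (p i) x) := by
  refine ⟨fun i => ?_, fun i j hij => ?_⟩
  · rw [(hsy _).2, dist_comm]
    have := h.1 i
    rw [pow_succ] at this
    linarith
  · have h1 := KL (hsy (p i)) (hsy (p j)) x
    have h2 := h.2 i j hij
    rw [pow_succ] at h2
    linarith

lemma SepFam.bound [ProperSpace X] (x : X) {s : ℝ} (hs : 0 < s) :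
    ∃ B : ℕ, ∀ N (p : Fin N → X), SepFam x s 0 N p → N ≤ B := by
  obtain ⟨t, ht, hcov⟩ := Metric.totallyBounded_iff.1
    (isCompact_closedBall x 1).totallyBounded (s/2) (by linarith)
  refine ⟨ht.toFinset.card, fun N p hp => ?_⟩
  have h1 : ∀ i, ∃ y ∈ t, dist (p i) y < s/2 := by
    intro i
    have := hcov (a := p i) (by have := hp.1 i; rw [mem_closedBall, dist_comm]; simpa using this)
    simpa using this
  choose f hf hfd using h1
  have := Finset.card_le_card_of_injOn (s := Finset.univ) (t := ht.toFinset) f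
    (by intro i _; simpa using hf i) (by
      intro i _ j _ hij
      by_contra hne
      have h2 := hp.2 i j hne
      have h3 : dist (p i) (p j) ≤ dist (p i) (f i) + dist (p j) (f i) := dist_triangle_right _ _ _
      have h4 := hfd i
      have h5 := hfd j
      rw [← hij] at h5
      simp at h2
      linarith)
  simpa using this

/-- sum of scaled distances -/
def famSum {N : ℕ} (n : ℕ) (p : Fin N → X) : ℝ := ∑ i, ∑ j, 2^n * dist (p i) (p j)

lemma famSum_le {x : X} {s : ℝ} {n N : ℕ} {p : Fin N → X} (h : SepFam x s n N p) :
    famSum n p ≤ N * (N * 2) := by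
  unfold famSum
  have h0 : ∀ i j, 2^n * dist (p i) (p j) ≤ 2 := by
    intro i j
    have h1 : dist (p i) (p j) ≤ dist x (p i) + dist x (p j) := dist_triangle_left _ _ _
    have h2 := h.1 i
    have h3 := h.1 j
    have h4 : (2:ℝ)^n * (1/2)^n = 1 := by rw [← mul_pow]; norm_num
    have h5 : (0:ℝ) < 2^n := by positivity
    nlinarith
  calc _ ≤ ∑ i : Fin N, ∑ j : Fin N, (2:ℝ) := Finset.sum_le_sum fun i _ => Finset.sum_le_sum fun j _ => h0 i j
    _ = _ := by simp

/-- local almost-flatness at a single point -/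
lemma flat_at [ProperSpace X] (hs : PointSymmetric X) (x : X) {η : ℝ} (hη : 0 < η) :
    ∃ n1 : ℕ, ∀ n ≥ n1,
      (∀ w, dist x w ≤ (1/2)^n → ∃ a γ, IsSym a γ ∧ dist (γ x) w ≤ η * (1/2)^n) ∧
      (∀ a b α β, IsSym a α → IsSym b β → dist x a ≤ (1/2)^(n+1) → dist x b ≤ (1/2)^(n+1) →
        dist (α x) (β x) ≤ 2 * dist a b + η * (1/2)^n) := by
  choose sy hsy' using hs
  have hsy : ∀ z, IsSym z (sy z) := hsy'
  set s := η / 8 with hs8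
  have hs0 : 0 < s := by positivity
  let A : ℕ → ℕ → Prop := fun n N => ∃ p, SepFam x s n N p
  have hAmono : ∀ n m N, n ≤ m → A m N → A n N := by
    intro n m N hnm
    induction m, hnm using Nat.le_induction with
    | base => exact id
    | succ m _ ih => rintro ⟨p, hp⟩; exact ih ⟨_, hp.image hsy⟩
  obtain ⟨B, hB⟩ := SepFam.bound x hs0
  let 𝒩 : Set ℕ := {N | ∀ n, A n N}
  have hne : 𝒩.Nonempty := ⟨0, fun n => ⟨fun i => i.elim0, fun i => i.elim0, fun i => i.elim0⟩⟩
  have hbd : BddAbove 𝒩 := ⟨B, fun N hN => by obtain ⟨p, hp⟩ := hN 0; exact hB N p hp⟩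
  set N := sSup 𝒩
  have hN : N ∈ 𝒩 := Nat.sSup_mem hne hbd
  have hN1 : N + 1 ∉ 𝒩 := fun h => by have := le_csSup hbd h; omega
  obtain ⟨n0, hn0⟩ : ∃ n0, ¬ A n0 (N+1) := by simpa [𝒩] using hN1
  let V : ℕ → Set ℝ := fun n => {v | ∃ p, SepFam x s n N p ∧ v = famSum n p}
  have hVne : ∀ n, (V n).Nonempty := fun n => by obtain ⟨p, hp⟩ := hN n; exact ⟨_, p, hp, rfl⟩
  have hVbd : ∀ n, BddAbove (V n) := fun n => ⟨N * (N * 2), by rintro _ ⟨p, hp, rfl⟩; exact famSum_le hp⟩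
  have hle : ∀ n (p : Fin N → X), famSum (n+1) p ≤ famSum n (fun i => sy (p i) x) := by
    intro n p
    refine Finset.sum_le_sum fun i _ => Finset.sum_le_sum fun j _ => ?_
    have := KL (hsy (p i)) (hsy (p j)) x
    rw [pow_succ, mul_assoc]
    gcongr
  have hanti : Antitone fun n => sSup (V n) := by
    apply antitone_nat_of_succ_le
    intro n
    apply csSup_le (hVne _)
    rintro _ ⟨p, hp, rfl⟩
    exact (hle n p).trans (le_csSup (hVbd n) ⟨_, hp.image hsy, rfl⟩)
  have hbelow : BddBelow (range fun n => sSup (V n)) := by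
    refine ⟨0, ?_⟩
    rintro _ ⟨n, rfl⟩
    obtain ⟨v, hv⟩ := hVne n
    refine le_trans ?_ (le_csSup (hVbd n) hv)
    obtain ⟨p, hp, rfl⟩ := hv
    exact Finset.sum_nonneg fun i _ => Finset.sum_nonneg fun j _ => by positivity
  have hlim := tendsto_atTop_ciInf hanti hbelow
  set ℓ := ⨅ n, sSup (V n)
  obtain ⟨n1, hn1⟩ := (Metric.tendsto_atTop.1 hlim) (η/16) (by positivity)
  refine ⟨max n0 n1, fun n hn => ?_⟩
  have hstep : sSup (V n) - sSup (V (n+1)) < η/16 := by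
    have h1 := hn1 n (le_trans (le_max_right _ _) hn)
    have h2 : ℓ ≤ sSup (V (n+1)) := ciInf_le hbelow (n+1)
    rw [Real.dist_eq] at h1
    have := le_abs_self (sSup (V n) - ℓ)
    linarith
  obtain ⟨_, ⟨Z, hZ, rfl⟩, hZs⟩ := exists_lt_of_lt_csSup (hVne (n+1))
    (show sSup (V (n+1)) - η/16 < sSup (V (n+1)) by linarith)
  have hFZ := hZ.image hsy
  have hup : famSum n (fun i => sy (Z i) x) ≤ sSup (V n) := le_csSup (hVbd n) ⟨_, hFZ, rfl⟩
  have hpw : (2:ℝ)^n * (1/2)^n = 1 := by rw [← mul_pow]; norm_num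
  have hc0 : (0:ℝ) < (1/2)^n := by positivity
  have hpair : ∀ i j, dist (sy (Z i) x) (sy (Z j) x) ≤ 2 * dist (Z i) (Z j) + η/8 * (1/2)^n := by
    intro i j
    have hterm : ∀ i j, 0 ≤ 2^n * dist (sy (Z i) x) (sy (Z j) x) - 2^(n+1) * dist (Z i) (Z j) := by
      intro i j
      have := KL (hsy (Z i)) (hsy (Z j)) x
      have h5 : (0:ℝ) < 2^n := by positivity
      rw [pow_succ]; nlinarith
    have hsum : ∑ i, ∑ j, (2^n * dist (sy (Z i) x) (sy (Z j) x) - 2^(n+1) * dist (Z i) (Z j)) < η/8 := by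
      simp only [Finset.sum_sub_distrib]
      change famSum n (fun i => sy (Z i) x) - famSum (n+1) Z < η/8
      linarith
    have h1 : 2^n * dist (sy (Z i) x) (sy (Z j) x) - 2^(n+1) * dist (Z i) (Z j) ≤ ∑ j, (2^n * dist (sy (Z i) x) (sy (Z j) x) - 2^(n+1) * dist (Z i) (Z j)) :=
      Finset.single_le_sum (f := fun j => (2^n * dist (sy (Z i) x) (sy (Z j) x) - 2^(n+1) * dist (Z i) (Z j))) (fun j _ => hterm i j) (Finset.mem_univ j)
    have h2 : ∑ j, (2^n * dist (sy (Z i) x) (sy (Z j) x) - 2^(n+1) * dist (Z i) (Z j)) ≤ _ :=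
      Finset.single_le_sum (f := fun i => ∑ j, (2^n * dist (sy (Z i) x) (sy (Z j) x) - 2^(n+1) * dist (Z i) (Z j))) (fun i _ => Finset.sum_nonneg fun j _ => hterm i j) (Finset.mem_univ i)
    have h3 : 2^n * dist (sy (Z i) x) (sy (Z j) x) - 2^(n+1) * dist (Z i) (Z j) ≤ η/8 := by linarith
    have h4 := mul_le_mul_of_nonneg_left h3 hc0.le
    have h5 : (1/2:ℝ)^n * (2^n * dist (sy (Z i) x) (sy (Z j) x) - 2^(n+1) * dist (Z i) (Z j))
      = (2^n * (1/2)^n) * (dist (sy (Z i) x) (sy (Z j) x) - 2 * dist (Z i) (Z j)) := by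
      rw [pow_succ]; ring
    rw [h5, hpw] at h4
    linarith
  have hdense : ∀ w, dist x w ≤ (1/2)^n → ∃ i, dist (sy (Z i) x) w < s * (1/2)^n := by
    intro w hw
    by_contra hcon
    push Not at hcon
    apply hn0
    apply hAmono n0 n _ (le_trans (le_max_left _ _) hn)
    refine ⟨Fin.cons w (fun i => sy (Z i) x), ?_, ?_⟩
    · intro i
      refine Fin.cases ?_ ?_ i
      · simpa using hw
      · intro i; simpa using hFZ.1 i
    · intro i j
      refine Fin.cases ?_ ?_ i
      · refine Fin.cases ?_ ?_ j
        · intro h; exact absurd rfl h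
        · intro j _; simpa [dist_comm] using hcon j
      · intro i
        refine Fin.cases ?_ ?_ j
        · intro _; simpa using hcon i
        · intro j hij
          simpa using hFZ.2 i j (fun h => hij (by rw [h]))
  refine ⟨fun w hw => ?_, fun a b α β ha hb hxa hxb => ?_⟩
  · obtain ⟨i, hi⟩ := hdense w hw
    refine ⟨_, _, hsy (Z i), hi.le.trans ?_⟩
    gcongr; linarith
  · have e1 : dist x (α x) ≤ (1/2)^n := by
      rw [ha.2, dist_comm]; rw [pow_succ] at hxa; linarith
    have e2 : dist x (β x) ≤ (1/2)^n := by
      rw [hb.2, dist_comm]; rw [pow_succ] at hxb; linarith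
    obtain ⟨i, hi⟩ := hdense _ e1
    obtain ⟨j, hj⟩ := hdense _ e2
    have e3 := KL (hsy (Z i)) ha x
    have e4 := KL (hsy (Z j)) hb x
    have e5 := hpair i j
    have e6 : dist (α x) (β x) ≤ dist (α x) (sy (Z i) x) + dist (sy (Z i) x) (sy (Z j) x) + dist (sy (Z j) x) (β x) := dist_triangle4 _ _ _ _
    have e7 : dist (Z i) (Z j) ≤ dist (Z i) a + dist a b + dist b (Z j) := dist_triangle4 _ _ _ _
    rw [dist_comm (α x) (sy (Z i) x)] at e6
    rw [dist_comm b (Z j)] at e7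
    rw [hs8] at *
    have : 0 < η * (1/2)^n := by positivity
    linarith

/-- uniform almost flatness at scale `r` with error `η` -/
def Flat (X : Type*) [MetricSpace X] (η r : ℝ) : Prop :=
  ∀ x : X,
      (∀ w, dist x w ≤ r → ∃ a γ, IsSym a γ ∧ dist (γ x) w ≤ η * r) ∧
      (∀ a b α β, IsSym a α → IsSym b β → dist x a ≤ r → dist x b ≤ r →
        dist (α x) (β x) ≤ 2 * dist a b + η * r)

lemma orbit_dense [ProperSpace X] [PreconnectedSpace X] (hs : PointSymmetric X) (x : X) :
    Dense (range fun g : X ≃ᵢ X => g x) := by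
  obtain ⟨n1, hn1⟩ := flat_at hs x (η := 1/4) (by norm_num)
  set O := range fun g : X ≃ᵢ X => g x
  have hOne : O.Nonempty := ⟨x, 1, rfl⟩
  -- every point within 2^{-n1} of the orbit is in the closure
  have key : ∀ w, infDist w O < (1/2)^n1 / 2 → w ∈ closure O := by
    intro w hw
    rw [mem_closure_iff_infDist_zero hOne]
    by_contra h0
    have hpos : 0 < infDist w O := lt_of_le_of_ne infDist_nonneg (Ne.symm h0)
    set t := infDist w O
    -- find n with 2^{-n-1}... 
    have h1 : ∃ n ≥ n1, (3/2) * t ≤ (1/2)^n ∧ (1/2:ℝ)^n < 3 * t := by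
      have hb : 1 ≤ (1/2)^n1 / ((3/2) * t) := by rw [one_le_div (by positivity)]; linarith
      obtain ⟨m, hm1, hm2⟩ := exists_nat_pow_near hb (one_lt_two (α := ℝ))
      rw [le_div_iff₀ (by positivity)] at hm1
      rw [div_lt_iff₀ (by positivity)] at hm2
      have e : (1/2:ℝ)^(n1+m) * 2^m = (1/2)^n1 := by
        rw [pow_add, mul_assoc, ← mul_pow]; norm_num
      have h2m : (0:ℝ) < 2^m := by positivity
      refine ⟨n1 + m, by omega, ?_, ?_⟩
      · rw [← e] at hm1
        nlinarith
      · rw [← e, pow_succ] at hm2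
        nlinarith
    obtain ⟨n, hn, hn2, hn3⟩ := h1
    obtain ⟨_, ⟨g, rfl⟩, hg⟩ := (infDist_lt_iff hOne).1 (show infDist w O < (3/2) * t by linarith)
    obtain ⟨a, γ, ha, had⟩ := (hn1 n hn).1 (g⁻¹ w) (by rw [iso_dist_inv, dist_comm]; linarith)
    have : infDist w O ≤ dist w ((g * γ) x) := infDist_le_dist_of_mem ⟨g * γ, rfl⟩
    rw [iso_dist_inv, dist_comm, ← IsometryEquiv.mul_apply] at had
    have : t ≤ dist w ((g * γ) x) := this
    linarith
  have hclopen : IsClopen (closure O) := by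
    refine ⟨isClosed_closure, ?_⟩
    rw [Metric.isOpen_iff]
    intro y hy
    refine ⟨(1/2)^n1/2, by positivity, fun w hw => key w ?_⟩
    rw [← infDist_closure]
    exact (infDist_le_dist_of_mem hy).trans_lt hw
  have := hclopen.eq_univ (hOne.mono subset_closure)
  rw [dense_iff_closure_eq, this]

lemma exists_flat [ProperSpace X] [PreconnectedSpace X] (hs : PointSymmetric X) {η : ℝ} (hη : 0 < η) :
    ∃ r0 > 0, ∀ r, 0 < r → r ≤ r0 → Flat X η r := by
  rcases isEmpty_or_nonempty X with he | ⟨⟨x0⟩⟩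
  · exact ⟨1, one_pos, fun r _ _ x => (he.false x).elim⟩
  obtain ⟨n1, hn1⟩ := flat_at hs x0 (η := η/8) (by positivity)
  refine ⟨(1/2)^(n1+2), by positivity, fun r hr hr0 x => ?_⟩
  -- n with 2^{-(n+3)} < r ≤ 2^{-(n+2)}, n ≥ n1
  obtain ⟨n, hn, hn2, hn3⟩ : ∃ n ≥ n1, 4 * r ≤ (1/2)^n ∧ (1/2:ℝ)^n < 8 * r := by
      have hb : 1 ≤ (1/2)^n1 / (4 * r) := by
        rw [one_le_div (by positivity)]; rw [pow_add] at hr0; norm_num at hr0 ⊢; linarith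
      obtain ⟨m, hm1, hm2⟩ := exists_nat_pow_near hb (one_lt_two (α := ℝ))
      rw [le_div_iff₀ (by positivity)] at hm1
      rw [div_lt_iff₀ (by positivity)] at hm2
      have e : (1/2:ℝ)^(n1+m) * 2^m = (1/2)^n1 := by
        rw [pow_add, mul_assoc, ← mul_pow]; norm_num
      have h2m : (0:ℝ) < 2^m := by positivity
      refine ⟨n1 + m, by omega, ?_, ?_⟩
      · rw [← e] at hm1
        nlinarith
      · rw [← e, pow_succ] at hm2
        nlinarith
  have hηn : η/8 * (1/2)^n < η * r := by nlinarith
  -- perturbation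
  set δ := min (r) ((η * r - η/8 * (1/2)^n)/8) with hδ
  have hδ0 : 0 < δ := lt_min hr (by linarith)
  have hδ1 : δ ≤ r := min_le_left _ _
  have hδ2 : δ ≤ (η * r - η/8 * (1/2)^n)/8 := min_le_right _ _
  obtain ⟨_, ⟨g, rfl⟩, hg⟩ := (orbit_dense hs x0).exists_dist_lt x hδ0
  simp only at hg
  refine ⟨fun w hw => ?_, fun a b α β ha hb hxa hxb => ?_⟩
  · obtain ⟨a, γ, ha, had⟩ := (hn1 n hn).1 (g⁻¹ w) (by
      rw [iso_dist_inv]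
      have : dist (g x0) w ≤ dist x (g x0) + dist x w := dist_triangle_left _ _ _
      linarith)
    refine ⟨_, _, ha.conj g, ?_⟩
    have h1 : dist ((g * γ * g⁻¹) x) w ≤ dist ((g * γ * g⁻¹) x) ((g * γ * g⁻¹) (g x0)) + dist ((g * γ * g⁻¹) (g x0)) w := dist_triangle _ _ _
    rw [iso_dist] at h1
    rw [iso_dist_inv] at had
    simp only [IsometryEquiv.mul_apply, IsometryEquiv.inv_apply_self] at h1 ⊢
    linarith
  · have h2 : (1/2:ℝ)^(n+1) = (1/2)^n/2 := by rw [pow_succ]; ring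
    have h3 : ∀ c, dist x c ≤ r → dist x0 (g⁻¹ c) ≤ (1/2)^(n+1) := by
      intro c hc
      rw [iso_dist_inv, h2]
      have : dist (g x0) c ≤ dist x (g x0) + dist x c := dist_triangle_left _ _ _
      linarith
    have h4 := (hn1 n hn).2 _ _ _ _ (ha.conj g⁻¹) (hb.conj g⁻¹) (h3 a hxa) (h3 b hxb)
    simp only [IsometryEquiv.mul_apply, iso_dist, inv_inv] at h4
    have h5 : dist (α x) (β x) ≤ dist (α x) (α (g x0)) + dist (α (g x0)) (β (g x0)) + dist (β (g x0)) (β x) := dist_triangle4 _ _ _ _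
    rw [iso_dist, iso_dist, dist_comm (g x0) x] at h5
    linarith

end Flat
end BooleanModel
set_option autoImplicit false
namespace BooleanModel
section Newton
variable {X : Type*} [MetricSpace X]

lemma newton [ProperSpace X] {f : X → ℝ} (hf : Continuous f) (hf0 : ∀ p, 0 ≤ f p) {L : ℝ} (hL : 0 ≤ L) (y : X)
    (step : ∀ p, dist p y + L * f p ≤ L * f y → ∃ m, dist p m ≤ L / 2 * f p ∧ f m ≤ f p / 2) :
    ∃ n, f n = 0 ∧ dist n y ≤ L * f y := by
  set K := {p | dist p y + L * f p ≤ L * f y}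
  have hKc : IsCompact K := by
    apply (isCompact_closedBall y (L * f y)).of_isClosed_subset
    · exact isClosed_le (by fun_prop) continuous_const
    · intro p hp
      have : dist p y + L * f p ≤ L * f y := hp
      have := mul_nonneg hL (hf0 p)
      rw [mem_closedBall]; linarith
  obtain ⟨p, hp, hmin⟩ := hKc.exists_isMinOn ⟨y, by simp [K]⟩ hf.continuousOn
  have hp' : dist p y + L * f p ≤ L * f y := hp
  obtain ⟨m, hm1, hm2⟩ := step p hp'
  have hm : m ∈ K := by
    change dist m y + L * f m ≤ L * f y
    have := dist_triangle m p y
    rw [dist_comm m p] at this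
    nlinarith
  have := hmin hm
  have h3 : f p ≤ f m := this
  have h4 := hf0 p
  have h5 : f p = 0 := by linarith
  refine ⟨p, h5, ?_⟩
  rw [h5] at hp'; linarith

/-- flatness at all scales up to `R` -/
def FlatB (X : Type*) [MetricSpace X] (η R : ℝ) : Prop := ∀ t, 0 < t → t ≤ R → Flat X η t

lemma FlatB.mono {η R R' : ℝ} (h : FlatB X η R) (hR : R' ≤ R) : FlatB X η R' :=
  fun t ht ht' => h t ht (ht'.trans hR)

lemma fixed_point [ProperSpace X] (hs : PointSymmetric X) {η ε r : ℝ} (hr : 0 < r) (hη0 : 0 ≤ η) (hη : η ≤ 1/100)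
    (hε0 : 0 ≤ ε) (hε : ε ≤ 1/100) (hF : FlatB X η (2*r)) {y : X} {α : X ≃ᵢ X} (hα : IsSym y α)
    (g : X ≃ᵢ X) (hg : ∀ q, dist y q ≤ 2*r → dist q (g q) ≤ ε * r) :
    ∃ n, g (α n) = n ∧ dist n y ≤ 2 * dist y (g y) := by
  have hgy := hg y (by simp; positivity)
  obtain ⟨n, hn, hny⟩ := newton (f := fun p => dist p (g (α p)))
    (by have := g.continuous; have := α.continuous; fun_prop) (fun p => dist_nonneg)
    (L := 2) (by norm_num) y (by
    intro p hp
    simp only [hα.1] at hp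
    set t := dist p (g (α p)) with ht
    have ht0 : 0 ≤ t := dist_nonneg
    have hpy : 0 ≤ dist p y := dist_nonneg
    rcases eq_or_lt_of_le ht0 with h0 | h0
    · exact ⟨p, by simp [← h0], by rw [← ht, ← h0]; simp⟩
    have htε : t ≤ ε * r := by linarith
    have hεr : ε * r ≤ r / 100 := by nlinarith
    obtain ⟨m, γ, hm, hmd⟩ := ((hF t h0 (by linarith)) p).1 _ (le_refl t)
    have hpm : dist p m ≤ t := by
      have h1 := hm.2 p
      have h2 := dist_triangle p (g (α p)) (γ p)
      rw [dist_comm (g (α p)) (γ p)] at h2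
      rw [dist_comm m p] at h1
      nlinarith
    refine ⟨m, by simpa using hpm, ?_⟩
    have hmy : dist m y ≤ 3 * (ε * r) := by
      have := dist_triangle_left m y p
      linarith
    have hS : ∀ q, dist p q ≤ r → dist q ((γ⁻¹ * (g * α)) q) ≤ (7 * ε + 2 * η) * r := by
      intro q hq
      rw [IsometryEquiv.mul_apply, iso_dist_inv, IsometryEquiv.mul_apply]
      have hyq : dist y q ≤ r + 2 * (ε * r) := by
        have := dist_triangle_left y q p
        linarith
      have h1 := hg (α q) (by rw [hα.dist_center]; linarith)
      have hqm : dist q m ≤ r + ε * r := by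
        have := dist_triangle_left q m p
        linarith
      have h2 := ((hF (2*r) (by linarith) le_rfl) q).2 m y γ α hm hα (by linarith)
        (by rw [dist_comm]; linarith)
      have h3 := dist_triangle (γ q) (α q) (g (α q))
      linarith
    have h1 := ext_disp hs _ p hr hS m (by linarith)
    simp only [IsometryEquiv.mul_apply, iso_dist_inv] at h1
    rw [hm.1] at h1
    have h2 : 2 * (dist p m / r) * ((7 * ε + 2 * η) * r) = 2 * dist p m * (7 * ε + 2 * η) := by
      field_simp
    rw [h2] at h1
    change dist m (g (α m)) ≤ t / 2
    have h3 : 2 * dist p m * (7 * ε + 2 * η) ≤ 2 * t * (9/100) := by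
      have : 7 * ε + 2 * η ≤ 9/100 := by linarith
      have h7 : 0 ≤ dist p m := dist_nonneg
      gcongr
    nlinarith)
  simp only [hα.1] at hny
  exact ⟨n, (dist_eq_zero.1 hn).symm, hny⟩

lemma doubling [ProperSpace X] (hs : PointSymmetric X) {η ε r : ℝ} (hr : 0 < r) (hη0 : 0 ≤ η) (hη : η ≤ 1/100)
    (hε0 : 0 ≤ ε) (hε : ε ≤ 1/100) (hF : FlatB X η (2*r)) {y : X} {α : X ≃ᵢ X} (hα : IsSym y α)
    (g : X ≃ᵢ X) (hg : ∀ q, dist y q ≤ 2*r → dist q (g q) ≤ ε * r) :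
    ∃ n', dist n' y ≤ 2 * dist y (g y) ∧ dist y (g y) ≤ dist n' (g n') ∧
      ∀ γ, IsSym n' γ → ∀ S, (∀ q, dist n' q ≤ r → dist q (g q) + dist (α q) (γ q) ≤ S) →
        (2 - 2 * S / r) * dist n' (g n') ≤ dist n' (g (g n')) := by
  obtain ⟨n, hn, hny⟩ := fixed_point hs hr hη0 hη hε0 hε hF hα g hg
  have hgy := hg y (by simp; positivity)
  have hin : α⁻¹ (α n) = n := by simp
  refine ⟨α n, ?_, ?_, ?_⟩
  · rw [dist_comm, hα.dist_center, dist_comm]; exact hny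
  · have := hα.inv.cv g (α n)
    rw [hin, hn] at this
    have h2 : dist n (g n) = dist (α n) (g (α n)) := by
      rw [← iso_dist g (α n) (g (α n)), hn]
    rw [hn] at h2
    rw [hn]
    linarith
  · intro γ hγ S hS
    set n' := α n with hn'
    have hD : dist n' (g n') = 2 * dist y n' := by
      rw [hn, ← hin, hα.inv.2]
    have hDr : dist n' (g n') ≤ r := by
      rw [hD, hα.dist_center, dist_comm]
      nlinarith
    set θ := α⁻¹ * γ with hθ
    have hθn : θ n' = g n' := by
      rw [hθ, IsometryEquiv.mul_apply, hγ.1, hin, hn]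
    have hkl : dist n' (θ (θ n')) = 4 * dist n' y := by
      have := KL' hγ.inv hα.inv
      simpa [hθ] using this
    have hfix : (θ⁻¹ * g) n' = n' := by
      rw [IsometryEquiv.mul_apply, ← hθn, IsometryEquiv.inv_apply_self]
    have h1 := ext_disp hs (θ⁻¹ * g) n' hr (S := S) (by
      intro q hq
      refine le_trans ?_ (hS q hq)
      rw [IsometryEquiv.mul_apply, iso_dist_inv]
      have h2 : dist (θ q) (g q) ≤ dist (θ q) q + dist q (g q) := dist_triangle _ _ _
      have h3 : dist (θ q) q = dist (α q) (γ q) := by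
        rw [hθ, IsometryEquiv.mul_apply, iso_inv_dist, dist_comm]
      linarith) (g n') hDr
    rw [hfix, dist_self, IsometryEquiv.mul_apply, iso_dist_inv] at h1
    have h4 := dist_triangle n' (g (g n')) (θ (θ n'))
    rw [hkl, hθn, dist_comm (g (g n'))] at h4
    rw [dist_comm y n'] at hD
    have h5 : 2 * (dist n' (g n') / r) * S = 2 * S / r * dist n' (g n') := by ring
    rw [h5] at h1
    linarith

lemma doubling' [ProperSpace X] (hs : PointSymmetric X) {η ε r : ℝ} (hr : 0 < r) (hη0 : 0 ≤ η) (hη : η ≤ 1/100)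
    (hε0 : 0 ≤ ε) (hε : ε ≤ 1/100) (hF : FlatB X η (2*r)) {y : X}
    (g : X ≃ᵢ X) (hg : ∀ q, dist y q ≤ 3*r → dist q (g q) ≤ ε * r) :
    ∃ n', dist n' y ≤ 2 * dist y (g y) ∧ 3/2 * dist y (g y) ≤ dist n' (g (g n')) := by
  obtain ⟨α, hα⟩ := hs y
  have hα : IsSym y α := hα
  have hgy := hg y (by simp; positivity)
  obtain ⟨n', h1, h2, h3⟩ := doubling hs hr hη0 hη hε0 hε hF hα g (fun q hq => hg q (by linarith))
  refine ⟨n', h1, ?_⟩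
  obtain ⟨γ, hγ⟩ := hs n'
  have hγ : IsSym n' γ := hγ
  have h4 := h3 γ hγ ((5 * ε + 2 * η) * r) (by
    intro q hq
    have hεr : ε * r ≤ r / 100 := by nlinarith
    have hyq : dist y q ≤ r + 2 * (ε * r) := by
      have := dist_triangle_left y q n'
      linarith
    have e1 := hg q (by linarith)
    have e2 := ((hF (2*r) (by linarith) le_rfl) q).2 y n' α γ hα hγ
        (by rw [dist_comm]; linarith) (by rw [dist_comm]; linarith)
    rw [dist_comm y n'] at e2
    linarith)
  have h5 : 2 * ((5 * ε + 2 * η) * r) / r = 2 * (5 * ε + 2 * η) := by field_simp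
  rw [h5] at h4
  have : 0 ≤ dist y (g y) := dist_nonneg
  nlinarith

/-- no small subgroups -/
lemma small_group [ProperSpace X] (hs : PointSymmetric X) {η ε r : ℝ} (hr : 0 < r) (hη0 : 0 ≤ η) (hη : η ≤ 1/100)
    (hε0 : 0 ≤ ε) (hε : ε ≤ 1/100) (hF : FlatB X η (2*r)) (p : X) (H : Set (X ≃ᵢ X))
    (hsq : ∀ g ∈ H, g * g ∈ H) (hH : ∀ g ∈ H, ∀ q, dist p q ≤ 6*r → dist q (g q) ≤ ε * r) :
    ∀ g ∈ H, ∀ q, dist p q ≤ 2 * r → g q = q := by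
  have hεr : ε * r ≤ r / 100 := by nlinarith
  have hεr0 : 0 ≤ ε * r := by positivity
  have key : ∀ j : ℕ, ∀ g ∈ H, ∀ q, dist p q ≤ 2 * r + 6 * (ε * r) * (2/3)^j → dist q (g q) ≤ ε * r * (2/3)^j := by
    intro j
    induction j with
    | zero => intro g hg q hq; simp at *; exact hH g hg q (by linarith)
    | succ j ih =>
      intro g hg q hq
      have hj0 : (0:ℝ) < (2/3)^j := by positivity
      have hj1 : (2/3:ℝ)^j ≤ 1 := pow_le_one₀ (by norm_num) (by norm_num)
      rw [pow_succ] at hq ⊢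
      have hA : 0 ≤ (ε * r) * (2/3)^j := by positivity
      have hA1 : (ε * r) * (2/3)^j ≤ ε * r := by nlinarith
      obtain ⟨n', h1, h2⟩ := doubling' hs hr hη0 hη hε0 hε hF (y := q) g (by
        intro z hz
        apply hH g hg
        have := dist_triangle p q z
        linarith)
      have h3 := ih g hg q (by linarith)
      have h4 := ih (g * g) (hsq g hg) n' (by
        have := dist_triangle_right p n' q
        linarith)
      rw [IsometryEquiv.mul_apply] at h4
      linarith
  intro g hg q hq
  have hlim : Filter.Tendsto (fun j : ℕ => ε * r * (2/3)^j) Filter.atTop (nhds (ε * r * 0)) :=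
    (tendsto_pow_atTop_nhds_zero_of_lt_one (by norm_num) (by norm_num)).const_mul _
  rw [mul_zero] at hlim
  have := ge_of_tendsto' hlim (fun j => key j g hg q (by
    have : 0 ≤ 6 * (ε * r) * (2/3)^j := by positivity
    linarith))
  exact (dist_le_zero.1 this).symm

end Newton
end BooleanModel
set_option autoImplicit false
namespace BooleanModel
section TTsec
variable {X : Type*} [MetricSpace X]

/-- isometries fixing `a` that are infinitesimally trivial at `a` -/
def TT (a : X) : Set (X ≃ᵢ X) :=
  {g | g a = a ∧ ∀ η > (0:ℝ), ∀ᶠ y in nhds a, dist y (g y) ≤ η * dist a y}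

lemma TT_one (a : X) : (1 : X ≃ᵢ X) ∈ TT a :=
  ⟨rfl, fun η hη => Filter.Eventually.of_forall fun y => by
    simp only [IsometryEquiv.coe_one, id_eq, dist_self]; positivity⟩

lemma TT_mul {a : X} {g h : X ≃ᵢ X} (hg : g ∈ TT a) (hh : h ∈ TT a) : g * h ∈ TT a := by
  refine ⟨by rw [IsometryEquiv.mul_apply, hh.1, hg.1], fun η hη => ?_⟩
  filter_upwards [hg.2 (η/2) (by positivity), hh.2 (η/2) (by positivity)] with y h1 h2
  rw [IsometryEquiv.mul_apply]
  have := dist_triangle y (g y) (g (h y))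
  rw [iso_dist] at this
  linarith

lemma TT_sym [ProperSpace X] [PreconnectedSpace X] (hs : PointSymmetric X) {a : X} {α β : X ≃ᵢ X}
    (ha : IsSym a α) (hb : IsSym a β) : β * α⁻¹ ∈ TT a := by
  refine ⟨by rw [IsometryEquiv.mul_apply, ha.inv.1, hb.1], fun η hη => ?_⟩
  obtain ⟨r0, hr0, hF⟩ := exists_flat hs hη
  filter_upwards [closedBall_mem_nhds a hr0] with y hy
  rw [mem_closedBall, dist_comm] at hy
  rw [IsometryEquiv.mul_apply]
  have e : y = α (α⁻¹ y) := by simp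
  have e2 : dist a y = dist a (α⁻¹ y) := (ha.inv.dist_center y).symm
  rw [e2] at hy ⊢
  conv_lhs => rw [e]
  simp only [IsometryEquiv.inv_apply_self]
  set z := α⁻¹ y
  rcases eq_or_lt_of_le (dist_nonneg (x := a) (y := z)) with h0 | h0
  · rw [← dist_eq_zero.1 h0.symm, ha.1, hb.1]; simp
  · have := (hF _ h0 hy z).2 a a α β ha hb (by rw [dist_comm]) (by rw [dist_comm])
    simpa using this

lemma TT_uniform [ProperSpace X] (hs : PointSymmetric X) (a : X) {ε : ℝ} (hε : 0 < ε) :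
    ∃ r > 0, ∀ g ∈ TT a, ∀ y, dist a y ≤ r → dist y (g y) ≤ ε * dist a y := by
  obtain ⟨t, hts, htf, hcov⟩ := finite_cover_balls_of_compact (isCompact_closedBall a 1)
    (show 0 < ε/64 by positivity)
  have hnet : ∀ q, dist a q ≤ 1 → ∃ z : t, dist q z < ε/64 := by
    intro q hq
    have := hcov (a := q) (by rwa [mem_closedBall, dist_comm])
    simp only [mem_iUnion, mem_ball] at this
    obtain ⟨z, hz, hd⟩ := this
    exact ⟨⟨z, hz⟩, hd⟩
  have htf' : Finite t := htf
  let cls : (t → t) → (X ≃ᵢ X) → Prop := fun c g => g ∈ TT a ∧ ∀ z : t, dist (g z) (c z) < ε/64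
  have hcls : ∀ g ∈ TT a, ∃ c, cls c g := by
    intro g hg
    have : ∀ z : t, ∃ w : t, dist (g z) w < ε/64 := by
      intro z
      apply hnet
      have h1 := iso_dist g a z
      rw [hg.1] at h1
      have := hts z.2
      rw [mem_closedBall, dist_comm] at this
      linarith
    choose c hc using this
    exact ⟨c, hg, hc⟩
  have hrep : ∀ c : t → t, ∃ h ∈ TT a, (∃ g, cls c g) → cls c h := by
    intro c
    by_cases hc : ∃ g, cls c g
    · obtain ⟨g, hg⟩ := hc
      exact ⟨g, hg.1, fun _ => hg⟩
    · exact ⟨1, TT_one a, fun h => absurd h hc⟩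
  choose rep hrepT hrepc using hrep
  have hev : ∀ᶠ y in nhds a, ∀ c, dist y (rep c y) ≤ ε/2 * dist a y := by
    rw [Filter.eventually_all]
    intro c
    exact (hrepT c).2 (ε/2) (by positivity)
  obtain ⟨r, hr, hrs⟩ := Metric.nhds_basis_closedBall.eventually_iff.1 hev
  refine ⟨min r 1, by positivity, fun g hg y hy => ?_⟩
  obtain ⟨c, hc⟩ := hcls g hg
  have hcr := hrepc c ⟨g, hc⟩
  have hy1 : dist a y ≤ r := hy.trans (min_le_left _ _)
  have hy2 : dist a y ≤ 1 := hy.trans (min_le_right _ _)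
  have e1 := hrs (x := y) (by rwa [mem_closedBall, dist_comm]) c
  have e2 := ext_disp hs ((rep c)⁻¹ * g) a one_pos (S := ε/16) (by
    intro q hq
    rw [IsometryEquiv.mul_apply, iso_dist_inv]
    obtain ⟨z, hz⟩ := hnet q hq
    have h1 := dist_triangle4 (rep c q) (rep c z) (g z) (g q)
    have h2 := dist_triangle_right (rep c z) (g z) (c z)
    have h3 := hc.2 z
    have h4 := hcr.2 z
    rw [iso_dist, iso_dist, dist_comm (z : X) q] at h1
    linarith) y hy2
  rw [IsometryEquiv.mul_apply, IsometryEquiv.mul_apply, iso_dist_inv, iso_dist_inv, (hrepT c).1, hg.1] at e2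
  have e3 := dist_triangle y (rep c y) (g y)
  have e4 : 0 ≤ ε * dist a y := by positivity
  simp at e2
  linarith

lemma TT_trivial [ProperSpace X] [PreconnectedSpace X] (hs : PointSymmetric X) (a : X) :
    ∀ g ∈ TT a, ∀ y, g y = y := by
  set F : Set X := {q | ∀ g ∈ TT a, g q = q}
  have hsq : ∀ g ∈ TT a, g * g ∈ TT a := fun g hg => TT_mul hg hg
  obtain ⟨r0, hr0, hF⟩ := exists_flat (X := X) hs (η := 1/20000) (by norm_num)
  have haF : a ∈ interior F := by
    obtain ⟨r, hr, h⟩ := TT_uniform hs a (ε := 1/600) (by norm_num)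
    set r' := min (r/6) (r0/2)
    have hr'0 : 0 < r' := by positivity
    have hr'1 : r' ≤ r/6 := min_le_left _ _
    have hr'2 : r' ≤ r0/2 := min_le_right _ _
    have := small_group hs hr'0 (η := 1/20000) (ε := 1/100) (by norm_num) (by norm_num) (by norm_num)
      (by norm_num) (fun t ht ht' => hF t ht (by linarith)) a (TT a) hsq (by
        intro g hg q hq
        have := h g hg q (by linarith)
        linarith)
    rw [mem_interior_iff_mem_nhds]
    filter_upwards [closedBall_mem_nhds a (show 0 < 2 * r' by positivity)] with q hq g hg
    exact this g hg q (by rwa [dist_comm])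
  have hall : interior F = univ := by
    by_contra hne
    have hncl : ¬ IsClosed (interior F) := fun hcl =>
      hne (IsClopen.eq_univ ⟨hcl, isOpen_interior⟩ ⟨a, haF⟩)
    obtain ⟨p, hpc, hpO⟩ : ∃ p ∈ closure (interior F), p ∉ interior F := by
      by_contra hcon
      push Not at hcon
      exact hncl (isClosed_of_closure_subset hcon)
    obtain ⟨q, hqO, hqp⟩ := Metric.mem_closure_iff.1 hpc (r0/2) (by positivity)
    have hcn : (interior F)ᶜ.Nonempty := ⟨p, hpO⟩
    obtain ⟨p', hp', hpd⟩ := isOpen_interior.isClosed_compl.exists_infDist_eq_dist hcn q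
    set t := infDist q (interior F)ᶜ with ht
    have ht0 : 0 < t := by
      rw [hpd, dist_pos]; rintro rfl; exact hp' hqO
    have ht1 : t < r0/2 := (infDist_le_dist_of_mem (show p ∈ (interior F)ᶜ from hpO)).trans_lt (by rwa [dist_comm])
    have hball : ∀ z, dist q z < t → z ∈ F := by
      intro z hz
      by_contra hzF
      have : t ≤ dist q z := infDist_le_dist_of_mem (fun h => hzF (interior_subset h))
      linarith
    have hfl := hF (2*t) (by positivity) (by linarith) q
    have hdisp : ∀ k ∈ TT a, ∀ y, dist q y ≤ 2 * t → dist y (k y) ≤ t/600 := by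
      intro k hk y hy
      have hkq : k q = q := hball q (by simpa using ht0) k hk
      obtain ⟨m1, γ1, hm1, hd1⟩ := hfl.1 y hy
      have hqm1 : dist q m1 ≤ (1+1/20000) * t := by
        have h1 := hm1.2 q
        have h2 := dist_triangle_right q (γ1 q) y
        rw [dist_comm m1 q] at h1
        linarith
      obtain ⟨m2, γ2, hm2, hd2⟩ := hfl.1 m1 (by linarith)
      have hqm2 : dist q m2 < t := by
        have h1 := hm2.2 q
        have h2 := dist_triangle_right q (γ2 q) m1
        rw [dist_comm m2 q] at h1
        linarith
      have hkm2 : k m2 = m2 := hball m2 hqm2 k hk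
      have hkq' : k⁻¹ q = q := by rw [← hkq, IsometryEquiv.inv_apply_self, hkq]
      have hc2 := hm2.conj k
      rw [hkm2] at hc2
      have e1 := hfl.2 m2 m2 γ2 _ hm2 hc2 (by linarith) (by linarith)
      simp only [IsometryEquiv.mul_apply, hkq'] at e1
      have e2 : dist m1 (k m1) ≤ 6/20000 * t := by
        have := dist_triangle4 m1 (γ2 q) (k (γ2 q)) (k m1)
        rw [iso_dist, dist_comm m1 (γ2 q)] at this
        rw [dist_self] at e1
        linarith
      have hc1 := hm1.conj k
      have e3 := hfl.2 m1 (k m1) γ1 _ hm1 hc1 (by linarith) (by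
        have := iso_dist k q m1
        rw [hkq] at this; linarith)
      simp only [IsometryEquiv.mul_apply, hkq'] at e3
      have := dist_triangle4 y (γ1 q) (k (γ1 q)) (k y)
      rw [iso_dist, dist_comm y (γ1 q)] at this
      linarith
    have := small_group hs (r := t/6) (by positivity) (η := 1/20000) (ε := 1/100) (by norm_num) (by norm_num) (by norm_num)
      (by norm_num) (fun s hs0 hs' => hF s hs0 (by linarith)) p' (TT a) hsq (by
        intro g hg y hy
        have h1 := dist_triangle q p' y
        have := hdisp g hg y (by linarith)
        linarith)
    apply hp'
    rw [mem_interior_iff_mem_nhds]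
    filter_upwards [closedBall_mem_nhds p' (show 0 < 2 * (t/6) by positivity)] with z hz g hg
    exact this g hg z (by rwa [dist_comm])
  intro g hg y
  have : y ∈ interior F := by rw [hall]; trivial
  exact interior_subset this g hg

lemma sym_unique [ProperSpace X] [PreconnectedSpace X] (hs : PointSymmetric X) {a : X} {α β : X ≃ᵢ X}
    (ha : IsSym a α) (hb : IsSym a β) : α = β := by
  ext y
  have := TT_trivial hs a _ (TT_sym hs ha hb) (α y)
  simpa [IsometryEquiv.mul_apply] using this.symm

/-- the symmetry at `a` -/
def sy (hs : PointSymmetric X) (a : X) : X ≃ᵢ X := Classical.choose (hs a)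

lemma sy_isSym (hs : PointSymmetric X) (a : X) : IsSym a (sy hs a) := Classical.choose_spec (hs a)

variable [ProperSpace X] [PreconnectedSpace X]

lemma sy_inv (hs : PointSymmetric X) (a : X) : (sy hs a)⁻¹ = sy hs a :=
  sym_unique hs (sy_isSym hs a).inv (sy_isSym hs a)

lemma sy_sy (hs : PointSymmetric X) (a x : X) : sy hs a (sy hs a x) = x := by
  have := IsometryEquiv.inv_apply_self (sy hs a) x
  rwa [sy_inv] at this

lemma sy_conj (hs : PointSymmetric X) (g : X ≃ᵢ X) (a x : X) :
    sy hs (g a) (g x) = g (sy hs a x) := by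
  rw [← sym_unique hs ((sy_isSym hs a).conj g) (sy_isSym hs (g a))]
  simp [IsometryEquiv.mul_apply]

lemma sy_dist (hs : PointSymmetric X) (a x : X) : dist x (sy hs a x) = 2 * dist a x :=
  (sy_isSym hs a).2 x

lemma sy_dist' (hs : PointSymmetric X) (a x y : X) : dist (sy hs a x) y = dist x (sy hs a y) := by
  rw [← iso_dist (sy hs a), sy_sy]

lemma sy_self (hs : PointSymmetric X) (a : X) : sy hs a a = a := (sy_isSym hs a).1

/-- (s_b s_a)² = s_{s_b a} s_a -/
lemma transv_sq (hs : PointSymmetric X) (a b x : X) :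
    sy hs b (sy hs a (sy hs b (sy hs a x))) = sy hs (sy hs b a) (sy hs a x) := by
  have := sy_conj hs (sy hs b) a (sy hs b (sy hs a x))
  rw [← this, sy_sy]

end TTsec
end BooleanModel
set_option autoImplicit false
namespace BooleanModel
section Lip
variable {X : Type*} [MetricSpace X] [ProperSpace X] [PreconnectedSpace X]

lemma transv_disp (hs : PointSymmetric X) (a b q : X) :
    dist q ((sy hs b * sy hs a) q) = dist (sy hs a q) (sy hs b q) := by
  rw [IsometryEquiv.mul_apply, ← sy_dist', dist_comm]

lemma transv_sq_disp (hs : PointSymmetric X) (a b q : X) :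
    dist q ((sy hs b * sy hs a) ((sy hs b * sy hs a) q)) = dist (sy hs a q) (sy hs (sy hs b a) q) := by
  rw [← transv_disp]
  simp only [IsometryEquiv.mul_apply, transv_sq]

lemma base_lip (hs : PointSymmetric X) {r : ℝ} (hr : 0 < r) (hF : FlatB X (1/2000) (10*r)) (a b q : X)
    (hab : dist a b ≤ r/1000) (haq : dist a q ≤ 8 * r) : dist (sy hs a q) (sy hs b q) ≤ 1/100 * r := by
  have h1 := dist_triangle_left b q a
  have := (hF (10*r) (by positivity) le_rfl q).2 a b _ _ (sy_isSym hs a) (sy_isSym hs b)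
    (by rw [dist_comm]; linarith) (by rw [dist_comm]; linarith)
  linarith

lemma crude_lip (hs : PointSymmetric X) {r : ℝ} (hr : 0 < r) (hF : FlatB X (1/2000) (10*r)) (j : ℕ) :
    ∀ a b q : X, 2^j * dist a b ≤ r/1000 → dist a q ≤ 4 * r + 6/100 * (r * (2/3)^j) →
      dist (sy hs a q) (sy hs b q) ≤ 1/100 * (r * (2/3)^j) := by
  induction j with
  | zero =>
    intro a b q h1 h2
    simp only [pow_zero, mul_one, one_mul] at *
    exact base_lip hs hr hF a b q h1 (by linarith)
  | succ j ih =>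
    intro a b q h1 h2
    have hd0 : 0 ≤ dist a b := dist_nonneg
    have hj1 : (2/3:ℝ)^j ≤ 1 := pow_le_one₀ (by norm_num) (by norm_num)
    have hE : r * (2/3)^(j+1) = 2/3 * (r * (2/3)^j) := by rw [pow_succ]; ring
    have h2j : (1:ℝ) ≤ 2^j := one_le_pow₀ (by norm_num)
    rw [pow_succ] at h1
    rw [hE] at h2 ⊢
    have hE0 : 0 < r * (2/3)^j := by positivity
    have hE1 : r * (2/3)^j ≤ r := by nlinarith
    set E := r * (2/3)^j
    have hab2 : 2^j * dist a b ≤ r/1000 := by nlinarith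
    have hab : dist a b ≤ r/1000 := by nlinarith
    have hq := ih a b q hab2 (by linarith)
    obtain ⟨n', hn1, hn2⟩ := doubling' hs hr (η := 1/2000) (ε := 1/100) (by norm_num) (by norm_num)
      (by norm_num) (by norm_num) (hF.mono (by linarith)) (y := q) (sy hs b * sy hs a) (by
        intro z hz
        rw [transv_disp]
        apply base_lip hs hr hF a b z hab
        have := dist_triangle a q z
        linarith)
    rw [transv_sq_disp] at hn2
    rw [transv_disp] at hn1 hn2
    have h5 := ih a (sy hs b a) n' (by rw [sy_dist, dist_comm b a]; linarith) (by
      have := dist_triangle_right a n' q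
      linarith)
    linarith

lemma holder_lip (hs : PointSymmetric X) {r : ℝ} (hr : 0 < r) (hF : FlatB X (1/2000) (10*r))
    (a b q : X) (hab : dist a b ≤ r/1000) (haq : dist a q ≤ 4 * r) :
    dist (sy hs a q) (sy hs b q) ^ 2 ≤ 1/5 * r * dist a b := by
  rcases eq_or_lt_of_le (dist_nonneg (x := a) (y := b)) with h0 | h0
  · rw [dist_eq_zero.1 h0.symm]; simp
  have h1 : 1 ≤ (r/1000) / dist a b := by rwa [one_le_div h0]
  obtain ⟨j, hj1, hj2⟩ := exists_nat_pow_near h1 (one_lt_two (α := ℝ))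
  rw [le_div_iff₀ h0] at hj1
  rw [div_lt_iff₀ h0] at hj2
  have := crude_lip hs hr hF j a b q hj1 (by
    have : 0 < r * (2/3)^j := by positivity
    linarith)
  have h3 : dist (sy hs a q) (sy hs b q) ^ 2 ≤ (1/100 * (r * (2/3)^j))^2 := by
    gcongr
  have h4 : ((2/3:ℝ)^j)^2 * 2^j ≤ 1 := by
    rw [← pow_mul, mul_comm j 2, pow_mul, ← mul_pow]
    exact pow_le_one₀ (by norm_num) (by norm_num)
  refine h3.trans ?_
  rw [pow_succ] at hj2
  have h5 : 0 ≤ ((2/3:ℝ)^j)^2 := by positivity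
  have h6 : ((2/3:ℝ)^j)^2 * (r/1000) ≤ 2 * dist a b := by nlinarith
  nlinarith

lemma refined_lip (hs : PointSymmetric X) {r : ℝ} (hr : 0 < r) (hF : FlatB X (1/2000) (10*r)) (j : ℕ) (hj : 8 ≤ j) :
    ∀ a b q : X, 2^j * dist a b ≤ r/1000 → dist a q ≤ 2 * r + 6/100 * (r * (2/3)^j) →
      2^j * dist (sy hs a q) (sy hs b q) ≤ (2 - 1.6 * 0.9^j) * (2.56 * r) := by
  induction j, hj using Nat.le_induction with
  | base =>
    intro a b q h1 h2
    have hE0 : 0 < r * (2/3)^8 := by positivity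
    have := crude_lip hs hr hF 8 a b q h1 (by linarith)
    norm_num at *
    linarith
  | succ j hj ih =>
    intro a b q h1 h2
    have hd0 : 0 ≤ dist a b := dist_nonneg
    have hj8 : (2/3:ℝ)^j ≤ (2/3)^8 := pow_le_pow_of_le_one (by norm_num) (by norm_num) hj
    have hj9 : (0.9:ℝ)^j ≤ (0.9)^8 := pow_le_pow_of_le_one (by norm_num) (by norm_num) hj
    have hE : r * (2/3)^(j+1) = 2/3 * (r * (2/3)^j) := by rw [pow_succ]; ring
    have h2j : (1:ℝ) ≤ 2^j := one_le_pow₀ (by norm_num)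
    have h1' := h1
    rw [pow_succ] at h1
    rw [hE] at h2
    have hE0 : 0 < r * (2/3)^j := by positivity
    have hE1 : r * (2/3)^j ≤ r * (1/20) := by
      apply mul_le_mul_of_nonneg_left _ hr.le
      refine hj8.trans (by norm_num)
    have hsq : (2/3:ℝ)^j ≤ (0.9^j)^2 := by
      rw [← pow_mul, mul_comm j 2, pow_mul]
      exact pow_le_pow_left₀ (by norm_num) (by norm_num) _
    have hlin : (2/3:ℝ)^j ≤ 0.9^j := pow_le_pow_left₀ (by norm_num) (by norm_num) _
    have hab2 : 2^j * dist a b ≤ r/1000 := by nlinarith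
    have hab : dist a b ≤ r/1000 := by nlinarith
    have hq := crude_lip hs hr hF (j+1) a b q h1' (by rw [hE]; linarith)
    rw [hE] at hq
    obtain ⟨n', hn1, hn2, hn3⟩ := doubling hs hr (η := 1/2000) (ε := 1/100) (by norm_num) (by norm_num)
      (by norm_num) (by norm_num) (hF.mono (by linarith)) (sy_isSym hs q) (sy hs b * sy hs a) (by
        intro z hz
        rw [transv_disp]
        apply base_lip hs hr hF a b z hab
        have := dist_triangle a q z
        linarith)
    have hn4 := hn3 _ (sy_isSym hs n') (0.08 * 0.9^j * r) (by
      intro z hz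
      rw [transv_disp]
      rw [transv_disp] at hn1
      have e0 := dist_triangle_left q z n'
      have e1 := crude_lip hs hr hF (j+1) a b z h1' (by
        rw [hE]
        have := dist_triangle a q z
        linarith)
      rw [hE] at e1
      have e2 := holder_lip hs hr hF q n' z (by rw [dist_comm]; linarith) (by linarith)
      have e3 : dist (sy hs q z) (sy hs n' z) ≤ 0.07 * 0.9^j * r := by
        apply le_of_sq_le_sq _ (by positivity)
        refine e2.trans ?_
        rw [dist_comm q n']
        have e4 : dist n' q ≤ 2/100 * (r * (2/3)^j) := by linarith
        have e5 : 1/5 * r * dist n' q ≤ 1/5 * r * (2/100 * (r * (2/3)^j)) := by gcongr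
        have e6 : 1/5 * r * (2/100 * (r * (2/3)^j)) = 4/1000 * r^2 * (2/3)^j := by ring
        have e7 : 4/1000 * r^2 * (2/3)^j ≤ 4/1000 * r^2 * (0.9^j)^2 := by gcongr
        have e8 : 0 ≤ r^2 * (0.9^j)^2 := by positivity
        nlinarith
      have e9 : r * (2/3)^j ≤ r * 0.9^j := by gcongr
      linarith)
    rw [transv_sq_disp] at hn4
    rw [transv_disp] at hn1
    have h5 := ih a (sy hs b a) n' (by rw [sy_dist, dist_comm b a]; linarith) (by
      have := dist_triangle_right a n' q
      linarith)
    have h6 : 2 * (0.08 * 0.9^j * r) / r = 0.16 * 0.9^j := by field_simp; norm_num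
    rw [h6] at hn4
    rw [transv_disp] at hn2
    rw [pow_succ, pow_succ]
    have hx0 : (0:ℝ) < 0.9^j := by positivity
    have hx1 : (0.9:ℝ)^j ≤ 1/2 := hj9.trans (by norm_num)
    set x := (0.9:ℝ)^j
    set D := dist n' ((sy hs b * sy hs a) n')
    set D0 := dist (sy hs a q) (sy hs b q)
    set W := dist (sy hs a n') (sy hs (sy hs b a) n')
    have e1 : (2 - 0.16 * x) * (2^j * D) ≤ (2 - 1.6 * x) * (2.56 * r) := by
      have : 2^j * ((2 - 0.16 * x) * D) ≤ 2^j * W := by gcongr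
      linarith
    have e2 : (2 - 1.6 * x) * (2.56 * r) ≤ (2 - 1.44 * x) * (1 - 0.08 * x) * (2.56 * r) := by
      gcongr
      nlinarith
    have e3 : 2 * (2^j * D) ≤ (2 - 1.44 * x) * (2.56 * r) := by
      have h7 : 0 < 1 - 0.08 * x := by linarith
      have : (1 - 0.08 * x) * (2 * (2^j * D)) ≤ (1 - 0.08 * x) * ((2 - 1.44 * x) * (2.56 * r)) := by
        linarith
      exact le_of_mul_le_mul_left this h7
    have e4 : 2^j * D0 ≤ 2^j * D := by gcongr
    linarith

lemma sy_lipschitz (hs : PointSymmetric X) : ∃ C r1 : ℝ, 1 ≤ C ∧ 0 < r1 ∧ ∀ a b q : X, dist a b ≤ r1 → dist a q ≤ r1 →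
    dist (sy hs a q) (sy hs b q) ≤ C * dist a b := by
  obtain ⟨r0, hr0, hF0⟩ := exists_flat (X := X) hs (η := 1/2000) (by norm_num)
  set r := r0/10 with hrr
  have hr : 0 < r := by positivity
  have hF : FlatB X (1/2000) (10*r) := fun t ht ht' => hF0 t ht (by rw [hrr] at ht'; linarith)
  refine ⟨10240, r/256000, by norm_num, by positivity, fun a b q hab haq => ?_⟩
  rcases eq_or_lt_of_le (dist_nonneg (x := a) (y := b)) with h0 | h0
  · rw [dist_eq_zero.1 h0.symm]; simp
  have h1 : (2:ℝ)^8 ≤ (r/1000) / dist a b := by rw [le_div_iff₀ h0]; linarith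
  obtain ⟨j, hj1, hj2⟩ := exists_nat_pow_near (le_trans (by norm_num) h1) (one_lt_two (α := ℝ))
  have hj : 8 ≤ j := by
    have := h1.trans_lt hj2
    have := (pow_lt_pow_iff_right₀ (one_lt_two (α := ℝ))).1 this
    omega
  rw [le_div_iff₀ h0] at hj1
  rw [div_lt_iff₀ h0] at hj2
  have h3 := refined_lip hs hr hF j hj a b q hj1 (by
    have : 0 < r * (2/3)^j := by positivity
    linarith)
  have h4 : (2 - 1.6 * 0.9^j) * (2.56 * r) ≤ 2 * (2.56 * r) := by
    gcongr
    have : (0:ℝ) < 0.9^j := by positivity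
    linarith
  rw [pow_succ] at hj2
  have h5 : (2:ℝ)^j * dist (sy hs a q) (sy hs b q) ≤ 2^j * (10240 * dist a b) := by
    linarith
  exact le_of_mul_le_mul_left h5 (by positivity)

end Lip
end BooleanModel
set_option autoImplicit false
namespace BooleanModel
section LocMid
variable {X : Type*} [MetricSpace X] [ProperSpace X] [PreconnectedSpace X]

lemma newtonOn {f : X → ℝ} {L : ℝ} (hL : 0 ≤ L) (y : X) (hf : ContinuousOn f (closedBall y (L * f y))) (hf0 : ∀ p, 0 ≤ f p)
    (step : ∀ p, dist p y + L * f p ≤ L * f y → ∃ m, dist p m ≤ L / 2 * f p ∧ f m ≤ f p / 2) :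
    ∃ n, f n = 0 ∧ dist n y ≤ L * f y := by
  set K := closedBall y (L * f y) ∩ (fun p => dist p y + L * f p) ⁻¹' (Iic (L * f y))
  have hKc : IsCompact K := by
    apply (isCompact_closedBall y (L * f y)).of_isClosed_subset _ inter_subset_left
    exact ContinuousOn.preimage_isClosed_of_isClosed (by fun_prop) isClosed_closedBall isClosed_Iic
  obtain ⟨p, hp, hmin⟩ := hKc.exists_isMinOn ⟨y, by simp [K, mul_nonneg hL (hf0 y)]⟩ (hf.mono inter_subset_left)
  have hp' : dist p y + L * f p ≤ L * f y := hp.2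
  obtain ⟨m, hm1, hm2⟩ := step p hp'
  have hm' : dist m y + L * f m ≤ L * f y := by
    have := dist_triangle m p y
    rw [dist_comm m p] at this
    nlinarith
  have hm : m ∈ K := by
    refine ⟨?_, hm'⟩
    have := mul_nonneg hL (hf0 m)
    rw [mem_closedBall]; linarith
  have := hmin hm
  have h3 : f p ≤ f m := this
  have h4 := hf0 p
  have h5 : f p = 0 := by linarith
  refine ⟨p, h5, ?_⟩
  rw [h5] at hp'; linarith

lemma local_mid (hs : PointSymmetric X) : ∃ r2 > 0, ∀ x w : X, dist x w ≤ r2 → ∃ n, sy hs n x = w := by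
  obtain ⟨C, r1, hC, hr1, hlip⟩ := sy_lipschitz hs
  obtain ⟨r0, hr0, hF⟩ := exists_flat (X := X) hs (η := 1/100) (by norm_num)
  set r := min (r1/4) (r0/2) with hrdef
  have hr : 0 < r := by positivity
  have hrr1 : r ≤ r1/4 := min_le_left _ _
  have hrr0 : r ≤ r0/2 := min_le_right _ _
  set r2 := r / (144 * C^3) with hr2def
  have hC0 : 0 < C := by linarith
  have hr2 : 0 < r2 := by positivity
  have hr2e : 144 * C^3 * r2 = r := by rw [hr2def]; field_simp
  have hC2 : C ≤ C^2 := by nlinarith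
  have hC3 : C^2 ≤ C^3 := by nlinarith
  have hCr2 : 144 * (C * r2) ≤ r := by
    rw [← hr2e]; nlinarith
  have hr2r : 144 * r2 ≤ r := by nlinarith
  refine ⟨r2, hr2, fun x w hxw => ?_⟩
  have hfx : dist (sy hs x x) w = dist x w := by rw [sy_self]
  have hcont : ContinuousOn (fun n => dist (sy hs n x) w) (closedBall x r1) := by
    have : ContinuousOn (fun n => sy hs n x) (closedBall x r1) := by
      rw [Metric.continuousOn_iff]
      intro b hb ε hε
      refine ⟨min r1 (ε / C), by positivity, fun a ha hab => ?_⟩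
      have h1 : dist a b < r1 := hab.trans_le (min_le_left _ _)
      have h2 : dist a b < ε / C := hab.trans_le (min_le_right _ _)
      rw [lt_div_iff₀ hC0] at h2
      have := hlip a b x h1.le ha
      linarith
    fun_prop
  obtain ⟨n, hn, -⟩ := newtonOn (f := fun n => dist (sy hs n x) w) (L := 4 * C) (by positivity) x
    (hcont.mono (closedBall_subset_closedBall (by
      simp only [hfx]
      have : 4 * C * dist x w ≤ 4 * C * r2 := by gcongr
      linarith))) (fun p => dist_nonneg) (by
    intro n hn
    simp only [hfx] at hn
    set ρ := dist (sy hs n x) w with hρ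
    have hρ0 : 0 ≤ ρ := dist_nonneg
    have hnx0 : 0 ≤ dist n x := dist_nonneg
    have hxwC : C * dist x w ≤ C * r2 := by gcongr
    have hCρ : C * ρ ≤ C * r2 := by nlinarith
    have hρr : ρ ≤ r2 := le_of_mul_le_mul_left hCρ hC0
    have hnx : dist n x ≤ 4 * (C * r2) := by nlinarith
    rcases eq_or_lt_of_le hρ0 with h0 | h0
    · exact ⟨n, by rw [← h0]; simp, by rw [← hρ, ← h0]; simp⟩
    set y := sy hs n x with hy
    have hny : dist n y = dist n x := (sy_isSym hs n).dist_center x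
    obtain ⟨m, γ, hm, hmd⟩ := (hF ρ h0 (by linarith) y).1 w le_rfl
    have hmγ : γ = sy hs m := sym_unique hs hm (sy_isSym hs m)
    rw [hmγ] at hmd
    have hym : dist y m ≤ ρ := by
      have h1 := sy_dist hs m y
      have h2 := dist_triangle_right y (sy hs m y) w
      rw [dist_comm m y] at h1
      linarith
    have hθ : ∀ q, dist y q ≤ r1 → dist q ((sy hs m * sy hs y) q) ≤ C * ρ := by
      intro q hq
      rw [transv_disp]
      have := hlip y m q (by linarith) hq
      nlinarith
    have hθ2 : ∀ q, dist n q ≤ 2*r → dist q ((sy hs m * sy hs y) q) ≤ C * ρ := by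
      intro q hq
      apply hθ
      have := dist_triangle_left y q n
      linarith
    obtain ⟨n2, hn2, hn2d⟩ := fixed_point hs hr (η := 1/100) (ε := 1/100) (by norm_num) (by norm_num) (by norm_num)
      (by norm_num) (fun t ht ht' => hF t ht (by linarith)) (sy_isSym hs n) (sy hs m * sy hs y) (by
        intro q hq
        have := hθ2 q hq
        linarith)
    have hnd := hθ2 n (by simp; positivity)
    have hn2n : dist n2 n ≤ 2 * (C * ρ) := by linarith
    refine ⟨n2, by rw [dist_comm]; linarith, ?_⟩
    have hfix : ((sy hs m * sy hs y) * sy hs n * sy hs n2) n2 = n2 := by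
      rw [IsometryEquiv.mul_apply, sy_self, IsometryEquiv.mul_apply, hn2]
    have hn2x : dist n2 x ≤ 6 * (C * r2) := by
      have := dist_triangle n2 n x
      linarith
    have hE := ext_disp hs ((sy hs m * sy hs y) * sy hs n * sy hs n2) n2 hr (S := 3 * C^2 * ρ) (by
      intro q hq
      rw [IsometryEquiv.mul_apply, IsometryEquiv.mul_apply]
      set q' := sy hs n2 q with hq'
      have hq'd : dist n2 q' = dist n2 q := (sy_isSym hs n2).dist_center q
      have hqq : q = sy hs n2 q' := by rw [hq', sy_sy]
      have e1 := hlip n2 n q' (by linarith) (by linarith)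
      rw [← hqq] at e1
      have e2 := hθ (sy hs n q') (by
        have h1 := dist_triangle_left y (sy hs n q') n
        rw [hny, (sy_isSym hs n).dist_center] at h1
        have h2 := dist_triangle_left n q' n2
        linarith)
      have e3 := dist_triangle q (sy hs n q') ((sy hs m * sy hs y) (sy hs n q'))
      have e4 : C * dist n2 n ≤ C * (2 * (C * ρ)) := by gcongr
      nlinarith) (sy hs n2 x) (by rw [(sy_isSym hs n2).dist_center]; linarith)
    rw [hfix, dist_self, (sy_isSym hs n2).dist_center] at hE
    simp only [IsometryEquiv.mul_apply, sy_sy] at hE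
    rw [← hy, sy_self] at hE
    have e5 := dist_triangle (sy hs n2 x) (sy hs m y) w
    have e6 : 2 * (dist n2 x / r) * (3 * C^2 * ρ) ≤ 2 * (6 * (C * r2) / r) * (3 * C^2 * ρ) := by gcongr
    have e7 : 2 * (6 * (C * r2) / r) * (3 * C^2 * ρ) = ρ/4 := by
      rw [← hr2e]; field_simp; norm_num
    change dist (sy hs n2 x) w ≤ ρ/2
    linarith)
  exact ⟨n, dist_eq_zero.1 hn⟩

end LocMid
end BooleanModel
set_option autoImplicit false
namespace BooleanModel
section Birkhoff
variable {X : Type*} [MetricSpace X] [ProperSpace X] [PreconnectedSpace X]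

lemma mid_contr0 (hs : PointSymmetric X) {n n' u v u' v' : X} (h : sy hs n u = v) (h' : sy hs n' u' = v') :
    dist n n' ≤ (dist u u' + dist v v') / 2 := by
  have h1 := KL (sy_isSym hs n) (sy_isSym hs n') u
  have h2 := dist_triangle (sy hs n u) (sy hs n' u') (sy hs n' u)
  rw [iso_dist, h, h', dist_comm u' u] at h2
  rw [h] at h1
  linarith

/-- midpoint, where it exists -/
def mid (hs : PointSymmetric X) (u v : X) : X :=
  open Classical in if h : ∃ n, sy hs n u = v then h.choose else u

lemma sy_mid_of (hs : PointSymmetric X) {u v : X} (h : ∃ n, sy hs n u = v) : sy hs (mid hs u v) u = v := by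
  unfold mid; rw [dif_pos h]; exact h.choose_spec

/-- chains in connected spaces -/
lemma exists_chain (x y : X) {h : ℝ} (hh : 0 < h) :
    ∃ (N : ℕ) (q : ℕ → X), q 0 = x ∧ (∀ i, N ≤ i → q i = y) ∧ ∀ i, dist (q i) (q (i+1)) ≤ h := by
  set R : Set X := {z | ∃ (N : ℕ) (q : ℕ → X), q 0 = x ∧ (∀ i, N ≤ i → q i = z) ∧ ∀ i, dist (q i) (q (i+1)) ≤ h}
  have hx : x ∈ R := ⟨0, fun _ => x, rfl, fun _ _ => rfl, fun _ => by simp [hh.le]⟩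
  have hstep : ∀ z ∈ R, ∀ w, dist z w ≤ h → w ∈ R := by
    rintro z ⟨N, q, h0, h1, h2⟩ w hw
    refine ⟨N+1, fun i => if i ≤ N then q i else w, by simp [h0], fun i hi => by simp; omega, fun i => ?_⟩
    rcases lt_trichotomy i N with hi | hi | hi
    · simp only [hi.le, if_true, show i + 1 ≤ N by omega]; exact h2 i
    · subst hi; simpa [h1 i le_rfl] using hw
    · simp [show ¬ i ≤ N by omega, show ¬ i + 1 ≤ N by omega, hh.le]
  have hcl : IsClopen R := by
    constructor
    · refine isClosed_of_closure_subset fun w hw => ?_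
      obtain ⟨z, hz, hzw⟩ := Metric.mem_closure_iff.1 hw h hh
      exact hstep z hz w (by rw [dist_comm]; exact hzw.le)
    · rw [Metric.isOpen_iff]
      intro z hz
      exact ⟨h, hh, fun w hw => hstep z hz w (by rw [dist_comm]; exact (mem_ball.1 hw).le)⟩
  have := hcl.eq_univ ⟨x, hx⟩
  have hy : y ∈ R := by rw [this]; trivial
  exact hy

/-- one step of curve shortening -/
def bstep (hs : PointSymmetric X) (K : ℕ) (q : ℕ → X) (i : ℕ) : X :=
  if i = 0 ∨ K ≤ i then q i else mid hs (q (i-1)) (q (i+1))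

lemma global_mid (hs : PointSymmetric X) (x y : X) : ∃ n, sy hs n x = y := by
  obtain ⟨r2, hr2, hloc⟩ := local_mid hs
  set h := r2/2 with hh
  have hh0 : 0 < h := by positivity
  obtain ⟨N0, q0, hq0, hqN, hqd⟩ := exists_chain x y hh0
  set N := N0 + 1
  set K := 2 * N with hK
  have hK2 : 2 ≤ K := by omega
  let Q : ℕ → ℕ → X := fun t => (bstep hs K)^[t] q0
  have hQs : ∀ t, Q (t+1) = bstep hs K (Q t) := fun t => Function.iterate_succ_apply' _ _ _
  have hQ0 : ∀ t, Q t 0 = x := by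
    intro t
    induction t with
    | zero => exact hq0
    | succ t ih => rw [hQs]; simp [bstep, ih]
  have hQK : ∀ t i, K ≤ i → Q t i = y := by
    intro t i hi
    induction t with
    | zero => exact hqN i (by omega)
    | succ t ih => rw [hQs]; simp [bstep, hi, ih]
  -- every point is a midpoint of something 
  have hdd : ∀ t, (∀ i, dist (Q t i) (Q t (i+1)) ≤ h) → ∀ i, 0 < i → i < K →
      sy hs (Q (t+1) i) (Q t (i-1)) = Q t (i+1) := by
    intro t ht i hi hiK
    rw [hQs]
    simp only [bstep, show ¬ (i = 0 ∨ K ≤ i) by omega, if_false]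
    apply sy_mid_of
    apply hloc
    have h1 := ht (i-1)
    have h2 := ht i
    rw [show i - 1 + 1 = i by omega] at h1
    have := dist_triangle (Q t (i-1)) (Q t i) (Q t (i+1))
    linarith
  have hst : ∀ t i, dist (Q t i) (Q t (i+1)) ≤ h := by
    intro t
    induction t with
    | zero => exact hqd
    | succ t ih =>
      intro i
      have hm := hdd t ih
      by_cases hiK : K ≤ i
      · rw [hQK _ _ hiK, hQK _ _ (by omega)]; simp [hh0.le]
      · push Not at hiK
        have i1 := ih i
        have i2 := ih (i+1)
        have tr := dist_triangle (Q t i) (Q t (i+1)) (Q t (i+1+1))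
        rcases Nat.eq_zero_or_pos i with h0 | h0
        · subst h0
          have a := hm 1 one_pos (by omega)
          have b := mid_contr0 hs (sy_self hs x) a
          simp only [Nat.sub_self, hQ0] at *
          rw [dist_self] at b
          simp only [zero_add] at *
          norm_num at *
          linarith
        · have i0 := ih (i-1)
          rw [show i - 1 + 1 = i by omega] at i0
          have tr2 := dist_triangle (Q t (i-1)) (Q t i) (Q t (i+1))
          by_cases h1 : K ≤ i + 1
          · have a := hm i h0 hiK
            rw [hQK _ _ h1] at a ⊢
            rw [hQK t _ h1] at tr2 i1
            have b := mid_contr0 hs a (sy_self hs y)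
            rw [dist_self] at b
            linarith
          · have a := hm i h0 hiK
            have b := hm (i+1) (by omega) (by omega)
            have c := mid_contr0 hs a b
            rw [show i + 1 - 1 = i by omega] at c
            linarith
  have hm : ∀ t i, 0 < i → i < K → sy hs (Q (t+1) i) (Q t (i-1)) = Q t (i+1) := fun t => hdd t (hst t)
  have hK0 : (2:ℝ) ≤ K := by exact_mod_cast hK2
  set lam : ℝ := 1 - 1/(2*K^2) with hlam
  have hlam1 : lam < 1 := by rw [hlam]; have : (0:ℝ) < 1/(2*K^2) := by positivity
                             linarith
  have hlam0 : 0 ≤ lam := by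
    have : (1:ℝ)/(2*K^2) ≤ 1 := by rw [div_le_one (by positivity)]; nlinarith
    linarith
  have he : ∀ t i, i ≤ K → dist (Q t i) (Q (t+1) i) ≤ 2 * h * lam^t * (2*K^2 - i^2) := by
    intro t
    induction t with
    | zero =>
      intro i hi
      have hi' : (i:ℝ) ≤ K := by exact_mod_cast hi
      have hi0 : (0:ℝ) ≤ i := by positivity
      have hw : 1 ≤ (2*K^2 - i^2 : ℝ) := by nlinarith
      have : dist (Q 0 i) (Q (0+1) i) ≤ 2 * h := by
        by_cases hc : i = 0 ∨ K ≤ i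
        · rcases hc with rfl | hc
          · rw [hQ0, hQ0]; simp; positivity
          · rw [hQK _ _ hc, hQK _ _ hc]; simp; positivity
        · push Not at hc
          have a := hm 0 i (by omega) hc.2
          have b := mid_contr0 hs a (sy_self hs (Q 0 i))
          have h1 := hst 0 (i-1)
          rw [show i - 1 + 1 = i by omega] at h1
          have h2 := hst 0 i
          rw [dist_comm] at h2
          rw [dist_comm]
          linarith
      simp only [pow_zero, mul_one]
      nlinarith
    | succ t ih =>
      intro i hi
      have hi' : (i:ℝ) ≤ K := by exact_mod_cast hi
      have hi0 : (0:ℝ) ≤ i := by positivity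
      have hw : 1 ≤ (2*K^2 - i^2 : ℝ) := by nlinarith
      have hrhs : 0 ≤ 2 * h * lam^(t+1) * (2*K^2 - i^2 : ℝ) := by
        have : 0 ≤ lam^(t+1) := by positivity
        positivity
      by_cases hc : i = 0 ∨ K ≤ i
      · rcases hc with rfl | hc
        · rw [hQ0, hQ0]; simpa using hrhs
        · rw [hQK _ _ hc, hQK _ _ hc]; simpa using hrhs
      · push Not at hc
        have a := hm t i (by omega) hc.2
        have b := hm (t+1) i (by omega) hc.2
        have c := mid_contr0 hs a b
        have d1 := ih (i-1) (by omega)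
        have d2 := ih (i+1) (by omega)
        have e1 : ((i-1:ℕ):ℝ) = i - 1 := by rw [Nat.cast_sub (by omega)]; simp
        rw [e1] at d1
        push_cast at d2
        have e2 : (2*K^2 - i^2 - 1 : ℝ) ≤ lam * (2*K^2 - i^2) := by
          rw [hlam, sub_mul, one_mul]
          have : (1:ℝ)/(2*K^2) * (2*K^2 - i^2) ≤ 1 := by
            rw [div_mul_eq_mul_div, div_le_one (by positivity)]
            nlinarith
          linarith
        have hp : 0 ≤ 2 * h * lam^t := by positivity
        have e3 := mul_le_mul_of_nonneg_left e2 hp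
        rw [pow_succ]
        nlinarith
  have hcs : ∀ i, ∃ p, Filter.Tendsto (fun t => Q t i) Filter.atTop (nhds p) := by
    intro i
    by_cases hi : i ≤ K
    · apply cauchySeq_tendsto_of_complete
      apply cauchySeq_of_le_geometric lam (2 * h * (2*K^2 - i^2)) hlam1
      intro t
      have := he t i hi
      linarith
    · refine ⟨y, ?_⟩
      have : (fun t => Q t i) = fun _ => y := by ext t; exact hQK t i (by omega)
      rw [this]; exact tendsto_const_nhds
  choose p hp using hcs
  have hp0 : p 0 = x := tendsto_nhds_unique (hp 0) (by simp only [hQ0]; exact tendsto_const_nhds)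
  have hpK : p K = y := tendsto_nhds_unique (hp K) (by simp only [hQK _ K le_rfl]; exact tendsto_const_nhds)
  have hpd : ∀ i, dist (p i) (p (i+1)) ≤ h := fun i =>
    le_of_tendsto' ((hp i).dist (hp (i+1))) (fun t => hst t i)
  have hpm : ∀ i, 0 < i → i < K → sy hs (p i) (p (i-1)) = p (i+1) := by
    intro i hi hiK
    obtain ⟨n, hn⟩ := hloc (p (i-1)) (p (i+1)) (by
      have h1 := hpd (i-1)
      have h2 := hpd i
      rw [show i - 1 + 1 = i by omega] at h1
      have := dist_triangle (p (i-1)) (p i) (p (i+1))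
      linarith)
    have h1 : Filter.Tendsto (fun t => dist (Q (t+1) i) n) Filter.atTop (nhds 0) := by
      have h2 : Filter.Tendsto (fun t => (dist (Q t (i-1)) (p (i-1)) + dist (Q t (i+1)) (p (i+1)))/2) Filter.atTop (nhds 0) := by
        have := (((hp (i-1)).dist (tendsto_const_nhds (x := p (i-1)))).add
          ((hp (i+1)).dist (tendsto_const_nhds (x := p (i+1))))).div_const 2
        simpa using this
      exact squeeze_zero (fun t => dist_nonneg) (fun t => mid_contr0 hs (hm t i hi hiK) hn) h2
    have h3 := (tendsto_iff_dist_tendsto_zero.2 h1)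
    have h4 := (hp i).comp (Filter.tendsto_add_atTop_nat 1)
    rw [tendsto_nhds_unique h4 h3, hn]
  have key : ∀ j i, j ≤ i → i + j ≤ K → sy hs (p i) (p (i-j)) = p (i+j) := by
    intro j
    induction j using Nat.strong_induction_on with
    | _ j ih =>
      intro i hji hiK
      match j, ih with
      | 0, _ => simp [sy_self]
      | 1, _ => exact hpm i (by omega) (by omega)
      | (j+2), ih =>
        have a := ih (j+1) (by omega) i (by omega) (by omega)
        have b := ih j (by omega) i (by omega) (by omega)
        have c := hpm (i+(j+1)) (by omega) (by omega)
        have d := hpm (i-(j+1)) (by omega) (by omega)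
        rw [show i + (j+1) - 1 = i + j by omega, show i + (j+1) + 1 = i + (j+2) by omega, ← a, ← b,
          sy_conj] at c
        rw [← c]
        rw [show i - (j+1) + 1 = i - j by omega, show i - (j+1) - 1 = i - (j+2) by omega] at d
        rw [← d, sy_sy]
  refine ⟨p N, ?_⟩
  have := key N N le_rfl (by omega)
  rw [Nat.sub_self, hp0, ← two_mul, ← hK, hpK] at this
  exact this

lemma sy_mid (hs : PointSymmetric X) (u v : X) : sy hs (mid hs u v) u = v := sy_mid_of hs (global_mid hs u v)

lemma sy_mid' (hs : PointSymmetric X) (u v : X) : sy hs (mid hs u v) v = u := by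
  have := sy_sy hs (mid hs u v) u
  rwa [sy_mid] at this

lemma dist_mid_left (hs : PointSymmetric X) (u v : X) : dist u (mid hs u v) = dist u v / 2 := by
  have := sy_dist hs (mid hs u v) u
  rw [sy_mid, dist_comm (mid hs u v)] at this
  linarith

lemma dist_mid_right (hs : PointSymmetric X) (u v : X) : dist v (mid hs u v) = dist u v / 2 := by
  have := sy_dist hs (mid hs u v) v
  rw [sy_mid', dist_comm (mid hs u v), dist_comm v u] at this
  linarith

lemma mid_conv (hs : PointSymmetric X) (u v z : X) : 2 * dist (mid hs u v) z ≤ dist u z + dist v z := by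
  have := (sy_isSym hs (mid hs u v)).conv u z
  rwa [sy_mid] at this

end Birkhoff
end BooleanModel
set_option autoImplicit false
namespace BooleanModel
section Conn
variable {X : Type*} [MetricSpace X] [ProperSpace X] [PreconnectedSpace X]

lemma midclosed_preconnected (hs : PointSymmetric X) {K : Set X} (hK : IsCompact K)
    (hm : ∀ u ∈ K, ∀ v ∈ K, mid hs u v ∈ K) : IsPreconnected K := by
  rw [isPreconnected_closed_iff]
  intro t t' ht ht' hsub h1 h2
  have hc1 : IsCompact (K ∩ t) := hK.inter_right ht
  have hc2 : IsCompact (K ∩ t') := hK.inter_right ht'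
  obtain ⟨⟨x, y⟩, hxy, hmin⟩ := (hc1.prod hc2).exists_isMinOn (h1.prod h2)
    (f := fun p : X × X => dist p.1 p.2) (by fun_prop)
  have hmin' : ∀ a ∈ K ∩ t, ∀ b ∈ K ∩ t', dist x y ≤ dist a b := fun a ha b hb =>
    hmin (show (a, b) ∈ (K ∩ t) ×ˢ (K ∩ t') from ⟨ha, hb⟩)
  have hx : x ∈ K ∩ t := hxy.1
  have hy : y ∈ K ∩ t' := hxy.2
  have hmk := hm x hx.1 y hy.1
  have hd : dist x y = 0 := by
    have h0 := dist_nonneg (x := x) (y := y)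
    rcases hsub hmk with h | h
    · have := hmin' _ ⟨hmk, h⟩ y hy
      rw [dist_comm (mid hs x y) y, dist_mid_right] at this
      linarith
    · have := hmin' x hx _ ⟨hmk, h⟩
      rw [dist_mid_left] at this
      linarith
  have : x = y := dist_eq_zero.1 hd
  exact ⟨x, hx.1, hx.2, this ▸ hy.2⟩

lemma mid_mem_closedBall (hs : PointSymmetric X) {u v z : X} {r : ℝ} (hu : u ∈ closedBall z r)
    (hv : v ∈ closedBall z r) : mid hs u v ∈ closedBall z r := by
  rw [mem_closedBall] at *
  have := mid_conv hs u v z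
  linarith

lemma closedBall_preconnected (hs : PointSymmetric X) (z : X) (r : ℝ) :
    IsPreconnected (closedBall z r) :=
  midclosed_preconnected hs (isCompact_closedBall z r)
    fun _ hu _ hv => mid_mem_closedBall hs hu hv

/-- discrete geodesic chain -/
def gch (hs : PointSymmetric X) (a b : X) : ℕ → X
  | 0 => a
  | 1 => b
  | (n+2) => sy hs (gch hs a b (n+1)) (gch hs a b n)

lemma gch_refl (hs : PointSymmetric X) (a b : X) (j : ℕ) : ∀ i,
    (i ≤ j → gch hs a b (j+i) = sy hs (gch hs a b j) (gch hs a b (j-i))) ∧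
    (i + 1 ≤ j → gch hs a b (j+(i+1)) = sy hs (gch hs a b j) (gch hs a b (j-(i+1)))) := by
  have key : ∀ n, gch hs a b (n+2) = sy hs (gch hs a b (n+1)) (gch hs a b n) := fun n => by rw [gch]
  intro i
  induction i with
  | zero =>
    refine ⟨fun _ => by simp [sy_self], fun h => ?_⟩
    obtain ⟨k, rfl⟩ : ∃ k, j = k + 1 := ⟨j - 1, by omega⟩
    simpa using key k
  | succ i ih =>
    refine ⟨ih.2, fun h => ?_⟩
    obtain ⟨k, rfl⟩ : ∃ k, j = k + (i + 2) := ⟨j - (i+2), by omega⟩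
    have e1 := ih.1 (by omega)
    have e2 := ih.2 (by omega)
    have t1 : k + (i+2) - i = k + 2 := by omega
    have t2 : k + (i+2) - (i+1) = k + 1 := by omega
    have t3 : k + (i+2) - (i+1+1) = k := by omega
    rw [t1] at e1
    rw [t2] at e2
    rw [t3]
    have e3 : gch hs a b k = sy hs (gch hs a b (k+1)) (gch hs a b (k+2)) := by
      rw [key k, sy_sy]
    rw [e3, ← sy_conj, ← e1, ← e2]
    have := key (k + (i+2) + i)
    exact this

lemma gch_double (hs : PointSymmetric X) (a b : X) (j : ℕ) :
    gch hs a b (2*j) = sy hs (gch hs a b j) a := by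
  have := (gch_refl hs a b j j).1 le_rfl
  simp only [Nat.sub_self] at this
  rw [two_mul, this]; rfl

lemma gch_step (hs : PointSymmetric X) (a b : X) (i : ℕ) :
    dist (gch hs a b i) (gch hs a b (i+1)) = dist a b := by
  induction i with
  | zero => rfl
  | succ i ih =>
    have : gch hs a b (i+2) = sy hs (gch hs a b (i+1)) (gch hs a b i) := by rw [gch]
    rw [this, (sy_isSym hs _).dist_center, dist_comm, ih]

lemma gch_dist_le (hs : PointSymmetric X) (a b : X) (i : ℕ) :
    dist a (gch hs a b i) ≤ i * dist a b := by
  induction i with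
  | zero => simp [gch]
  | succ i ih =>
    have := dist_triangle a (gch hs a b i) (gch hs a b (i+1))
    rw [gch_step] at this
    push_cast; linarith

lemma exists_gch (hs : PointSymmetric X) (e : X) (k : ℕ) : ∀ q, ∃ b, gch hs e b (2^k) = q ∧
    dist e b * 2^k = dist e q := by
  induction k with
  | zero => intro q; exact ⟨q, rfl, by simp⟩
  | succ k ih =>
    intro q
    obtain ⟨b, hb, hd⟩ := ih (mid hs e q)
    refine ⟨b, ?_, ?_⟩
    · rw [pow_succ, mul_comm, gch_double, hb, sy_mid]
    · rw [pow_succ, ← mul_assoc, hd, dist_mid_left]; ring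

lemma convex_seq {f : ℕ → ℝ} (hf : ∀ i, 2 * f (i+1) ≤ f i + f (i+2)) {m : ℕ} (hm : f 0 < f m) :
    ∀ i, m ≤ i → f m ≤ f i := by
  have hstep : ∀ i, m ≤ i → f i ≤ f (i+1) := by
    intro i hi
    by_contra hlt
    push Not at hlt
    have hall : ∀ j, j ≤ i → f (i - j + 1) < f (i - j) := by
      intro j
      induction j with
      | zero => intro _; simpa using hlt
      | succ j ih =>
        intro hj
        have h1 := ih (by omega)
        have h2 := hf (i - (j+1))
        have e1 : i - (j+1) + 1 = i - j := by omega
        have e2 : i - (j+1) + 2 = i - j + 1 := by omega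
        rw [e1, e2] at h2
        rw [e1]; linarith
    have hanti : ∀ j, j ≤ i → f j ≤ f 0 := by
      intro j
      induction j with
      | zero => intro _; exact le_rfl
      | succ j ih =>
        intro hj
        have h1 := ih (by omega)
        have h2 := hall (i - j) (by omega)
        have e1 : i - (i - j) = j := by omega
        rw [e1] at h2; linarith
    linarith [hanti m hi]
  intro i hi
  induction i, hi using Nat.le_induction with
  | base => exact le_rfl
  | succ i hi ih => exact ih.trans (hstep i hi)

lemma outward (hs : PointSymmetric X) {e q : X} {J : Set X} (hJ : J.Finite)
    (he : ∀ z ∈ J, dist z e ≤ 1) (hq : ∀ z ∈ J, 1 < dist z q) {τ : ℝ} (hτ : 0 < τ) :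
    ∃ A : Set X, IsPreconnected A ∧ q ∈ A ∧ sy hs q e ∈ A ∧ (∀ z ∈ J, Disjoint A (closedBall z 1)) ∧
      A ⊆ closedBall e (2 * dist e q + τ) := by
  obtain ⟨τ', hτ', hτ1, hτ2⟩ : ∃ τ' > 0, τ' ≤ τ ∧ ∀ z ∈ J, 1 + τ' < dist z q := by
    rcases J.eq_empty_or_nonempty with rfl | hne
    · exact ⟨τ, hτ, le_rfl, by simp⟩
    · obtain ⟨z0, hz0, hmin⟩ := hJ.exists_minimalFor (fun z => dist z q) J hne
      have hmin' : ∀ z ∈ J, dist z0 q ≤ dist z q := fun z hz => by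
        rcases le_total (dist z0 q) (dist z q) with h | h
        · exact h
        · exact hmin hz h
      have := hq z0 hz0
      refine ⟨min τ ((dist z0 q - 1)/2), lt_min hτ (by linarith), min_le_left _ _, fun z hz => ?_⟩
      have := hmin' z hz
      have := min_le_right τ ((dist z0 q - 1)/2)
      linarith
  obtain ⟨k, hk⟩ : ∃ k : ℕ, dist e q < τ' * 2^k := by
    obtain ⟨k, hk⟩ := pow_unbounded_of_one_lt (dist e q / τ') (one_lt_two)
    exact ⟨k, by rwa [div_lt_iff₀' hτ'] at hk⟩
  obtain ⟨b, hb, hbd⟩ := exists_gch hs e k q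
  have hstep : dist e b ≤ τ' := by
    have : dist e b * 2^k < τ' * 2^k := by rw [hbd]; exact hk
    exact (lt_of_mul_lt_mul_right this (by positivity)).le
  set p := gch hs e b with hp
  have hconv : ∀ z i, 2 * dist z (p (i+1)) ≤ dist z (p i) + dist z (p (i+2)) := by
    intro z i
    have h1 : p (i+2) = sy hs (p (i+1)) (p i) := by rw [hp, gch]
    have := (sy_isSym hs (p (i+1))).conv (p i) z
    rw [← h1] at this
    simpa [dist_comm] using this
  refine ⟨⋃ n ∈ Icc (2^k) (2*2^k), closedBall (p n) τ', ?_, ?_, ?_, ?_, ?_⟩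
  · refine IsPreconnected.biUnion_of_chain ordConnected_Icc
      (fun n _ => closedBall_preconnected hs _ _) ?_
    intro n _ _
    refine ⟨p n, by simp [hτ'.le], ?_⟩
    rw [mem_closedBall, Nat.succ_eq_succ, Nat.succ_eq_add_one, gch_step]; exact hstep
  · simp only [mem_iUnion]
    exact ⟨2^k, ⟨le_rfl, by omega⟩, by rw [hb]; simp [hτ'.le]⟩
  · simp only [mem_iUnion]
    refine ⟨2*2^k, ⟨by omega, le_rfl⟩, by rw [hp, gch_double, ← hp, hb]; simp [hτ'.le]⟩
  · intro z hz
    rw [Set.disjoint_left]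
    intro x hx hxz
    simp only [mem_iUnion] at hx
    obtain ⟨n, hn, hx⟩ := hx
    have h1 := convex_seq (f := fun i => dist z (p i)) (hconv z) (m := 2^k)
      (by simp only [hb]; exact (he z hz).trans_lt (hq z hz)) n hn.1
    simp only [hb] at h1
    have h2 := hτ2 z hz
    rw [mem_closedBall] at hx hxz
    have h3 := dist_triangle z x (p n)
    rw [dist_comm z x] at h3
    linarith
  · intro x hx
    simp only [mem_iUnion] at hx
    obtain ⟨n, hn, hx⟩ := hx
    rw [mem_closedBall] at *
    have h1 := gch_dist_le hs e b n
    have h2 : (n:ℝ) * dist e b ≤ 2 * dist e q := by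
      rw [← hbd]
      have : (n:ℝ) ≤ 2 * 2^k := by exact_mod_cast hn.2
      nlinarith [dist_nonneg (x := e) (y := b)]
    have h3 := dist_triangle x (p n) e
    rw [dist_comm (p n) e] at h3
    linarith

end Conn
end BooleanModel
set_option autoImplicit false
namespace BooleanModel
section FinComp
variable {X : Type*} [MetricSpace X] [ProperSpace X] [PreconnectedSpace X]

lemma mem_occupied {s : Config X} {y : X} : y ∈ occupied s ↔ ∃ x ∈ s.1, dist x y ≤ 1 := by
  simp [occupied, dist_comm]

lemma mem_vacant {s : Config X} {y : X} : y ∈ vacant s ↔ ∀ x ∈ s.1, 1 < dist x y := by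
  simp [vacant, mem_occupied]

/-- points of the configuration at distance at most 1 -/
def near (s : Config X) (p : X) : Set X := {z ∈ s.1 | dist z p ≤ 1}

lemma near_finite (s : Config X) (p : X) : (near s p).Finite :=
  (s.2 _ (isBounded_closedBall (x := p) (r := 1))).subset fun _ hz => ⟨hz.1, hz.2⟩

lemma near_local (s : Config X) (p : X) : ∃ ε > 0, ∀ z ∈ s.1, dist z p ≤ 1 + ε → z ∈ near s p := by
  set T := {z ∈ s.1 ∩ closedBall p 2 | 1 < dist z p}
  have hT : T.Finite := (s.2 _ (isBounded_closedBall (x := p) (r := 2))).subset fun _ hz => hz.1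
  rcases T.eq_empty_or_nonempty with he | hne
  · refine ⟨1, one_pos, fun z hz hd => ⟨hz, ?_⟩⟩
    by_contra h
    push Not at h
    have : z ∈ T := ⟨⟨hz, by rw [mem_closedBall]; linarith⟩, h⟩
    simp [he] at this
  · obtain ⟨z0, hz0, hmin⟩ := Set.exists_min_image T (fun z => dist z p) hT hne
    have h1 : 1 < dist z0 p := hz0.2
    have h2 : dist z0 p ≤ 2 := hz0.1.2
    refine ⟨(dist z0 p - 1)/2, by linarith, fun z hz hd => ⟨hz, ?_⟩⟩
    by_contra h
    push Not at h
    have : z ∈ T := ⟨⟨hz, by rw [mem_closedBall]; linarith⟩, h⟩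
    have := hmin z this
    linarith

/-- accumulation points of components -/
def Acc (S : Set X) (p : X) : Prop :=
  ∀ ε > 0, {C ∈ comps S | (C ∩ closedBall p ε).Nonempty}.Infinite

lemma exists_acc {S K : Set X} (hK : IsCompact K) (h : {C ∈ comps S | (C ∩ K).Nonempty}.Infinite) :
    ∃ p ∈ K, Acc S p := by
  by_contra hcon
  push Not at hcon
  apply h
  have : ∀ p ∈ K, ∃ ε > 0, {C ∈ comps S | (C ∩ closedBall p ε).Nonempty}.Finite := by
    intro p hp
    have := hcon p hp
    unfold Acc at this
    push Not at this
    simpa [Set.not_infinite] using this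
  choose! ε hε hf using this
  obtain ⟨t, htK, hcov⟩ := hK.elim_nhds_subcover (fun p => closedBall p (ε p))
    (fun p hp => closedBall_mem_nhds p (hε p hp))
  refine (t.finite_toSet.biUnion (fun p hp => hf p (htK p hp))).subset ?_
  rintro C ⟨hC, x, hxC, hxK⟩
  obtain ⟨p, hp, hx⟩ := mem_iUnion₂.1 (hcov hxK)
  exact mem_iUnion₂.2 ⟨p, hp, hC, x, hxC, hx⟩

lemma comps_eq {S C A : Set X} (hC : C ∈ comps S) (hA : IsPreconnected A) (hAS : A ⊆ S) {x : X} (hxC : x ∈ C)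
    (hxA : x ∈ A) : A ⊆ C := by
  obtain ⟨y, hy, rfl⟩ := hC
  rw [connectedComponentIn_eq hxC]
  exact hA.subset_connectedComponentIn hxA hAS

lemma comps_unique {S C C' : Set X} (hC : C ∈ comps S) (hC' : C' ∈ comps S) {x : X} (hx : x ∈ C) (hx' : x ∈ C') :
    C = C' := by
  obtain ⟨y, hy, rfl⟩ := hC
  obtain ⟨y', hy', rfl⟩ := hC'
  rw [connectedComponentIn_eq hx, connectedComponentIn_eq hx']

lemma comps_sub {S C : Set X} (hC : C ∈ comps S) : C ⊆ S := by
  obtain ⟨y, hy, rfl⟩ := hC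
  exact connectedComponentIn_subset _ _

lemma comps_nonempty {S C : Set X} (hC : C ∈ comps S) : C.Nonempty := by
  obtain ⟨y, hy, rfl⟩ := hC
  exact ⟨y, mem_connectedComponentIn hy⟩

lemma comps_preconnected {S C : Set X} (hC : C ∈ comps S) : IsPreconnected C := by
  obtain ⟨y, hy, rfl⟩ := hC
  exact isPreconnected_connectedComponentIn

lemma nearest_double (hs : PointSymmetric X) {L : Set X} (hm : ∀ u ∈ L, ∀ v ∈ L, mid hs u v ∈ L)
    {e q : X} (he : e ∈ L) (hn : ∀ l ∈ L, dist q e ≤ dist q l) (l : X) (hl : l ∈ L) :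
    2 * dist q e ≤ dist (sy hs q e) l := by
  have h1 := KL (sy_isSym hs q) (sy_isSym hs (mid hs e l)) e
  rw [sy_mid] at h1
  have := hn _ (hm e he l hl)
  linarith

lemma escape (hs : PointSymmetric X) (s : Config X) {p : X} {δ : ℝ} (hδ : 0 < δ)
    (hloc : ∀ z ∈ s.1, dist z p ≤ 1 + 6*δ → z ∈ near s p) {L : Set X}
    (hL : L = {x | ∀ z ∈ near s p, dist z x ≤ 1}) (hne : (near s p).Nonempty)
    {C : Set X} (hC : C ∈ comps (vacant s)) (n : ℕ) :
    ∀ q ∈ C, dist p q ≤ δ + infDist q L → infDist q L ≤ 2*δ → δ ≤ 2^n * infDist q L →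
      ∃ r ∈ C, dist p r ≤ 3*δ ∧ δ ≤ infDist r L := by
  have hpL : p ∈ L := by rw [hL]; exact fun z hz => hz.2
  have hLc : IsCompact L := by
    obtain ⟨z, hz⟩ := hne
    refine (isCompact_closedBall z 1).of_isClosed_subset ?_ ?_
    · rw [hL]
      have : {x | ∀ z ∈ near s p, dist z x ≤ 1} = ⋂ z ∈ near s p, closedBall z 1 := by
        ext x; simp [dist_comm]
      rw [this]
      exact isClosed_biInter fun _ _ => isClosed_closedBall
    · intro x hx
      rw [hL] at hx
      rw [mem_closedBall, dist_comm]
      exact hx z hz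
  have hLm : ∀ u ∈ L, ∀ v ∈ L, mid hs u v ∈ L := by
    intro u hu v hv
    rw [hL] at *
    intro z hz
    have := mid_conv hs u v z
    have h1 := hu z hz
    have h2 := hv z hz
    rw [dist_comm] at h1 h2 ⊢
    linarith
  induction n with
  | zero =>
    intro q hq h1 h2 h3
    exact ⟨q, hq, by linarith, by linarith⟩
  | succ n ih =>
    intro q hq h1 h2 h3
    rcases le_or_gt δ (infDist q L) with h | h
    · exact ⟨q, hq, by linarith, h⟩
    obtain ⟨e, heL, hed⟩ := hLc.exists_infDist_eq_dist ⟨p, hpL⟩ q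
    have hn : ∀ l ∈ L, dist q e ≤ dist q l := fun l hl => by
      rw [← hed]; exact infDist_le_dist_of_mem hl
    have heL' : ∀ z ∈ near s p, dist z e ≤ 1 := by rw [hL] at heL; exact heL
    have hqV := comps_sub hC hq
    have hqV' : ∀ z ∈ near s p, 1 < dist z q := fun z hz => mem_vacant.1 hqV z hz.1
    obtain ⟨A, hA, hqA, hqA', hdis, hAs⟩ := outward hs (near_finite s p) heL' hqV' hδ
    have hpe : dist p e ≤ δ + 2 * infDist q L := by
      have := dist_triangle p q e
      linarith
    have hAV : A ⊆ vacant s := by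
      intro x hx
      rw [mem_vacant]
      intro z hz
      by_contra hzx
      push Not at hzx
      have hx1 := hAs hx
      rw [mem_closedBall, dist_comm e q, ← hed] at hx1
      have hzp : z ∈ near s p := by
        apply hloc z hz
        have t1 := dist_triangle4 z x e p
        rw [dist_comm e p] at t1
        linarith
      exact Set.disjoint_left.1 (hdis z hzp) hx (by rw [mem_closedBall, dist_comm]; exact hzx)
    have hq' : sy hs q e ∈ C := comps_eq hC hA hAV hq hqA hqA'
    have hd1 : 2 * infDist q L ≤ infDist (sy hs q e) L := by
      rw [le_infDist ⟨p, hpL⟩]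
      intro l hl
      rw [hed]
      exact nearest_double hs hLm heL hn l hl
    have hd2 : infDist (sy hs q e) L ≤ 2 * infDist q L := by
      have h5 := infDist_le_dist_of_mem (x := sy hs q e) heL
      rw [dist_comm, sy_dist, ← hed] at h5
      exact h5
    refine ih _ hq' ?_ (by linarith) ?_
    · have t := dist_triangle p q (sy hs q e)
      rw [(sy_isSym hs q).dist_center, ← hed] at t
      linarith
    · calc δ ≤ _ := h3
        _ = 2^n * (2 * infDist q L) := by ring
        _ ≤ _ := by gcongr

lemma no_acc (hs : PointSymmetric X) (s : Config X) (n : ℕ) : ∀ p, (near s p).ncard = n →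
    ¬ Acc (vacant s) p := by
  induction n using Nat.strong_induction_on with
  | _ n ih =>
  intro p hpn hacc
  obtain ⟨ε, hε, hloc⟩ := near_local s p
  rcases (near s p).eq_empty_or_nonempty with he | hne
  · have hsub : closedBall p (ε/2) ⊆ vacant s := by
      intro x hx
      rw [mem_vacant]
      intro z hz
      by_contra h
      push Not at h
      have : z ∈ near s p := hloc z hz (by
        have := dist_triangle z x p
        rw [mem_closedBall] at hx
        linarith)
      simp [he] at this
    apply hacc (ε/2) (by positivity)
    refine Set.Subsingleton.finite ?_
    rintro C ⟨hC, x, hx, hxb⟩ C' ⟨hC', x', hx', hxb'⟩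
    have h1 := comps_eq hC (closedBall_preconnected hs p (ε/2)) hsub hx hxb hxb'
    exact comps_unique hC hC' h1 hx'
  · set L := {x | ∀ z ∈ near s p, dist z x ≤ 1} with hL
    set δ := ε/6 with hδ
    have hδ0 : 0 < δ := by positivity
    have hpL : p ∈ L := fun z hz => hz.2
    have hLcl : IsClosed L := by
      have : L = ⋂ z ∈ near s p, closedBall z 1 := by
        ext x; simp [hL, dist_comm]
      rw [this]
      exact isClosed_biInter fun _ _ => isClosed_closedBall
    have hKc : IsCompact {r | dist p r ≤ 3*δ ∧ δ ≤ infDist r L} := by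
      refine (isCompact_closedBall p (3*δ)).of_isClosed_subset ?_ ?_
      · exact (isClosed_le (f := fun r => dist p r) (g := fun _ => 3*δ) (by fun_prop) (by fun_prop)).inter
          (isClosed_le continuous_const (continuous_infDist_pt L))
      · intro x hx
        rw [mem_closedBall, dist_comm]; exact hx.1
    obtain ⟨p', hp', hacc'⟩ := exists_acc (S := vacant s) hKc (by
      refine (hacc δ hδ0).mono ?_
      rintro C ⟨hC, q, hq, hqb⟩
      refine ⟨hC, ?_⟩
      rw [mem_closedBall, dist_comm] at hqb
      have hqL : q ∉ L := by
        intro hqL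
        obtain ⟨z, hz⟩ := hne
        have h1 := mem_vacant.1 (comps_sub hC hq) z hz.1
        have h2 := hqL z hz
        linarith
      have hpos : 0 < infDist q L := (hLcl.notMem_iff_infDist_pos ⟨p, hpL⟩).1 hqL
      obtain ⟨n, hn⟩ : ∃ n : ℕ, δ < 2^n * infDist q L := by
        obtain ⟨n, hn⟩ := pow_unbounded_of_one_lt (δ / infDist q L) (one_lt_two)
        exact ⟨n, by rwa [div_lt_iff₀ hpos] at hn⟩
      have hle := infDist_le_dist_of_mem (x := q) hpL
      rw [dist_comm] at hle
      obtain ⟨r, hr, h1, h2⟩ := escape hs s hδ0 (by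
        intro z hz h; exact hloc z hz (by rw [hδ] at h; linarith)) hL hne hC n q hq (by linarith) (by linarith) hn.le
      exact ⟨r, hr, h1, h2⟩)
    have hsub : near s p' ⊆ near s p := by
      intro z hz
      apply hloc z hz.1
      have := dist_triangle z p' p
      have h2 := hz.2
      have h3 := hp'.1
      rw [dist_comm] at h3
      linarith
    refine ih _ ?_ p' rfl hacc'
    rw [← hpn]
    refine Set.ncard_lt_ncard ⟨hsub, fun hsup => ?_⟩ (near_finite s p)
    have : p' ∈ L := fun z hz => (hsup hz).2
    have := infDist_zero_of_mem this
    have := hp'.2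
    linarith

lemma vacant_finite_comps (hs : PointSymmetric X) (s : Config X) {Q : Set X} (hQ : IsBounded Q) :
    {C ∈ comps (vacant s) | (C ∩ Q).Nonempty}.Finite := by
  by_contra h
  obtain ⟨p, _, hp⟩ := exists_acc (S := vacant s) (hQ.isCompact_closure) (by
    refine Set.Infinite.mono ?_ h
    rintro C ⟨hC, x, hx⟩
    exact ⟨hC, x, hx.1, subset_closure hx.2⟩)
  exact no_acc hs s _ p rfl hp

end FinComp
end BooleanModel
set_option autoImplicit false
namespace BooleanModel
section Count
variable {X : Type*} [MetricSpace X] [ProperSpace X] [PreconnectedSpace X]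

lemma comps_closed {S C : Set X} (hC : C ∈ comps S) {y : X} (hy : y ∈ S) (hyc : y ∈ closure C) : y ∈ C := by
  have h1 : IsPreconnected (insert y C) :=
    (comps_preconnected hC).subset_closure (subset_insert _ _)
      (insert_subset hyc subset_closure)
  obtain ⟨x, hx⟩ := comps_nonempty hC
  exact comps_eq hC h1 (insert_subset hy (comps_sub hC)) hx (mem_insert_of_mem _ hx) (mem_insert _ _)

lemma comps_mem {S : Set X} {x : X} (hx : x ∈ S) : connectedComponentIn S x ∈ comps S := ⟨x, hx, rfl⟩

lemma exists_ucomp {S S' D Q : Set X} (hSS : S ⊆ S') (hD : S' \ S ⊆ D) (hDc : IsClosed D)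
    (hQ : IsBounded Q) (hDQ : D ⊆ interior Q)
    (hop : ∀ C ∈ comps S, ∀ x ∈ C, ∃ ε > 0, ball x ε ∩ S ⊆ C)
    (hfin : {C ∈ comps S | (C ∩ Q).Nonempty}.Finite) {C' : Set X} (hC' : C' ∈ ucomps S') :
    ∃ C ∈ ucomps S, C ⊆ C' := by
  by_contra hcon
  push Not at hcon
  have hbd : ∀ C ∈ comps S, C ⊆ C' → IsBounded C := by
    intro C hC hCC
    by_contra h
    exact hcon C ⟨hC, h⟩ hCC
  have hmeet : ∀ C ∈ comps S, C ⊆ C' → (C ∩ Q).Nonempty := by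
    intro C hC hCC
    by_contra hav
    rw [Set.not_nonempty_iff_eq_empty] at hav
    have hav' : ∀ x ∈ C, x ∉ Q := fun x hx hq => by
      have : x ∈ C ∩ Q := ⟨hx, hq⟩
      simp [hav] at this
    apply hC'.2
    refine ((hbd C hC hCC).closure).subset ?_
    choose! ε hε hεC using hop C hC
    set u := (⋃ x ∈ C, ball x (ε x)) ∩ Dᶜ with hu
    have huo : IsOpen u := (isOpen_biUnion fun _ _ => isOpen_ball).inter hDc.isOpen_compl
    have huC : u ∩ S' ⊆ C := by
      rintro y ⟨⟨hy1, hy2⟩, hyS⟩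
      obtain ⟨x, hx, hyx⟩ := mem_iUnion₂.1 hy1
      have : y ∈ S := by
        by_contra hn
        exact hy2 (hD ⟨hyS, hn⟩)
      exact hεC x hx ⟨hyx, this⟩
    have hCu : C ⊆ u := by
      intro x hx
      refine ⟨mem_iUnion₂.2 ⟨x, hx, mem_ball_self (hε x hx)⟩, fun hxD => ?_⟩
      exact hav' x hx (interior_subset (hDQ hxD))
    have hcov : C' ⊆ u ∪ (closure C)ᶜ := by
      intro y hy
      by_cases hyc : y ∈ closure C
      · left
        by_cases hyS : y ∈ S
        · exact hCu (comps_closed hC hyS hyc)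
        · exfalso
          have hyD := hDQ (hD ⟨comps_sub hC'.1 hy, hyS⟩)
          obtain ⟨w, hw1, hw2⟩ := mem_closure_iff.1 hyc _ isOpen_interior hyD
          exact hav' w hw2 (interior_subset hw1)
      · right; exact hyc
    intro y hy
    by_contra hyc
    obtain ⟨x, hx⟩ := comps_nonempty hC
    obtain ⟨w, hw, hw1, hw2⟩ := comps_preconnected hC'.1 u (closure C)ᶜ huo isClosed_closure.isOpen_compl hcov
      ⟨x, hCC hx, hCu hx⟩ ⟨y, hy, hyc⟩
    exact hw2 (subset_closure (huC ⟨hw1, comps_sub hC'.1 hw⟩))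
  apply hC'.2
  set F := {C ∈ comps S | C ⊆ C'}
  have hF : F.Finite := hfin.subset fun C hC => ⟨hC.1, hmeet C hC.1 hC.2⟩
  have hb1 : IsBounded (⋃ C ∈ F, C) := (isBounded_biUnion hF).2 fun C hC => hbd C hC.1 hC.2
  refine (hb1.union (hQ.subset (hDQ.trans interior_subset))).subset ?_
  intro y hy
  by_cases hyS : y ∈ S
  · left
    refine mem_iUnion₂.2 ⟨connectedComponentIn S y, ⟨comps_mem hyS, ?_⟩, mem_connectedComponentIn hyS⟩
    exact comps_eq hC'.1 isPreconnected_connectedComponentIn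
      ((connectedComponentIn_subset _ _).trans hSS) hy (mem_connectedComponentIn hyS)
  · right; exact hD ⟨comps_sub hC'.1 hy, hyS⟩

lemma count_lt {S S' D Q : Set X} (hSS : S ⊆ S') (hD : S' \ S ⊆ D) (hDc : IsClosed D)
    (hQ : IsBounded Q) (hDQ : D ⊆ interior Q)
    (hop : ∀ C ∈ comps S, ∀ x ∈ C, ∃ ε > 0, ball x ε ∩ S ⊆ C)
    (hfin : {C ∈ comps S | (C ∩ Q).Nonempty}.Finite) {C1 C2 A : Set X} (h1 : C1 ∈ ucomps S)
    (h2 : C2 ∈ ucomps S) (h12 : C1 ≠ C2) (hA : IsPreconnected A) (hAS : A ⊆ S')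
    (hA1 : (A ∩ C1).Nonempty) (hA2 : (A ∩ C2).Nonempty) (hk : numUcomps S ≠ ⊤) :
    numUcomps S' < numUcomps S := by
  have hex : ∀ C ∈ comps S, ∃ C' ∈ comps S', C ⊆ C' := by
    intro C hC
    obtain ⟨x, hx⟩ := comps_nonempty hC
    have hxS := hSS (comps_sub hC hx)
    exact ⟨_, comps_mem hxS, comps_eq (comps_mem hxS) (comps_preconnected hC) ((comps_sub hC).trans hSS)
      (mem_connectedComponentIn hxS) hx⟩
  choose! f hf hfC using hex
  have hmerge : f C1 = f C2 := by
    obtain ⟨x, hxA, hx⟩ := hA1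
    obtain ⟨y, hyA, hy⟩ := hA2
    have := comps_eq (hf C1 h1.1) hA hAS (hfC C1 h1.1 hx) hxA hyA
    exact comps_unique (hf C1 h1.1) (hf C2 h2.1) this (hfC C2 h2.1 hy)
  have hsub : ucomps S' ⊆ f '' (ucomps S \ {C2}) := by
    intro C' hC'
    obtain ⟨C, hC, hCC⟩ := exists_ucomp hSS hD hDc hQ hDQ hop hfin hC'
    have hfe : f C = C' := by
      obtain ⟨x, hx⟩ := comps_nonempty hC.1
      exact comps_unique (hf C hC.1) hC'.1 (hfC C hC.1 hx) (hCC hx)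
    by_cases hcc : C = C2
    · exact ⟨C1, ⟨h1, h12⟩, by rw [hmerge, ← hcc, hfe]⟩
    · exact ⟨C, ⟨hC, hcc⟩, hfe⟩
  have hfin' : (ucomps S).Finite := Set.encard_ne_top_iff.1 hk
  calc numUcomps S' ≤ (f '' (ucomps S \ {C2})).encard := Set.encard_le_encard hsub
    _ ≤ (ucomps S \ {C2}).encard := Set.encard_image_le _ _
    _ < numUcomps S := (hfin'.subset sdiff_subset).encard_lt_encard
        ⟨sdiff_subset, fun h => (h h2).2 rfl⟩

end Count

section Apply
variable {X : Type*} [MetricSpace X] [ProperSpace X] [PreconnectedSpace X]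

lemma vacant_isOpen (s : Config X) : IsOpen (vacant s) := by
  rw [Metric.isOpen_iff]
  intro x hx
  obtain ⟨ε, hε, h⟩ := near_local s x
  refine ⟨ε, hε, fun y hy => ?_⟩
  rw [mem_vacant] at *
  intro z hz
  by_contra hzy
  push Not at hzy
  have hz' := (h z hz (by
    have := dist_triangle z y x
    rw [mem_ball] at hy
    linarith)).2
  linarith [hx z hz]

lemma vacant_hop (hs : PointSymmetric X) (s : Config X) : ∀ C ∈ comps (vacant s), ∀ x ∈ C,
    ∃ ε > 0, ball x ε ∩ vacant s ⊆ C := by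
  intro C hC x hx
  obtain ⟨ε, hε, h⟩ := Metric.isOpen_iff.1 (vacant_isOpen s) x (comps_sub hC hx)
  refine ⟨ε/2, by positivity, fun y hy => ?_⟩
  have hsub : closedBall x (ε/2) ⊆ vacant s := (closedBall_subset_ball (by linarith)).trans h
  exact comps_eq hC (closedBall_preconnected hs x (ε/2)) hsub hx (mem_closedBall_self (by positivity))
    (ball_subset_closedBall hy.1)

lemma ball_sub_occ {s : Config X} {z : X} (hz : z ∈ s.1) : closedBall z 1 ⊆ occupied s :=
  subset_biUnion_of_mem (u := fun z => closedBall z 1) hz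

lemma occ_hop (hs : PointSymmetric X) (s : Config X) : ∀ C ∈ comps (occupied s), ∀ x ∈ C,
    ∃ ε > 0, ball x ε ∩ occupied s ⊆ C := by
  intro C hC x hx
  obtain ⟨ε, hε, h⟩ := near_local s x
  refine ⟨ε, hε, fun y hy => ?_⟩
  obtain ⟨z, hz, hzy⟩ := mem_occupied.1 hy.2
  have hz' := (h z hz (by
    have := dist_triangle z y x
    have h2 := hy.1
    rw [mem_ball] at h2
    linarith)).2
  exact comps_eq hC (closedBall_preconnected hs z 1) (ball_sub_occ hz) hx
    (by rwa [mem_closedBall, dist_comm]) (by rwa [mem_closedBall, dist_comm])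

lemma occ_finite_comps (hs : PointSymmetric X) (s : Config X) {Q : Set X} (hQ : IsBounded Q) :
    {C ∈ comps (occupied s) | (C ∩ Q).Nonempty}.Finite := by
  refine ((s.2 _ (hQ.cthickening (δ := 1))).image (fun z => connectedComponentIn (occupied s) z)).subset ?_
  rintro C ⟨hC, x, hx, hxQ⟩
  obtain ⟨z, hz, hzx⟩ := mem_occupied.1 (comps_sub hC hx)
  refine ⟨z, ⟨hz, mem_cthickening_of_dist_le z x 1 Q hxQ hzx⟩, ?_⟩
  have hzC : z ∈ C := comps_eq hC (closedBall_preconnected hs z 1) (ball_sub_occ hz) hx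
    (by rwa [mem_closedBall, dist_comm]) (mem_closedBall_self zero_le_one)
  exact comps_unique (comps_mem (comps_sub hC hzC)) hC (mem_connectedComponentIn (comps_sub hC hzC)) hzC

/-- abstract merging statement for `occupied` -/
lemma occ_count_lt (hs : PointSymmetric X) (s s' : Config X) (hss : s.1 ⊆ s'.1) {o : X} {R : ℝ}
    (hR : s'.1 \ s.1 ⊆ closedBall o R) {x y : X} (hx : x ∈ s.1) (hy : y ∈ s.1)
    (hux : ¬ IsBounded (connectedComponentIn (occupied s) x))
    (huy : ¬ IsBounded (connectedComponentIn (occupied s) y))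
    (hxy : connectedComponentIn (occupied s) x ≠ connectedComponentIn (occupied s) y)
    (hm : connectedComponentIn (occupied s') x = connectedComponentIn (occupied s') y)
    (hk : numUcomps (occupied s) ≠ ⊤) : numUcomps (occupied s') < numUcomps (occupied s) := by
  have hxo : x ∈ occupied s := ball_sub_occ hx (mem_closedBall_self zero_le_one)
  have hyo : y ∈ occupied s := ball_sub_occ hy (mem_closedBall_self zero_le_one)
  have hxo' : x ∈ occupied s' := ball_sub_occ (hss hx) (mem_closedBall_self zero_le_one)
  have hyo' : y ∈ occupied s' := ball_sub_occ (hss hy) (mem_closedBall_self zero_le_one)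
  refine count_lt (D := closedBall o (R+1)) (Q := closedBall o (R+2)) ?_ ?_ isClosed_closedBall
    isBounded_closedBall ?_ (occ_hop hs s) (occ_finite_comps hs s isBounded_closedBall)
    (C1 := connectedComponentIn (occupied s) x) (C2 := connectedComponentIn (occupied s) y)
    (A := connectedComponentIn (occupied s') x)
    ⟨comps_mem hxo, hux⟩ ⟨comps_mem hyo, huy⟩ hxy isPreconnected_connectedComponentIn
    (connectedComponentIn_subset _ _) ⟨x, mem_connectedComponentIn hxo', mem_connectedComponentIn hxo⟩
    ⟨y, hm ▸ mem_connectedComponentIn hyo', mem_connectedComponentIn hyo⟩ hk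
  · exact biUnion_subset_biUnion_left hss
  · rintro w ⟨hw, hw'⟩
    obtain ⟨z, hz, hzw⟩ := mem_occupied.1 hw
    have hz2 : z ∉ s.1 := fun h => hw' (mem_occupied.2 ⟨z, h, hzw⟩)
    have h3 := hR ⟨hz, hz2⟩
    rw [mem_closedBall] at *
    have := dist_triangle w z o
    rw [dist_comm w z] at this
    linarith
  · exact (closedBall_subset_ball (by linarith)).trans ball_subset_interior_closedBall

lemma vac_count_lt (hs : PointSymmetric X) (s s' : Config X) (hss : s'.1 ⊆ s.1) {o : X} {R : ℝ}
    (hR : s.1 \ s'.1 ⊆ closedBall o R) {x y : X} (hx : x ∈ vacant s) (hy : y ∈ vacant s)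
    (hux : ¬ IsBounded (connectedComponentIn (vacant s) x))
    (huy : ¬ IsBounded (connectedComponentIn (vacant s) y))
    (hxy : connectedComponentIn (vacant s) x ≠ connectedComponentIn (vacant s) y)
    (hm : connectedComponentIn (vacant s') x = connectedComponentIn (vacant s') y)
    (hk : numUcomps (vacant s) ≠ ⊤) : numUcomps (vacant s') < numUcomps (vacant s) := by
  have hsub : vacant s ⊆ vacant s' := fun w hw => by
    rw [mem_vacant] at *
    exact fun z hz => hw z (hss hz)
  refine count_lt (D := closedBall o (R+1)) (Q := closedBall o (R+2)) hsub ?_ isClosed_closedBall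
    isBounded_closedBall ?_ (vacant_hop hs s) (vacant_finite_comps hs s isBounded_closedBall)
    (C1 := connectedComponentIn (vacant s) x) (C2 := connectedComponentIn (vacant s) y)
    (A := connectedComponentIn (vacant s') x)
    ⟨comps_mem hx, hux⟩ ⟨comps_mem hy, huy⟩ hxy isPreconnected_connectedComponentIn
    (connectedComponentIn_subset _ _) ⟨x, mem_connectedComponentIn (hsub hx), mem_connectedComponentIn hx⟩
    ⟨y, hm ▸ mem_connectedComponentIn (hsub hy), mem_connectedComponentIn hy⟩ hk
  · rintro w ⟨hw, hw'⟩
    rw [mem_vacant] at hw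
    have : w ∈ occupied s := by simpa [vacant] using hw'
    obtain ⟨z, hz, hzw⟩ := mem_occupied.1 this
    have hz2 : z ∉ s'.1 := fun h => by linarith [hw z h]
    have h3 := hR ⟨hz, hz2⟩
    rw [mem_closedBall] at *
    have := dist_triangle w z o
    rw [dist_comm w z] at this
    linarith
  · exact (closedBall_subset_ball (by linarith)).trans ball_subset_interior_closedBall

end Apply
end BooleanModel
set_option autoImplicit false
namespace BooleanModel
section Cover
variable {X : Type*} [MetricSpace X] [ProperSpace X] [PreconnectedSpace X]

/-- a cover of `S` by connected cells -/
structure CellCover {ι : Type*} (S : Set X) (ctr : ι → X) (valid : ι → Prop) (c : ι → Set X) : Prop where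
  pre : ∀ a, valid a → IsPreconnected (c a)
  ne : ∀ a, valid a → (c a).Nonempty
  sub : ∀ a, valid a → c a ⊆ S
  bd : ∀ a, valid a → c a ⊆ closedBall (ctr a) 2
  loc : ∀ x ∈ S, ∃ ε > 0, ∀ y ∈ S, dist y x < ε → ∃ a b, valid a ∧ valid b ∧ x ∈ c a ∧ y ∈ c b ∧
    (c a ∩ c b).Nonempty

/-- adjacency of cells -/
def CellAdj {ι : Type*} (valid : ι → Prop) (c : ι → Set X) (a b : ι) : Prop :=
  valid a ∧ valid b ∧ (c a ∩ c b).Nonempty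

variable {ι : Type*} {S : Set X} {ctr : ι → X} {valid : ι → Prop} {c : ι → Set X}

lemma CellAdj.symm {a b : ι} (h : CellAdj valid c a b) : CellAdj valid c b a :=
  ⟨h.2.1, h.1, by rw [inter_comm]; exact h.2.2⟩

lemma rtg_valid {a b : ι} (ha : valid a) (h : Relation.ReflTransGen (CellAdj valid c) a b) : valid b := by
  induction h with
  | refl => exact ha
  | tail _ h _ => exact h.2.1

lemma CellCover.cover (h : CellCover S ctr valid c) {x : X} (hx : x ∈ S) : ∃ a, valid a ∧ x ∈ c a := by
  obtain ⟨ε, hε, h1⟩ := h.loc x hx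
  obtain ⟨a, b, ha, -, hxa, -⟩ := h1 x hx (by simpa using hε)
  exact ⟨a, ha, hxa⟩

lemma CellCover.comp_eq (h : CellCover S ctr valid c) {a : ι} (ha : valid a) {x : X} (hx : x ∈ c a) :
    connectedComponentIn S x = ⋃ b ∈ {b | Relation.ReflTransGen (CellAdj valid c) a b}, c b := by
  have hxS : x ∈ S := h.sub a ha hx
  set U := ⋃ b ∈ {b | Relation.ReflTransGen (CellAdj valid c) a b}, c b with hU
  have hxU : x ∈ U := mem_iUnion₂.2 ⟨a, Relation.ReflTransGen.refl, hx⟩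
  apply subset_antisymm
  · choose! ε hε hloc using h.loc
    set u := ⋃ z ∈ U, ball z (ε z)
    set v := ⋃ z ∈ S \ U, ball z (ε z)
    have hUS : U ⊆ S := iUnion₂_subset fun b hb => h.sub b (rtg_valid ha hb)
    have huU : ∀ y ∈ S, y ∈ u → y ∈ U := by
      intro y hy hyu
      obtain ⟨z, hz, hyz⟩ := mem_iUnion₂.1 hyu
      obtain ⟨b, hb, hzb⟩ := mem_iUnion₂.1 hz
      obtain ⟨a', b', ha', hb', hza, hyb, hab⟩ := hloc z (hUS hz) y hy hyz
      refine mem_iUnion₂.2 ⟨b', ?_, hyb⟩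
      exact (Relation.ReflTransGen.tail hb ⟨rtg_valid ha hb, ha', z, hzb, hza⟩).tail ⟨ha', hb', hab⟩
    have hvU : ∀ y ∈ S, y ∈ v → y ∉ U := by
      intro y hy hyv hyU
      obtain ⟨z, hz, hyz⟩ := mem_iUnion₂.1 hyv
      obtain ⟨b, hb, hyb0⟩ := mem_iUnion₂.1 hyU
      obtain ⟨a', b', ha', hb', hza, hyb, hab⟩ := hloc z hz.1 y hy hyz
      apply hz.2
      refine mem_iUnion₂.2 ⟨a', ?_, hza⟩
      exact (Relation.ReflTransGen.tail hb ⟨rtg_valid ha hb, hb', y, hyb0, hyb⟩).tail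
        (CellAdj.symm ⟨ha', hb', hab⟩)
    intro y hy
    by_contra hyU
    have hyS := connectedComponentIn_subset _ _ hy
    obtain ⟨w, hw, hwu, hwv⟩ := isPreconnected_connectedComponentIn (F := S) (x := x) u v
      (isOpen_biUnion fun _ _ => isOpen_ball) (isOpen_biUnion fun _ _ => isOpen_ball)
      (by
        intro z hz
        have hzS := connectedComponentIn_subset _ _ hz
        by_cases hzU : z ∈ U
        · left; exact mem_iUnion₂.2 ⟨z, hzU, mem_ball_self (hε z hzS)⟩
        · right; exact mem_iUnion₂.2 ⟨z, ⟨hzS, hzU⟩, mem_ball_self (hε z hzS)⟩)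
      ⟨x, mem_connectedComponentIn hxS, mem_iUnion₂.2 ⟨x, hxU, mem_ball_self (hε x hxS)⟩⟩
      ⟨y, hy, mem_iUnion₂.2 ⟨y, ⟨hyS, hyU⟩, mem_ball_self (hε y hyS)⟩⟩
    have hwS := connectedComponentIn_subset _ _ hw
    exact hvU w hwS hwv (huU w hwS hwu)
  · refine iUnion₂_subset fun b hb => ?_
    induction hb with
    | refl => exact (h.pre a ha).subset_connectedComponentIn hx (h.sub a ha)
    | tail hb hbc ih =>
      obtain ⟨-, hv, z, hz1, hz2⟩ := hbc
      exact comps_eq (comps_mem hxS) (h.pre _ hv) (h.sub _ hv) (ih hz1) hz2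

lemma CellCover.le_num (h : CellCover S ctr valid c) (o : X) (k : ℕ) :
    (k : ℕ∞) ≤ numUcomps S ↔ ∃ f : Fin k → ι, (∀ i, valid (f i)) ∧
      (∀ i j, i ≠ j → ¬ Relation.ReflTransGen (CellAdj valid c) (f i) (f j)) ∧
      ∀ i, ∀ R : ℕ, ∃ b, Relation.ReflTransGen (CellAdj valid c) (f i) b ∧ (R:ℝ) < dist o (ctr b) := by
  constructor
  · intro hk
    obtain ⟨F, hF, hFc⟩ := Set.exists_subset_encard_eq hk
    have hFf : F.Finite := Set.finite_of_encard_eq_coe hFc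
    have hFn : F.ncard = k := by rw [Set.ncard, hFc]; rfl
    obtain ⟨e⟩ : Nonempty (Fin k ≃ F) := by
      have : Fintype F := hFf.fintype
      refine ⟨(Fintype.equivFinOfCardEq ?_).symm⟩
      rw [← hFn, ← Nat.card_eq_fintype_card]; rfl
    have hex : ∀ i, ∃ a, valid a ∧ ∃ x, x ∈ c a ∧ (e i : Set X) = connectedComponentIn S x := by
      intro i
      obtain ⟨x, hx, hxe⟩ := (hF (e i).2).1
      obtain ⟨a, ha, hxa⟩ := h.cover hx
      exact ⟨a, ha, x, hxa, hxe⟩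
    choose f hf x hx hxe using hex
    refine ⟨f, hf, ?_, ?_⟩
    · intro i j hij hr
      apply hij
      apply e.injective
      apply Subtype.ext
      have hj : x j ∈ connectedComponentIn S (x i) := by
        rw [h.comp_eq (hf i) (hx i)]
        exact mem_iUnion₂.2 ⟨f j, hr, hx j⟩
      rw [hxe, hxe, connectedComponentIn_eq hj]
    · intro i R
      have hub : ¬ IsBounded (connectedComponentIn S (x i)) := by
        rw [← hxe]; exact (hF (e i).2).2
      by_contra hcon
      push Not at hcon
      apply hub
      refine (isBounded_closedBall (x := o) (r := R + 2)).subset ?_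
      rw [h.comp_eq (hf i) (hx i)]
      refine iUnion₂_subset fun b hb => ?_
      intro y hy
      have h1 := h.bd b (rtg_valid (hf i) hb) hy
      have h2 := hcon b hb
      rw [mem_closedBall] at *
      have := dist_triangle y (ctr b) o
      rw [dist_comm (ctr b) o] at this
      linarith
  · rintro ⟨f, hf, hne, hub⟩
    choose x hx using fun i => h.ne (f i) (hf i)
    have hinj : Injective fun i => connectedComponentIn S (x i) := by
      intro i j hij
      by_contra hne'
      have hmem : x j ∈ connectedComponentIn S (x i) := by
        have : connectedComponentIn S (x i) = connectedComponentIn S (x j) := hij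
        rw [this]; exact mem_connectedComponentIn (h.sub _ (hf j) (hx j))
      rw [h.comp_eq (hf i) (hx i)] at hmem
      obtain ⟨b, hb, hxb⟩ := mem_iUnion₂.1 hmem
      exact hne i j hne' (Relation.ReflTransGen.tail hb ⟨rtg_valid (hf i) hb, hf j, x j, hxb, hx j⟩)
    have hsub : range (fun i => connectedComponentIn S (x i)) ⊆ ucomps S := by
      rintro _ ⟨i, rfl⟩
      refine ⟨comps_mem (h.sub _ (hf i) (hx i)), fun hb => ?_⟩
      obtain ⟨R, hR⟩ := hb.subset_closedBall o
      obtain ⟨n, hn⟩ := exists_nat_gt (R + 2)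
      obtain ⟨b, hb, hd⟩ := hub i n
      obtain ⟨y, hy⟩ := h.ne b (rtg_valid (hf i) hb)
      have h1 := h.bd b (rtg_valid (hf i) hb) hy
      have h2 : y ∈ connectedComponentIn S (x i) := by
        rw [h.comp_eq (hf i) (hx i)]; exact mem_iUnion₂.2 ⟨b, hb, hy⟩
      have h3 := hR h2
      rw [mem_closedBall] at *
      have := dist_triangle o y (ctr b)
      rw [dist_comm o y] at this
      linarith
    calc (k : ℕ∞) = (range (fun i => connectedComponentIn S (x i))).encard := by
          rw [← image_univ, hinj.encard_image]; simp
      _ ≤ _ := Set.encard_le_encard hsub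

end Cover

section Rel
variable {Ω ι : Type*} [MeasurableSpace Ω] [Countable ι]

lemma measurable_rtg {r : Ω → ι → ι → Prop} (hr : ∀ a b, MeasurableSet {w | r w a b}) (a b : ι) :
    MeasurableSet {w | Relation.ReflTransGen (r w) a b} := by
  let it : ℕ → ι → Set Ω := fun n => Nat.rec (fun b => {_w | a = b})
    (fun _ F b => ⋃ c, F c ∩ {w | r w c b}) n
  have hm : ∀ n b, MeasurableSet (it n b) := by
    intro n
    induction n with
    | zero => intro b; exact MeasurableSet.const _
    | succ n ih => intro b; exact MeasurableSet.iUnion fun c => (ih c).inter (hr c b)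
  have : {w | Relation.ReflTransGen (r w) a b} = ⋃ n, it n b := by
    ext w
    simp only [mem_ofPred_eq, mem_iUnion]
    constructor
    · intro h
      induction h with
      | refl => exact ⟨0, rfl⟩
      | tail _ h ih =>
        obtain ⟨n, hn⟩ := ih
        exact ⟨n+1, mem_iUnion.2 ⟨_, hn, h⟩⟩
    · rintro ⟨n, hn⟩
      induction n generalizing b with
      | zero =>
        have : a = b := hn
        rw [this]
      | succ n ih =>
        obtain ⟨c, hc1, hc2⟩ := mem_iUnion.1 hn
        exact (ih c hc1).tail hc2
  rw [this]
  exact MeasurableSet.iUnion fun n => hm n b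

lemma measurable_num {X : Type*} [MetricSpace X] [ProperSpace X] [PreconnectedSpace X]
    {ctr : ι → X} {S : Ω → Set X} {valid : Ω → ι → Prop} {c : Ω → ι → Set X}
    (h : ∀ w, CellCover (S w) ctr (valid w) (c w))
    (hv : ∀ a, MeasurableSet {w | valid w a}) (hr : ∀ a b, MeasurableSet {w | CellAdj (valid w) (c w) a b})
    (o : X) (k : ℕ) : MeasurableSet {w | numUcomps (S w) = k} := by
  have hle : ∀ k : ℕ, MeasurableSet {w | (k : ℕ∞) ≤ numUcomps (S w)} := by
    intro k
    simp only [fun w => (h w).le_num o k]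
    have hR := measurable_rtg hr
    simp only [measurableSet_setOfPred] at hv hR ⊢
    refine Measurable.exists fun f => (Measurable.forall fun i => hv (f i)).and
      ((Measurable.forall fun i => Measurable.forall fun j => Measurable.forall fun _ => (hR _ _).not).and
      (Measurable.forall fun i => Measurable.forall fun R => Measurable.exists fun b =>
        (hR _ _).and measurable_const))
  have : {w | numUcomps (S w) = k} = {w | (k : ℕ∞) ≤ numUcomps (S w)} \ {w | ((k+1 : ℕ) : ℕ∞) ≤ numUcomps (S w)} := by
    ext w
    simp only [mem_ofPred_eq, mem_sdiff, not_le]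
    rw [Nat.cast_add, Nat.cast_one, ENat.lt_add_one_iff (ENat.natCast_ne_top k)]
    constructor
    · intro h; rw [h]; exact ⟨le_rfl, le_rfl⟩
    · rintro ⟨h1, h2⟩; exact le_antisymm h2 h1
  rw [this]
  exact (hle k).diff (hle (k+1))

end Rel
end BooleanModel
set_option autoImplicit false
namespace BooleanModel
section Hit
variable {X : Type*} [MetricSpace X]

/-- configurations hitting `B` -/
def Hit (B : Set X) : Set (Config X) := {s | (s.1 ∩ B).Nonempty}

lemma mem_hit {B : Set X} {s : Config X} : s ∈ Hit B ↔ ∃ x ∈ s.1, x ∈ B := Iff.rfl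

/-- radii -/
def rad (k : ℕ) : ℝ := 1 / ((k:ℝ) + 1)

lemma rad_pos (k : ℕ) : 0 < rad k := by unfold rad; positivity

lemma rad_le (k : ℕ) : rad k ≤ 1 := by
  unfold rad
  rw [div_le_one (by positivity)]
  have : (0:ℝ) ≤ k := by positivity
  linarith

lemma exists_rad {ε : ℝ} (hε : 0 < ε) : ∃ k, rad k < ε := exists_nat_one_div_lt hε

variable [MeasurableSpace X]

lemma measurable_count_eq {B : Set X} (hB : MeasurableSet B) (n : ℕ∞) :
    MeasurableSet {s : Config X | (s.1 ∩ B).encard = n} :=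
  MeasurableSpace.measurableSet_generateFrom ⟨B, n, hB, rfl⟩

lemma measurable_hit {B : Set X} (hB : MeasurableSet B) : MeasurableSet (Hit B) := by
  have := (measurable_count_eq hB 0).compl
  convert this using 1
  ext s
  simp [Hit, Set.nonempty_iff_ne_empty]

variable [ProperSpace X] [Nonempty X] [BorelSpace X]

lemma exists_dense (x : X) {ε : ℝ} (hε : 0 < ε) : ∃ n, dist x (TopologicalSpace.denseSeq X n) < ε :=
  (TopologicalSpace.denseRange_denseSeq X).exists_dist_lt x hε

lemma le_count_iff (s : Config X) (B : Set X) (n : ℕ) : (n : ℕ∞) ≤ (s.1 ∩ B).encard ↔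
    ∃ (k : ℕ) (d : Fin n → ℕ),
      (∀ i j, i ≠ j → Disjoint (ball (TopologicalSpace.denseSeq X (d i)) (rad k))
        (ball (TopologicalSpace.denseSeq X (d j)) (rad k))) ∧
      ∀ i, s ∈ Hit (B ∩ ball (TopologicalSpace.denseSeq X (d i)) (rad k)) := by
  constructor
  · intro h
    obtain ⟨F, hF, hFc⟩ := Set.exists_subset_encard_eq h
    have hFf : F.Finite := Set.finite_of_encard_eq_coe hFc
    have hFn : F.ncard = n := by rw [Set.ncard, hFc]; rfl
    obtain ⟨e⟩ : Nonempty (Fin n ≃ F) := by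
      have : Fintype F := hFf.fintype
      refine ⟨(Fintype.equivFinOfCardEq ?_).symm⟩
      rw [← hFn, ← Nat.card_eq_fintype_card]; rfl
    obtain ⟨ε, hε, hsep⟩ : ∃ ε > 0, ∀ i j, i ≠ j → ε ≤ dist (e i : X) (e j) := by
      have hfin : ∀ p : Fin n × Fin n, ∃ ε > 0, p.1 ≠ p.2 → ε ≤ dist (e p.1 : X) (e p.2) := by
        intro p
        by_cases hp : p.1 = p.2
        · exact ⟨1, one_pos, fun h => absurd hp h⟩
        · refine ⟨dist (e p.1 : X) (e p.2), dist_pos.2 fun h => hp (e.injective (Subtype.ext h)), fun _ => le_rfl⟩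
      choose ε hε h1 using hfin
      rcases isEmpty_or_nonempty (Fin n × Fin n) with hem | hne
      · exact ⟨1, one_pos, fun i j _ => (hem.false (i, j)).elim⟩
      · obtain ⟨p, hp⟩ := Finite.exists_min ε
        exact ⟨ε p, hε p, fun i j hij => (hp (i, j)).trans (h1 (i, j) hij)⟩
    obtain ⟨k, hk⟩ := exists_rad (show 0 < ε/4 by positivity)
    choose d hd using fun i => exists_dense (e i : X) (rad_pos k)
    refine ⟨k, d, fun i j hij => ?_, fun i => ?_⟩
    · rw [Set.disjoint_left]
      intro y hy1 hy2
      rw [mem_ball] at hy1 hy2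
      have h1 := hsep i j hij
      have h2 := hd i
      have h3 := hd j
      have t1 := dist_triangle4 (e i : X) (TopologicalSpace.denseSeq X (d i)) y (TopologicalSpace.denseSeq X (d j))
      have t2 := dist_triangle (e i : X) (TopologicalSpace.denseSeq X (d j)) (e j)
      rw [dist_comm (TopologicalSpace.denseSeq X (d i)) y] at t1
      rw [dist_comm (TopologicalSpace.denseSeq X (d j)) (e j)] at t2
      linarith
    · have := hF (e i).2
      exact ⟨e i, this.1, this.2, hd i⟩
  · rintro ⟨k, d, hdis, hhit⟩
    choose x hx1 hx2 using hhit
    have hinj : Injective x := by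
      intro i j hij
      by_contra hne
      exact Set.disjoint_left.1 (hdis i j hne) (hx2 i).2 (hij ▸ (hx2 j).2)
    calc (n : ℕ∞) = (range x).encard := by
          rw [← image_univ, hinj.encard_image]; simp
      _ ≤ _ := Set.encard_le_encard (by rintro _ ⟨i, rfl⟩; exact ⟨hx1 i, (hx2 i).1⟩)

lemma gen_hit : (Config.instMeasurableSpace : MeasurableSpace (Config X)) =
    MeasurableSpace.generateFrom {A | ∃ B : Set X, MeasurableSet B ∧ IsBounded B ∧ A = Hit B} := by
  apply le_antisymm
  · apply MeasurableSpace.generateFrom_le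
    rintro _ ⟨B, n, hB, rfl⟩
    set m' := MeasurableSpace.generateFrom {A | ∃ B : Set X, MeasurableSet B ∧ IsBounded B ∧ A = Hit B}
    have hle : ∀ n : ℕ, MeasurableSet[m'] {s : Config X | (n : ℕ∞) ≤ (s.1 ∩ B).encard} := by
      intro n
      simp only [le_count_iff]
      have hh : ∀ (d k : ℕ), @Measurable _ _ m' _ (fun s => s ∈ Hit (B ∩ ball (TopologicalSpace.denseSeq X d) (rad k))) := by
        intro d k
        rw [← measurableSet_setOfPred]
        exact MeasurableSpace.measurableSet_generateFrom ⟨_, hB.inter measurableSet_ball,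
          isBounded_ball.subset inter_subset_right, rfl⟩
      rw [measurableSet_setOfPred]
      exact Measurable.exists fun k => Measurable.exists fun d => measurable_const.and
        (Measurable.forall fun i => hh _ _)
    induction n using ENat.recTopCoe with
    | top =>
      have : {s : Config X | (s.1 ∩ B).encard = ⊤} = ⋂ n : ℕ, {s : Config X | (n : ℕ∞) ≤ (s.1 ∩ B).encard} := by
        ext s
        simp only [mem_ofPred_eq, mem_iInter]
        exact ⟨fun h => by simp [h], fun h => ENat.eq_top_iff_forall_ge.2 h⟩
      rw [this]
      exact MeasurableSet.iInter hle
    | coe k =>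
      have : {s : Config X | (s.1 ∩ B).encard = k} = {s | (k : ℕ∞) ≤ (s.1 ∩ B).encard} \
          {s | ((k+1 : ℕ) : ℕ∞) ≤ (s.1 ∩ B).encard} := by
        ext w
        simp only [mem_ofPred_eq, mem_sdiff, not_le]
        rw [Nat.cast_add, Nat.cast_one, ENat.lt_add_one_iff (ENat.natCast_ne_top k)]
        constructor
        · intro h; rw [h]; exact ⟨le_rfl, le_rfl⟩
        · rintro ⟨h1, h2⟩; exact le_antisymm h2 h1
      rw [this]
      exact (hle k).diff (hle (k+1))
  · apply MeasurableSpace.generateFrom_le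
    rintro _ ⟨B, hB, -, rfl⟩
    exact measurable_hit hB

lemma measurable_of_hit {Ω : Type*} [MeasurableSpace Ω] {f : Ω → Config X}
    (h : ∀ B : Set X, MeasurableSet B → MeasurableSet (f ⁻¹' Hit B)) : Measurable f := by
  have : @Measurable _ _ _ (MeasurableSpace.generateFrom {A | ∃ B : Set X, MeasurableSet B ∧ IsBounded B ∧ A = Hit B}) f := by
    apply measurable_generateFrom
    rintro _ ⟨B, hB, -, rfl⟩
    exact h B hB
  rwa [← gen_hit] at this

lemma measurable_mapIso (g : X ≃ᵢ X) : Measurable (Config.mapIso g) := by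
  apply measurable_of_hit
  intro B hB
  have : Config.mapIso g ⁻¹' Hit B = Hit (g ⁻¹' B) := by
    ext s
    constructor
    · rintro ⟨_, ⟨x, hx, rfl⟩, hB⟩; exact ⟨x, hx, hB⟩
    · rintro ⟨x, hx, hB⟩; exact ⟨_, ⟨x, hx, rfl⟩, hB⟩
  rw [this]
  exact measurable_hit (g.continuous.measurable hB)

lemma measurable_restrict {A : Set X} (hA : MeasurableSet A) : Measurable (Config.restrict A) := by
  apply measurable_of_hit
  intro B hB
  have : Config.restrict A ⁻¹' Hit B = Hit (Aᶜ ∩ B) := by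
    ext s
    constructor
    · rintro ⟨x, ⟨hx, hA⟩, hB⟩; exact ⟨x, hx, hA, hB⟩
    · rintro ⟨x, hx, hA, hB⟩; exact ⟨x, ⟨hx, hA⟩, hB⟩
  rw [this]
  exact measurable_hit (hA.compl.inter hB)

lemma measurable_insertPt : Measurable (fun p : Config X × X => Config.insertPt p.2 p.1) := by
  apply measurable_of_hit
  intro B hB
  have : (fun p : Config X × X => Config.insertPt p.2 p.1) ⁻¹' Hit B =
      (Prod.fst ⁻¹' Hit B) ∪ (Prod.snd ⁻¹' B) := by
    ext ⟨s, y⟩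
    simp only [mem_preimage, mem_hit, Config.insertPt, mem_union]
    constructor
    · rintro ⟨x, hx, hxB⟩
      rcases mem_insert_iff.1 hx with rfl | h
      · right; exact hxB
      · left; exact ⟨x, h, hxB⟩
    · rintro (⟨x, hx, hxB⟩ | h)
      · exact ⟨x, mem_insert_of_mem _ hx, hxB⟩
      · exact ⟨y, mem_insert _ _, h⟩
  rw [this]
  exact (measurable_fst (measurable_hit hB)).union (measurable_snd hB)

end Hit

section Cells
variable {X : Type*} [MetricSpace X] [ProperSpace X] [PreconnectedSpace X] [MeasurableSpace X] [BorelSpace X]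
  [Nonempty X]

/-- cell centers -/
def cctr (a : ℕ × ℕ) : X := TopologicalSpace.denseSeq X a.1

lemma vac_cover (hs : PointSymmetric X) (s : Config X) : CellCover (vacant s) (cctr (X := X))
    (fun a => closedBall (cctr a) (rad a.2) ⊆ vacant s) (fun a => closedBall (cctr a) (rad a.2)) where
  pre a _ := closedBall_preconnected hs _ _
  ne a _ := ⟨cctr a, mem_closedBall_self (rad_pos _).le⟩
  sub a h := h
  bd a _ := closedBall_subset_closedBall (by linarith [rad_le a.2])
  loc x hx := by
    obtain ⟨ε, hε, h⟩ := Metric.isOpen_iff.1 (vacant_isOpen s) x hx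
    obtain ⟨k, hk⟩ := exists_rad (show 0 < ε/2 by positivity)
    obtain ⟨n, hn⟩ := exists_dense x (rad_pos k)
    have hv : closedBall (cctr (X := X) (n, k)) (rad k) ⊆ vacant s := by
      intro y hy
      apply h
      rw [mem_closedBall] at hy
      rw [mem_ball]
      have := dist_triangle y (cctr (X := X) (n, k)) x
      rw [dist_comm (cctr (X := X) (n, k)) x] at this
      have hn' : dist x (cctr (X := X) (n, k)) < rad k := hn
      linarith
    have hx' : x ∈ closedBall (cctr (X := X) (n, k)) (rad k) := hn.le
    refine ⟨rad k - dist x (cctr (X := X) (n, k)), sub_pos.2 hn, fun y hy hyx => ⟨(n, k), (n, k), hv, hv, hx', ?_, x, hx', hx'⟩⟩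
    rw [mem_closedBall]
    have := dist_triangle y x (cctr (X := X) (n, k))
    show dist y _ ≤ rad k
    linarith

lemma measurable_numV (hs : PointSymmetric X) (k : ℕ) :
    MeasurableSet {s : Config X | numUcomps (vacant s) = k} := by
  have hv : ∀ a : ℕ × ℕ, MeasurableSet {s : Config X | closedBall (cctr a) (rad a.2) ⊆ vacant s} := by
    intro a
    have : {s : Config X | closedBall (cctr a) (rad a.2) ⊆ vacant s} =
        (Hit (cthickening 1 (closedBall (cctr (X := X) a) (rad a.2))))ᶜ := by
      ext s
      rw [(isCompact_closedBall _ _).cthickening_eq_biUnion_closedBall zero_le_one]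
      simp only [mem_ofPred_eq, mem_compl_iff, mem_hit, mem_iUnion, not_exists, not_and]
      constructor
      · rintro h x hx y hy hxy
        have := mem_vacant.1 (h hy) x hx
        rw [mem_closedBall] at hxy
        linarith
      · intro h y hy
        rw [mem_vacant]
        intro x hx
        have := h x hx y hy
        rw [mem_closedBall] at this
        linarith
    rw [this]
    exact (measurable_hit isClosed_cthickening.measurableSet).compl
  refine measurable_num (fun s => vac_cover hs s) hv (fun a b => ?_) (Classical.arbitrary X) k
  have := (hv a).inter ((hv b).inter (MeasurableSet.const
    ((closedBall (cctr (X := X) a) (rad a.2) ∩ closedBall (cctr b) (rad b.2)).Nonempty)))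
  exact this

lemma isolate (s : Config X) {z : X} (hz : z ∈ s.1) : ∃ a : ℕ × ℕ,
    s.1 ∩ ball (cctr a) (rad a.2) = {z} := by
  have hfin : ((s.1 ∩ closedBall z 1) \ {z}).Finite :=
    (s.2 _ isBounded_closedBall).subset sdiff_subset
  obtain ⟨δ, hδ, h⟩ := Metric.isOpen_iff.1 hfin.isClosed.isOpen_compl z (by simp)
  obtain ⟨k, hk⟩ := exists_rad (show 0 < min (δ/2) (1/2) by positivity)
  have hk1 : rad k < δ/2 := hk.trans_le (min_le_left _ _)
  have hk2 : rad k < 1/2 := hk.trans_le (min_le_right _ _)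
  obtain ⟨n, hn⟩ := exists_dense z (rad_pos k)
  have hn' : dist z (cctr (X := X) (n, k)) < rad k := hn
  refine ⟨(n, k), ?_⟩
  ext y
  constructor
  · rintro ⟨hy, hyb⟩
    have hyb' : dist y (cctr (X := X) (n, k)) < rad k := hyb
    have := dist_triangle y (cctr (X := X) (n, k)) z
    rw [dist_comm (cctr (X := X) (n, k)) z] at this
    by_contra hne
    exact h (show y ∈ ball z δ by rw [mem_ball]; linarith)
      ⟨⟨hy, by rw [mem_closedBall]; linarith⟩, hne⟩
  · rintro rfl
    exact ⟨hz, hn⟩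

lemma occ_cover (hs : PointSymmetric X) (s : Config X) : CellCover (occupied s) (cctr (X := X))
    (fun a => (s.1 ∩ ball (cctr a) (rad a.2)).encard = 1)
    (fun a => ⋃ x ∈ s.1 ∩ ball (cctr a) (rad a.2), closedBall x 1) where
  pre a h := by
    obtain ⟨x, hx⟩ := Set.encard_eq_one.1 h
    rw [hx]; simpa using closedBall_preconnected hs x 1
  ne a h := by
    obtain ⟨x, hx⟩ := Set.encard_eq_one.1 h
    rw [hx]; simp
  sub a h := biUnion_subset_biUnion_left inter_subset_left
  bd a h := by
    refine iUnion₂_subset fun x hx => ?_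
    refine closedBall_subset_closedBall' ?_
    have h1 := hx.2
    rw [mem_ball] at h1
    linarith [rad_le a.2]
  loc x hx := by
    obtain ⟨ε, hε, h⟩ := near_local s x
    refine ⟨ε, hε, fun y hy hyx => ?_⟩
    obtain ⟨z, hz, hzy⟩ := mem_occupied.1 hy
    have hz' := (h z hz (by
      have := dist_triangle z y x
      linarith)).2
    obtain ⟨a, ha⟩ := isolate s hz
    refine ⟨a, a, by rw [ha]; simp, by rw [ha]; simp, ?_, ?_, ?_⟩
    · rw [ha]; simpa [dist_comm] using hz'
    · rw [ha]; simpa [dist_comm] using hzy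
    · rw [ha]; simp

lemma measurable_pair {A B : Set X} (hA : MeasurableSet A) (hB : MeasurableSet B) (hAb : IsBounded A)
    (hBb : IsBounded B) : MeasurableSet {s : Config X | ∃ x ∈ s.1 ∩ A, ∃ y ∈ s.1 ∩ B, dist x y ≤ 2} := by
  have : {s : Config X | ∃ x ∈ s.1 ∩ A, ∃ y ∈ s.1 ∩ B, dist x y ≤ 2} = {s | ∀ k : ℕ, ∃ n m : ℕ,
      dist (TopologicalSpace.denseSeq X n) (TopologicalSpace.denseSeq X m) ≤ 2 + 2 * rad k ∧
      s ∈ Hit (A ∩ ball (TopologicalSpace.denseSeq X n) (rad k)) ∧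
      s ∈ Hit (B ∩ ball (TopologicalSpace.denseSeq X m) (rad k))} := by
    ext s
    simp only [mem_ofPred_eq]
    constructor
    · rintro ⟨x, hx, y, hy, hxy⟩ k
      obtain ⟨n, hn⟩ := exists_dense x (rad_pos k)
      obtain ⟨m, hm⟩ := exists_dense y (rad_pos k)
      refine ⟨n, m, ?_, ⟨x, hx.1, hx.2, hn⟩, ⟨y, hy.1, hy.2, hm⟩⟩
      have := dist_triangle4 (TopologicalSpace.denseSeq X n) x y (TopologicalSpace.denseSeq X m)
      rw [dist_comm _ x] at this
      linarith
    · intro h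
      have hfin : ((s.1 ∩ A) ×ˢ (s.1 ∩ B)).Finite := (s.2 _ hAb).prod (s.2 _ hBb)
      have hpt : ∀ k, ∃ p ∈ (s.1 ∩ A) ×ˢ (s.1 ∩ B), dist p.1 p.2 ≤ 2 + 4 * rad k := by
        intro k
        obtain ⟨n, m, hnm, ⟨x, hx, hxA, hxn⟩, ⟨y, hy, hyB, hym⟩⟩ := h k
        refine ⟨(x, y), ⟨⟨hx, hxA⟩, ⟨hy, hyB⟩⟩, ?_⟩
        rw [mem_ball] at hxn hym
        have := dist_triangle4 x (TopologicalSpace.denseSeq X n) (TopologicalSpace.denseSeq X m) y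
        rw [dist_comm (TopologicalSpace.denseSeq X m) y] at this
        show dist x y ≤ _
        linarith
      obtain ⟨p0, hp0, -⟩ := hpt 0
      obtain ⟨p, hp, hmin⟩ := Set.exists_min_image _ (fun p : X × X => dist p.1 p.2) hfin ⟨p0, hp0⟩
      refine ⟨p.1, hp.1, p.2, hp.2, ?_⟩
      by_contra hlt
      push Not at hlt
      obtain ⟨k, hk⟩ := exists_rad (show 0 < (dist p.1 p.2 - 2)/4 by linarith)
      obtain ⟨p', hp', hd⟩ := hpt k
      have := hmin p' hp'
      linarith
  rw [this]
  have hh : ∀ (A : Set X) (hA : MeasurableSet A) (d k : ℕ), Measurable (fun s => s ∈ Hit (A ∩ ball (TopologicalSpace.denseSeq X d) (rad k))) := by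
    intro A hA d k
    rw [← measurableSet_setOfPred]
    exact measurable_hit (hA.inter measurableSet_ball)
  rw [measurableSet_setOfPred]
  exact Measurable.forall fun k => Measurable.exists fun n => Measurable.exists fun m =>
    measurable_const.and ((hh A hA n k).and (hh B hB m k))

lemma inter_balls (hs : PointSymmetric X) (x y : X) : (closedBall x 1 ∩ closedBall y 1).Nonempty ↔ dist x y ≤ 2 := by
  constructor
  · rintro ⟨z, h1, h2⟩
    rw [mem_closedBall] at h1 h2
    have := dist_triangle x z y
    rw [dist_comm x z] at this
    linarith
  · intro h
    refine ⟨mid hs x y, ?_, ?_⟩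
    · rw [mem_closedBall, dist_comm, dist_mid_left]; linarith
    · rw [mem_closedBall, dist_comm, dist_mid_right]; linarith

lemma measurable_numO (hs : PointSymmetric X) (k : ℕ) :
    MeasurableSet {s : Config X | numUcomps (occupied s) = k} := by
  have hv : ∀ a : ℕ × ℕ, MeasurableSet {s : Config X | (s.1 ∩ ball (cctr a) (rad a.2)).encard = 1} :=
    fun a => measurable_count_eq measurableSet_ball 1
  refine measurable_num (fun s => occ_cover hs s) hv (fun a b => ?_) (Classical.arbitrary X) k
  have := (hv a).inter ((hv b).inter (measurable_pair (measurableSet_ball (x := cctr (X := X) a) (ε := rad a.2))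
    (measurableSet_ball (x := cctr (X := X) b) (ε := rad b.2)) isBounded_ball isBounded_ball))
  convert this using 1
  ext s
  change (_ ∧ _ ∧ _) ↔ (_ ∧ _ ∧ _)
  refine and_congr_right fun _ => and_congr_right fun _ => ?_
  constructor
  · rintro ⟨w, h1, h2⟩
    obtain ⟨x, hx, hwx⟩ := mem_iUnion₂.1 h1
    obtain ⟨y, hy, hwy⟩ := mem_iUnion₂.1 h2
    exact ⟨x, hx, y, hy, (inter_balls hs x y).1 ⟨w, hwx, hwy⟩⟩
  · rintro ⟨x, hx, y, hy, h⟩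
    obtain ⟨w, hw1, hw2⟩ := (inter_balls hs x y).2 h
    exact ⟨w, mem_iUnion₂.2 ⟨x, hx, hw1⟩, mem_iUnion₂.2 ⟨y, hy, hw2⟩⟩

end Cells
end BooleanModel
set_option autoImplicit false
namespace BooleanModel
section Inv
variable {X : Type*} [MetricSpace X] [ProperSpace X] [PreconnectedSpace X] [MeasurableSpace X] [BorelSpace X]
  [Nonempty X]

/-- two configurations agree in a ball -/
def AgreeIn (o : X) (R : ℝ) (s t : Config X) : Prop := ∀ x, dist x o ≤ R → (x ∈ s.1 ↔ x ∈ t.1)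

/-- local events -/
def LocEv (o : X) : Set (Set (Config X)) :=
  {F | MeasurableSet F ∧ ∃ R : ℝ, ∀ s s' : Config X, AgreeIn o R s s' → (s ∈ F ↔ s' ∈ F)}

lemma locEv_alg (o : X) : IsSetAlgebra (LocEv o) where
  empty_mem := ⟨MeasurableSet.empty, 0, fun s s' _ => Iff.rfl⟩
  compl_mem := by
    rintro F ⟨hF, R, h⟩
    exact ⟨hF.compl, R, fun s s' hh => not_congr (h s s' hh)⟩
  union_mem := by
    rintro F G ⟨hF, R, h⟩ ⟨hG, R', h'⟩
    refine ⟨hF.union hG, max R R', fun s s' hh => or_congr (h s s' ?_) (h' s s' ?_)⟩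
    · exact fun x hx => hh x (hx.trans (le_max_left _ _))
    · exact fun x hx => hh x (hx.trans (le_max_right _ _))

lemma locEv_gen (o : X) : (Config.instMeasurableSpace : MeasurableSpace (Config X)) =
    MeasurableSpace.generateFrom (LocEv o) := by
  apply le_antisymm
  · rw [gen_hit]
    apply MeasurableSpace.generateFrom_mono
    rintro A ⟨B, hB, hb, rfl⟩
    obtain ⟨R, hR⟩ := hb.subset_closedBall o
    refine ⟨measurable_hit hB, R, fun s s' h => ?_⟩
    rw [mem_hit, mem_hit]
    constructor
    · rintro ⟨x, hx, hxB⟩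
      exact ⟨x, (h x (hR hxB)).1 hx, hxB⟩
    · rintro ⟨x, hx, hxB⟩
      exact ⟨x, (h x (hR hxB)).2 hx, hxB⟩
  · apply MeasurableSpace.generateFrom_le
    rintro F hF
    exact hF.1

lemma exists_far [NoncompactSpace X] (o : X) (R : ℝ) : ∃ z : X, R < dist z o := by
  by_contra hcon
  push Not at hcon
  apply noncompact_univ X
  have : (univ : Set X) = closedBall o R := by
    ext z; simp [hcon z]
  rw [this]
  exact isCompact_closedBall o R

lemma inv_events [NoncompactSpace X] (hs : PointSymmetric X) (o : X) (P : Measure (Config X)) [IsProbabilityMeasure P]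
    (hP : IsoInvariant P) {E : Set (Config X)} (hE : MeasurableSet E)
    (hinv : ∀ g : X ≃ᵢ X, Config.mapIso g ⁻¹' E = E) (R' : ℝ) :
    ∃ G : ℕ → Set (Config X), (∀ᵐ s ∂P, ∀ᶠ n in Filter.atTop, (s ∈ E ↔ s ∈ G n)) ∧
      ∀ n, ∀ s s' : Config X, (∀ x, R' < dist o x → (x ∈ s.1 ↔ x ∈ s'.1)) → (s ∈ G n ↔ s' ∈ G n) := by
  have hd := Measure.MeasureDense.of_generateFrom_isSetAlgebra_finite P (locEv_alg o) (locEv_gen o)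
  have h1 : ∀ n : ℕ, ∃ G : Set (Config X), P (symmDiff E G) ≤ (2⁻¹ : ℝ≥0∞) ^ n ∧
      ∀ s s' : Config X, (∀ x, R' < dist o x → (x ∈ s.1 ↔ x ∈ s'.1)) → (s ∈ G ↔ s' ∈ G) := by
    intro n
    obtain ⟨F, ⟨hFm, R, hF⟩, hlt⟩ := hd.approx E hE (measure_ne_top _ _) ((2⁻¹ : ℝ) ^ n) (by positivity)
    obtain ⟨z, hz⟩ := exists_far o (|R| + |R'|)
    refine ⟨Config.mapIso (sy hs z) ⁻¹' F, ?_, ?_⟩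
    · have h2 : symmDiff E (Config.mapIso (sy hs z) ⁻¹' F) = Config.mapIso (sy hs z) ⁻¹' (symmDiff E F) := by
        rw [preimage_symmDiff, hinv]
      rw [h2, ← Measure.map_apply (measurable_mapIso _) (hE.symmDiff hFm), hP]
      refine hlt.le.trans (le_of_eq ?_)
      rw [ENNReal.ofReal_pow (by norm_num), ENNReal.ofReal_inv_of_pos (by norm_num)]
      simp
    · intro s s' h
      apply hF
      intro x hx
      have key : ∀ t : Config X, x ∈ (Config.mapIso (sy hs z) t).1 ↔ sy hs z x ∈ t.1 := by
        intro t
        constructor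
        · rintro ⟨w, hw, rfl⟩
          rw [sy_sy]; exact hw
        · intro hw
          exact ⟨_, hw, sy_sy hs z x⟩
      rw [key, key]
      apply h
      have e1 := sy_dist hs z o
      have e2 := iso_dist (sy hs z) x o
      have e3 := dist_triangle o (sy hs z x) (sy hs z o)
      have := le_abs_self R
      have := le_abs_self R'
      have := abs_nonneg R
      have := abs_nonneg R'
      linarith
  choose G hG1 hG2 using h1
  refine ⟨G, ?_, hG2⟩
  have hsum : (∑' n, P (symmDiff E (G n))) ≠ ∞ := by
    refine ne_top_of_le_ne_top ?_ (ENNReal.tsum_le_tsum hG1)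
    rw [ENNReal.tsum_geometric]
    simp
  filter_upwards [ae_eventually_notMem hsum] with s h
  filter_upwards [h] with n hn
  rw [mem_symmDiff] at hn
  tauto

lemma inv_lemma [NoncompactSpace X] (hs : PointSymmetric X) (o : X) (P : Measure (Config X)) [IsProbabilityMeasure P]
    (hP : IsoInvariant P) {E : Set (Config X)} (hE : MeasurableSet E)
    (hinv : ∀ g : X ≃ᵢ X, Config.mapIso g ⁻¹' E = E) (R' : ℝ)
    {W : Type*} [MeasurableSpace W] (m : Measure W) {p q : W → Config X} (hp : Measurable p) (hq : Measurable q)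
    (hpa : Measure.map p m ≪ P) (hqa : Measure.map q m ≪ P)
    (hag : ∀ᵐ w ∂m, ∀ x, R' < dist o x → (x ∈ (p w).1 ↔ x ∈ (q w).1)) :
    ∀ᵐ w ∂m, (p w ∈ E ↔ q w ∈ E) := by
  obtain ⟨G, h1, h2⟩ := inv_events hs o P hP hE hinv R'
  have a1 := ae_of_ae_map hp.aemeasurable (hpa.ae_le h1)
  have a2 := ae_of_ae_map hq.aemeasurable (hqa.ae_le h1)
  filter_upwards [a1, a2, hag] with w b1 b2 b3
  obtain ⟨n, c1, c2⟩ := (b1.and b2).exists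
  rw [c1, c2]
  exact h2 n _ _ b3

lemma occupied_mapIso (g : X ≃ᵢ X) (s : Config X) : occupied (Config.mapIso g s) = g '' occupied s := by
  ext y
  rw [mem_occupied]
  constructor
  · rintro ⟨x, ⟨w, hw, rfl⟩, h⟩
    refine ⟨g.symm y, mem_occupied.2 ⟨w, hw, ?_⟩, g.apply_symm_apply y⟩
    rw [← iso_dist g]; simpa using h
  · rintro ⟨w, hw, rfl⟩
    obtain ⟨x, hx, h⟩ := mem_occupied.1 hw
    exact ⟨g x, ⟨x, hx, rfl⟩, by rw [iso_dist]; exact h⟩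

lemma vacant_mapIso (g : X ≃ᵢ X) (s : Config X) : vacant (Config.mapIso g s) = g '' vacant s := by
  unfold vacant
  rw [occupied_mapIso, image_compl_eq g.bijective]

lemma ucomps_image (g : X ≃ᵢ X) (S : Set X) : ucomps (g '' S) = (fun C => g '' C) '' ucomps S := by
  have key : ∀ C : Set X, IsBounded (g '' C) ↔ IsBounded C := by
    intro C
    constructor
    · intro h
      have := g.symm.isometry.lipschitz.isBounded_image h
      rwa [← image_comp, show (g.symm ∘ g : X → X) = id from funext fun x => g.symm_apply_apply x, image_id] at this
    · exact fun h => g.isometry.lipschitz.isBounded_image h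
  ext C
  constructor
  · rintro ⟨⟨y, ⟨x, hx, rfl⟩, rfl⟩, hb⟩
    have e := g.toHomeomorph.image_connectedComponentIn hx
    have e' : g '' connectedComponentIn S x = connectedComponentIn (g '' S) (g x) := e
    refine ⟨connectedComponentIn S x, ⟨⟨x, hx, rfl⟩, ?_⟩, e'⟩
    rw [← key, e']; exact hb
  · rintro ⟨D, ⟨⟨x, hx, rfl⟩, hb⟩, rfl⟩
    have e' : g '' connectedComponentIn S x = connectedComponentIn (g '' S) (g x) :=
      g.toHomeomorph.image_connectedComponentIn hx
    refine ⟨⟨g x, ⟨x, hx, rfl⟩, e'⟩, ?_⟩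
    rw [← key] at hb; exact hb

lemma numUcomps_image (g : X ≃ᵢ X) (S : Set X) : numUcomps (g '' S) = numUcomps S := by
  unfold numUcomps
  rw [ucomps_image]
  exact (image_injective.2 g.injective).encard_image _

lemma two_comps {S : Set X} {k : ℕ} (hk : 2 ≤ k) (h : numUcomps S = k) :
    ∃ x ∈ S, ∃ y ∈ S, ¬IsBounded (connectedComponentIn S x) ∧ ¬IsBounded (connectedComponentIn S y) ∧
      connectedComponentIn S x ≠ connectedComponentIn S y := by
  have : 1 < (ucomps S).encard := by
    change 1 < numUcomps S
    rw [h]; exact_mod_cast hk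
  obtain ⟨C, D, hC, hD, hne⟩ := one_lt_encard_iff.1 this
  obtain ⟨⟨x, hx, rfl⟩, h1⟩ := hC
  obtain ⟨⟨y, hy, rfl⟩, h2⟩ := hD
  exact ⟨x, hx, y, hy, h1, h2, hne⟩

end Inv
end BooleanModel
set_option autoImplicit false
namespace BooleanModel
section Final
variable {X : Type*} [MetricSpace X] [ProperSpace X] [PreconnectedSpace X] [MeasurableSpace X] [BorelSpace X]
  [Nonempty X] [NoncompactSpace X]

lemma vac_part (hs : PointSymmetric X) (μ : Measure X)
    (hμball : ∀ (x : X) (r : ℝ), 0 < r → 0 < μ (closedBall x r) ∧ μ (closedBall x r) < ⊤)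
    (P : Measure (Config X)) [IsProbabilityMeasure P] (hP : IsoInvariant P) (hD : DeletionTolerant μ P)
    (k : ℕ) (hk : 2 ≤ k) : ∀ᵐ s ∂P, numUcomps (vacant s) ≠ k := by
  obtain ⟨o⟩ : Nonempty X := inferInstance
  have h1 : ∀ R : ℕ, ∀ᵐ s ∂P, (numUcomps (vacant s) = k ↔
      numUcomps (vacant (Config.restrict (closedBall o ((R:ℝ) + 2)) s)) = k) := by
    intro R
    have hb := hμball o ((R:ℝ) + 2) (by positivity)
    refine inv_lemma hs o P hP (measurable_numV hs k) ?_ ((R:ℝ) + 2) P (p := id)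
      (q := Config.restrict (closedBall o ((R:ℝ) + 2))) measurable_id
      (measurable_restrict measurableSet_closedBall) ?_ ?_ ?_
    · intro g
      ext s
      change numUcomps (vacant (Config.mapIso g s)) = k ↔ numUcomps (vacant s) = k
      rw [vacant_mapIso, numUcomps_image]
    · rw [Measure.map_id]
    · exact hD _ measurableSet_closedBall hb.1 hb.2
    · refine Filter.Eventually.of_forall fun s x hx => ?_
      constructor
      · intro h
        refine ⟨h, fun h' => ?_⟩
        rw [mem_closedBall, dist_comm x o] at h'
        linarith
      · exact fun h => h.1
  filter_upwards [ae_all_iff.2 h1] with s h hE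
  obtain ⟨x, hx, y, hy, hux, huy, hxy⟩ := two_comps hk hE
  obtain ⟨R, hR⟩ := exists_nat_ge (max (dist x o) (dist y o))
  have hE' := (h R).1 hE
  set s' := Config.restrict (closedBall o ((R:ℝ) + 2)) s with hs'
  have hsub : closedBall o (R:ℝ) ⊆ vacant s' := by
    intro w hw
    rw [mem_vacant]
    intro z hz
    have h2 : ¬ dist z o ≤ (R:ℝ) + 2 := hz.2
    rw [mem_closedBall] at hw
    have := dist_triangle z w o
    linarith
  have hxB : x ∈ closedBall o (R:ℝ) := (le_max_left _ _).trans hR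
  have hyB : y ∈ closedBall o (R:ℝ) := (le_max_right _ _).trans hR
  have hm : connectedComponentIn (vacant s') x = connectedComponentIn (vacant s') y :=
    connectedComponentIn_eq ((closedBall_preconnected hs o R).subset_connectedComponentIn hxB hsub hyB)
  have := vac_count_lt hs s s' (fun z hz => hz.1) (o := o) (R := (R:ℝ) + 2)
    (by
      rintro z ⟨hz, hz'⟩
      by_contra hcon
      exact hz' ⟨hz, hcon⟩) hx hy hux huy hxy hm (by rw [hE]; exact ENat.natCast_ne_top k)
  rw [hE, hE'] at this
  exact lt_irrefl _ this

lemma ins_ae (o : X) (μ : Measure X)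
    (hμball : ∀ (x : X) (r : ℝ), 0 < r → 0 < μ (closedBall x r) ∧ μ (closedBall x r) < ⊤)
    (P : Measure (Config X)) [IsProbabilityMeasure P] {T : Config X × X → Prop}
    (hT : ∀ R : ℕ, ∀ᵐ w ∂(P.prod ((μ (closedBall o ((R:ℝ) + 1)))⁻¹ • μ.restrict (closedBall o ((R:ℝ) + 1)))), T w) :
    ∀ᵐ s ∂P, ∀ R : ℕ, ∀ᵐ y ∂(μ.restrict (closedBall o ((R:ℝ) + 1))), T (s, y) := by
  rw [ae_all_iff]
  intro R
  have hb := hμball o ((R:ℝ) + 1) (by positivity)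
  have : IsFiniteMeasure (μ.restrict (closedBall o ((R:ℝ) + 1))) := ⟨by simpa using hb.2⟩
  have : IsFiniteMeasure ((μ (closedBall o ((R:ℝ) + 1)))⁻¹ • μ.restrict (closedBall o ((R:ℝ) + 1))) :=
    Measure.smul_finite _ (ENNReal.inv_ne_top.2 hb.1.ne')
  filter_upwards [Measure.ae_ae_of_ae_prod (hT R)] with s h
  rw [ae_iff, Measure.smul_apply, smul_eq_mul, mul_eq_zero] at h
  rw [ae_iff]
  exact h.resolve_left (ENNReal.inv_ne_zero.2 hb.2.ne)

/-- iterated insertions stay in `E` -/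
def QIns (o : X) (μ : Measure X) (E : Set (Config X)) : ℕ → Config X → Prop
  | 0 => fun s => s ∈ E
  | n + 1 => fun s => ∀ R : ℕ, ∀ᵐ y ∂(μ.restrict (closedBall o ((R:ℝ) + 1))),
      QIns o μ E n (Config.insertPt y s)

lemma qIns_use (o : X) (μ : Measure X)
    (hμball : ∀ (x : X) (r : ℝ), 0 < r → 0 < μ (closedBall x r) ∧ μ (closedBall x r) < ⊤)
    (E : Set (Config X)) (n : ℕ) : ∀ (s : Config X) (q : ℕ → X), QIns o μ E n s →
    ∃ s' ∈ E, s.1 ⊆ s'.1 ∧ (∃ R : ℝ, s'.1 \ s.1 ⊆ closedBall o R) ∧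
      ∀ i < n, ∃ y ∈ s'.1, dist y (q i) ≤ 1 / 2 := by
  induction n with
  | zero =>
    intro s q h
    exact ⟨s, h, subset_rfl, ⟨0, by simp⟩, fun i hi => absurd hi (Nat.not_lt_zero i)⟩
  | succ n ih =>
    intro s q h
    obtain ⟨R, hR⟩ := exists_nat_ge (dist (q 0) o)
    have hsub : closedBall (q 0) (1 / 2) ⊆ closedBall o ((R:ℝ) + 1) := by
      intro w hw
      rw [mem_closedBall] at hw ⊢
      have := dist_triangle w (q 0) o
      linarith
    have h1 := ae_restrict_of_ae_restrict_of_subset hsub (h R)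
    have h2 : ∀ᵐ y ∂(μ.restrict (closedBall (q 0) (1 / 2))), y ∈ closedBall (q 0) (1 / 2) :=
      ae_restrict_mem measurableSet_closedBall
    have : (ae (μ.restrict (closedBall (q 0) (1 / 2)))).NeBot :=
      ae_restrict_neBot.2 (hμball (q 0) (1 / 2) (by norm_num)).1.ne'
    obtain ⟨y, hy1, hy2⟩ := (h1.and h2).exists
    obtain ⟨s', hs'E, hss, ⟨R', hR'⟩, hi⟩ := ih (Config.insertPt y s) (fun i => q (i + 1)) hy1
    have hys : y ∈ s'.1 := hss (mem_insert _ _)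
    refine ⟨s', hs'E, fun z hz => hss (mem_insert_of_mem _ hz), ⟨max R' ((R:ℝ) + 1), ?_⟩, ?_⟩
    · rintro z ⟨hz, hz'⟩
      by_cases hzy : z = y
      · rw [hzy]
        exact closedBall_subset_closedBall (le_max_right _ _) (hsub hy2)
      · refine closedBall_subset_closedBall (le_max_left _ _) (hR' ⟨hz, ?_⟩)
        intro hh
        rcases mem_insert_iff.1 hh with h3 | h3
        · exact hzy h3
        · exact hz' h3
    · intro i hin
      cases i with
      | zero => exact ⟨y, hys, hy2⟩
      | succ i => exact hi i (by omega)

lemma occ_center (hs : PointSymmetric X) (s : Config X) {x : X} (hx : x ∈ occupied s) :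
    ∃ z ∈ s.1, connectedComponentIn (occupied s) x = connectedComponentIn (occupied s) z := by
  obtain ⟨z, hz, hd⟩ := mem_occupied.1 hx
  refine ⟨z, hz, connectedComponentIn_eq ?_⟩
  refine (closedBall_preconnected hs z 1).subset_connectedComponentIn ?_ (ball_sub_occ hz)
    (mem_closedBall_self zero_le_one)
  rw [mem_closedBall, dist_comm x z]; exact hd

lemma occ_part (hs : PointSymmetric X) (μ : Measure X)
    (hμball : ∀ (x : X) (r : ℝ), 0 < r → 0 < μ (closedBall x r) ∧ μ (closedBall x r) < ⊤)
    (P : Measure (Config X)) [IsProbabilityMeasure P] (hP : IsoInvariant P) (hI : InsertionTolerant μ P)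
    (k : ℕ) (hk : 2 ≤ k) : ∀ᵐ s ∂P, numUcomps (occupied s) ≠ k := by
  obtain ⟨o⟩ : Nonempty X := inferInstance
  set E : Set (Config X) := {s | numUcomps (occupied s) = k} with hEdef
  have hinv : ∀ g : X ≃ᵢ X, Config.mapIso g ⁻¹' E = E := by
    intro g
    ext s
    change numUcomps (occupied (Config.mapIso g s)) = k ↔ numUcomps (occupied s) = k
    rw [occupied_mapIso, numUcomps_image]
  have h1 : ∀ᵐ s ∂P, ∀ R : ℕ, ∀ᵐ y ∂(μ.restrict (closedBall o ((R:ℝ) + 1))),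
      (s ∈ E ↔ Config.insertPt y s ∈ E) := by
    refine ins_ae o μ hμball P (T := fun w => (w.1 ∈ E ↔ Config.insertPt w.2 w.1 ∈ E)) ?_
    intro R
    have hb := hμball o ((R:ℝ) + 1) (by positivity)
    have : IsFiniteMeasure (μ.restrict (closedBall o ((R:ℝ) + 1))) := ⟨by simpa using hb.2⟩
    have : IsFiniteMeasure ((μ (closedBall o ((R:ℝ) + 1)))⁻¹ • μ.restrict (closedBall o ((R:ℝ) + 1))) :=
      Measure.smul_finite _ (ENNReal.inv_ne_top.2 hb.1.ne')
    refine inv_lemma hs o P hP (measurable_numO hs k) hinv ((R:ℝ) + 1) _ (p := Prod.fst)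
      (q := fun w : Config X × X => Config.insertPt w.2 w.1) measurable_fst measurable_insertPt
      Measure.quasiMeasurePreserving_fst.absolutelyContinuous (hI _ measurableSet_closedBall hb.1 hb.2) ?_
    have h2 : ∀ᵐ y ∂((μ (closedBall o ((R:ℝ) + 1)))⁻¹ • μ.restrict (closedBall o ((R:ℝ) + 1))),
        y ∈ closedBall o ((R:ℝ) + 1) :=
      Measure.ae_smul_measure (ae_restrict_mem measurableSet_closedBall) _
    have h3 : ∀ᵐ w ∂(P.prod ((μ (closedBall o ((R:ℝ) + 1)))⁻¹ • μ.restrict (closedBall o ((R:ℝ) + 1)))),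
        w.2 ∈ closedBall o ((R:ℝ) + 1) := Measure.quasiMeasurePreserving_snd.ae h2
    filter_upwards [h3] with w hw x hx
    constructor
    · exact fun h => mem_insert_of_mem _ h
    · intro h
      rcases mem_insert_iff.1 h with h4 | h4
      · rw [mem_closedBall, ← h4, dist_comm x o] at hw
        linarith
      · exact h4
  have hQ : ∀ n : ℕ, ∀ᵐ s ∂P, (s ∈ E → QIns o μ E n s) := by
    intro n
    induction n with
    | zero => exact Filter.Eventually.of_forall fun s h => h
    | succ n ih =>
      have h2 : ∀ᵐ s ∂P, ∀ R : ℕ, ∀ᵐ y ∂(μ.restrict (closedBall o ((R:ℝ) + 1))),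
          (Config.insertPt y s ∈ E → QIns o μ E n (Config.insertPt y s)) := by
        refine ins_ae o μ hμball P
          (T := fun w => (Config.insertPt w.2 w.1 ∈ E → QIns o μ E n (Config.insertPt w.2 w.1))) ?_
        intro R
        have hb := hμball o ((R:ℝ) + 1) (by positivity)
        exact ae_of_ae_map measurable_insertPt.aemeasurable
          ((hI _ measurableSet_closedBall hb.1 hb.2).ae_le ih)
      filter_upwards [h1, h2] with s a1 a2 hsE R
      filter_upwards [a1 R, a2 R] with y b1 b2
      exact b2 (b1.1 hsE)
  filter_upwards [ae_all_iff.2 hQ] with s h hE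
  obtain ⟨x₀, hx₀, y₀, hy₀, hux, huy, hxy⟩ := two_comps hk hE
  obtain ⟨x, hx, ex⟩ := occ_center hs s hx₀
  obtain ⟨y, hy, ey⟩ := occ_center hs s hy₀
  rw [ex] at hux hxy
  rw [ey] at huy hxy
  obtain ⟨N, q, hq0, hqN, hq⟩ := exists_chain x y (h := 1 / 2) (by norm_num)
  obtain ⟨s', hE', hss, ⟨R, hR⟩, hc⟩ := qIns_use o μ hμball E (N + 1) s q (h (N + 1) hE)
  have hmem : ∀ i ≤ N, q i ∈ connectedComponentIn (occupied s') x := by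
    intro i
    induction i with
    | zero =>
      intro _
      rw [hq0]
      exact mem_connectedComponentIn (ball_sub_occ (hss hx) (mem_closedBall_self zero_le_one))
    | succ i ih =>
      intro hi
      have h1 := ih (by omega)
      obtain ⟨z, hz, hzd⟩ := hc i (by omega)
      rw [connectedComponentIn_eq h1]
      refine (closedBall_preconnected hs z 1).subset_connectedComponentIn ?_ (ball_sub_occ hz) ?_
      · rw [mem_closedBall, dist_comm (q i) z]; linarith
      · rw [mem_closedBall, dist_comm (q (i + 1)) z]
        have := dist_triangle z (q i) (q (i + 1))
        have := hq i
        linarith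
  have hm : connectedComponentIn (occupied s') x = connectedComponentIn (occupied s') y := by
    have := hmem N le_rfl
    rw [hqN N le_rfl] at this
    exact connectedComponentIn_eq this
  have hE1 : numUcomps (occupied s) = k := hE
  have hE2 : numUcomps (occupied s') = k := hE'
  have := occ_count_lt hs s s' hss hR hx hy hux huy hxy hm (by rw [hE1]; exact ENat.natCast_ne_top k)
  rw [hE1, hE2] at this
  exact lt_irrefl _ this

lemma enat_cases {n : ℕ∞} (h : ∀ k : ℕ, 2 ≤ k → n ≠ k) : n = 0 ∨ n = 1 ∨ n = ⊤ := by
  induction n using ENat.recTopCoe with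
  | top => simp
  | coe m =>
    have : m < 2 := by
      by_contra hcon
      exact h m (by omega) rfl
    interval_cases m <;> simp

end Final
end BooleanModel
namespace BooleanModel

/-- **Lemma 12 (number of unbounded components).**
For an isometry invariant `P`: (a) if `P` is insertion-tolerant then `N_O ∈ {0,1,∞}`
a.s.; (b) if `P` is deletion-tolerant then `N_V ∈ {0,1,∞}` a.s. -/
theorem number_of_unbounded_components
    {X : Type*} [MetricSpace X] [ProperSpace X] [CompleteSpace X] [SimplyConnectedSpace X]
    [NoncompactSpace X] [MeasurableSpace X] [BorelSpace X] [Nonempty X]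
    (hsym : PointSymmetric X)
    (μ : Measure X)
    (hμiso : ∀ γ : X ≃ᵢ X, Measure.map γ μ = μ)
    (hμball : ∀ (x : X) (r : ℝ), 0 < r → 0 < μ (closedBall x r) ∧ μ (closedBall x r) < ⊤)
    (P : Measure (Config X)) [IsProbabilityMeasure P]
    (hPiso : IsoInvariant P) :
    (InsertionTolerant μ P →
      ∀ᵐ ω ∂P, numUcomps (occupied ω) = 0 ∨ numUcomps (occupied ω) = 1 ∨
        numUcomps (occupied ω) = ⊤) ∧
    (DeletionTolerant μ P →
      ∀ᵐ ω ∂P, numUcomps (vacant ω) = 0 ∨ numUcomps (vacant ω) = 1 ∨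
        numUcomps (vacant ω) = ⊤) := by
  constructor
  · intro hI
    filter_upwards [ae_all_iff.2 fun k : ℕ => ae_all_iff.2 fun hk : 2 ≤ k =>
      occ_part hsym μ hμball P hPiso hI k hk] with s h
    exact enat_cases h
  · intro hD
    filter_upwards [ae_all_iff.2 fun k : ℕ => ae_all_iff.2 fun hk : 2 ≤ k =>
      vac_part hsym μ hμball P hPiso hD k hk] with s h
    exact enat_cases h

end BooleanModel
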